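/- arXiv:2206.05877 — 5 statements merged into one kernel-verified Lean document; each statement's English description precedes it below -/
import Mathlib

section
/- For every real X ≥ 1 and every positive integer n ≤ X, one has the exact identity τ_3(n) = 3·Σ_1(n) − 3·Σ_2(n) + Σ_3(n), where Σ_1(n) is the number of ordered triples (ℓ_1, ℓ_2, ℓ_3) of positive integers with ℓ_1ℓ_2ℓ_3 = n, ℓ_1ℓ_2 ≤ X^{2/3} and ℓ_1 ≤ X^{1/3}; Σ_2(n) is the number of such triples with ℓ_1ℓ_2 ≤ X^{2/3}, ℓ_1 ≤ X^{1/3} and ℓ_3 ≤ X^{1/3}; and Σ_3(n) is the number of such triples with ℓ_1 ≤ X^{1/3}, ℓ_2 ≤ X^{1/3} and ℓ_3 ≤ X^{1/3}. -/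
/-!
Write `Y = X^{1/3}` and call a factor small if it is at most `Y`, large otherwise.  If `ℓ_3` is
large then `ℓ_1 ℓ_2 = n / ℓ_3 < Y^2` automatically, so `Σ_1 - Σ_2` counts the triples with `ℓ_1`
small and `ℓ_3` large.  The set of triples is invariant under cyclic rotation, so
`3 (Σ_1 - Σ_2)` counts, with multiplicity, the cyclically adjacent pairs (large, small) in a triple.
A triple with one or two large entries has exactly one such pair, a triple of small entries has
none (but is counted once by `Σ_3`), and three large entries are impossible because
`n ≤ X = Y^3`.  Hence every triple is counted exactly once.
-/

/-- `tauk k n` is the number of ordered `k`-tuples of positive integers with product `n`. -/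
def tauk (k n : ℕ) : ℕ :=
  ((Fintype.piFinset fun _ : Fin k => n.divisors).filter fun f => ∏ i, f i = n).card

/-- Ordered triples `(ℓ_1, ℓ_2, ℓ_3)` of positive integers with `ℓ_1 ℓ_2 ℓ_3 = n`. -/
def triples (n : ℕ) : Finset (ℕ × ℕ × ℕ) :=
  (n.divisors ×ˢ n.divisors ×ˢ n.divisors).filter fun t => t.1 * t.2.1 * t.2.2 = n

/-- Triples with `ℓ_1 ℓ_2 ≤ X^{2/3}` and `ℓ_1 ≤ X^{1/3}`. -/
noncomputable def Sig1 (n : ℕ) (X : ℝ) : ℕ :=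
  ((triples n).filter fun t =>
    ((t.1 * t.2.1 : ℕ) : ℝ) ≤ X ^ ((2 : ℝ) / 3) ∧ ((t.1 : ℕ) : ℝ) ≤ X ^ ((1 : ℝ) / 3)).card

/-- Triples with `ℓ_1 ℓ_2 ≤ X^{2/3}`, `ℓ_1 ≤ X^{1/3}` and `ℓ_3 ≤ X^{1/3}`. -/
noncomputable def Sig2 (n : ℕ) (X : ℝ) : ℕ :=
  ((triples n).filter fun t =>
    ((t.1 * t.2.1 : ℕ) : ℝ) ≤ X ^ ((2 : ℝ) / 3) ∧ ((t.1 : ℕ) : ℝ) ≤ X ^ ((1 : ℝ) / 3) ∧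
      ((t.2.2 : ℕ) : ℝ) ≤ X ^ ((1 : ℝ) / 3)).card

/-- Triples with `ℓ_1 ≤ X^{1/3}`, `ℓ_2 ≤ X^{1/3}` and `ℓ_3 ≤ X^{1/3}`. -/
noncomputable def Sig3 (n : ℕ) (X : ℝ) : ℕ :=
  ((triples n).filter fun t =>
    ((t.1 : ℕ) : ℝ) ≤ X ^ ((1 : ℝ) / 3) ∧ ((t.2.1 : ℕ) : ℝ) ≤ X ^ ((1 : ℝ) / 3) ∧
      ((t.2.2 : ℕ) : ℝ) ≤ X ^ ((1 : ℝ) / 3)).card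

lemma mem_triples {n : ℕ} (hn : 0 < n) (t : ℕ × ℕ × ℕ) :
    t ∈ triples n ↔ t.1 * t.2.1 * t.2.2 = n := by
  simp only [triples, Finset.mem_filter, Finset.mem_product, Nat.mem_divisors, and_iff_right_iff_imp]
  rintro rfl
  exact ⟨⟨⟨t.2.1 * t.2.2, by ring⟩, hn.ne'⟩, ⟨⟨t.1 * t.2.2, by ring⟩, hn.ne'⟩,
    ⟨t.1 * t.2.1, by ring⟩, hn.ne'⟩

lemma tauk_three {n : ℕ} : tauk 3 n = (triples n).card := by
  refine Finset.card_nbij' (fun f => (f 0, f 1, f 2)) (fun t => ![t.1, t.2.1, t.2.2]) ?_ ?_ ?_ ?_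
  · intro f hf
    simp_all [triples, Fin.prod_univ_three]
    exact (hf.1 0).2
  · intro t ht
    simp_all [triples, Fin.prod_univ_three, Fin.forall_fin_succ]
  · intro f _
    ext i
    fin_cases i <;> rfl
  · intro t _
    rfl

/-- The cyclic rotation of the three entries preserves sums over the triples. -/
lemma sum_triples_rotate {n : ℕ} (hn : 0 < n) (g : ℕ × ℕ × ℕ → ℤ) :
    ∑ t ∈ triples n, g (t.2.1, t.2.2, t.1) = ∑ t ∈ triples n, g t := by
  refine Finset.sum_nbij' (fun t => (t.2.1, t.2.2, t.1)) (fun t => (t.2.2, t.1, t.2.1))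
    ?_ ?_ (fun _ _ => rfl) (fun _ _ => rfl) (fun _ _ => rfl)
  all_goals
    intro t ht
    rw [mem_triples hn] at ht ⊢
    rw [← ht]
    ring

/-- If the third of three real factors with product `≤ Y^3` exceeds `Y`, the product of the
other two is at most `Y^2`. -/
lemma mul_le_sq_of_lt {a b c Y : ℝ} (hY : 0 < Y) (h : a * b * c ≤ Y ^ 3)
    (hc : Y < c) : a * b ≤ Y ^ 2 := by
  by_contra! hab
  have : Y ^ 2 * Y < a * b * c := mul_lt_mul'' hab hc (by positivity) hY.le
  linarith [pow_succ Y 2]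

theorem tau3_decomposition (X : ℝ) (hX : 1 ≤ X) (n : ℕ) (hn : 0 < n) (hnX : (n : ℝ) ≤ X) :
    (tauk 3 n : ℤ) = 3 * (Sig1 n X : ℤ) - 3 * (Sig2 n X : ℤ) + (Sig3 n X : ℤ) := by
  have hX0 : 0 < X := by linarith
  have hY : 0 < X ^ ((1 : ℝ) / 3) := Real.rpow_pos_of_pos hX0 _
  have hY2 : X ^ ((2 : ℝ) / 3) = (X ^ ((1 : ℝ) / 3)) ^ 2 := by
    rw [← Real.rpow_natCast, ← Real.rpow_mul hX0.le]; norm_num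
  have hY3 : X = (X ^ ((1 : ℝ) / 3)) ^ 3 := by
    rw [← Real.rpow_natCast, ← Real.rpow_mul hX0.le]; norm_num
  rw [tauk_three]
  unfold Sig1 Sig2 Sig3
  rw [hY2]
  generalize X ^ ((1 : ℝ) / 3) = Y at *
  rw [hY3] at hnX
  -- The indicator of "`ℓ_1` small and `ℓ_3` large", whose sum over the triples is `Σ_1 - Σ_2`.
  let g : ℕ × ℕ × ℕ → ℤ := fun t => if (t.1 : ℝ) ≤ Y ∧ ¬ (t.2.2 : ℝ) ≤ Y then 1 else 0
  have hprod : ∀ t ∈ triples n, (t.1 : ℝ) * t.2.1 * t.2.2 ≤ Y ^ 3 := by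
    intro t ht
    rw [mem_triples hn] at ht
    rw [← ht] at hnX
    exact_mod_cast hnX
  have h12 : ((((triples n).filter fun t => ((t.1 * t.2.1 : ℕ) : ℝ) ≤ Y ^ 2 ∧
        ((t.1 : ℕ) : ℝ) ≤ Y).card : ℕ) : ℤ) -
      (((triples n).filter fun t => ((t.1 * t.2.1 : ℕ) : ℝ) ≤ Y ^ 2 ∧
        ((t.1 : ℕ) : ℝ) ≤ Y ∧ ((t.2.2 : ℕ) : ℝ) ≤ Y).card : ℕ) = ∑ t ∈ triples n, g t := by
    simp only [Finset.natCast_card_filter]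
    rw [← Finset.sum_sub_distrib]
    refine Finset.sum_congr rfl fun t ht => ?_
    have key : ¬ (t.2.2 : ℝ) ≤ Y → ((t.1 * t.2.1 : ℕ) : ℝ) ≤ Y ^ 2 := fun h => by
      push_cast
      exact mul_le_sq_of_lt hY (hprod t ht) (not_le.mp h)
    by_cases h1 : (t.1 : ℝ) ≤ Y <;> by_cases h3 : (t.2.2 : ℝ) ≤ Y <;> simp_all [g]
  have r1 := sum_triples_rotate hn g
  have r2 := sum_triples_rotate hn fun t => g (t.2.1, t.2.2, t.1)
  have hone : ((triples n).card : ℤ) = ∑ t ∈ triples n, (g t + g (t.2.1, t.2.2, t.1) +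
      g (t.2.2, t.1, t.2.1) + if (t.1 : ℝ) ≤ Y ∧ (t.2.1 : ℝ) ≤ Y ∧ (t.2.2 : ℝ) ≤ Y
        then 1 else 0) := by
    rw [Finset.card_eq_sum_ones, Nat.cast_sum]
    refine Finset.sum_congr rfl fun t ht => ?_
    have key : ¬ (t.2.1 : ℝ) ≤ Y → ¬ (t.2.2 : ℝ) ≤ Y → (t.1 : ℝ) ≤ Y := fun h2 h3 => by
      have hab := mul_le_sq_of_lt hY (hprod t ht) (not_le.mp h3)
      by_contra! h1
      nlinarith [mul_lt_mul'' h1 (not_le.mp h2) hY.le hY.le]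
    by_cases h1 : (t.1 : ℝ) ≤ Y <;> by_cases h2 : (t.2.1 : ℝ) ≤ Y <;>
      by_cases h3 : (t.2.2 : ℝ) ≤ Y <;>
      first
      | exact absurd (key h2 h3) h1
      | simp [g, h1, h2, h3, -not_le]
  simp only [Finset.sum_add_distrib] at hone
  have h3 : ((((triples n).filter fun t => ((t.1 : ℕ) : ℝ) ≤ Y ∧ ((t.2.1 : ℕ) : ℝ) ≤ Y ∧
      ((t.2.2 : ℕ) : ℝ) ≤ Y).card : ℕ) : ℤ) = ∑ t ∈ triples n,
      if (t.1 : ℝ) ≤ Y ∧ (t.2.1 : ℝ) ≤ Y ∧ (t.2.2 : ℝ) ≤ Y then 1 else 0 :=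
    Finset.natCast_card_filter _ _
  linarith
end

section
/- Let k ≥ 1 and h ≥ 1 be integers, and let s be a complex number with Re s > 1. Then Σ_{n=1}^∞ τ_k(nh)/n^s = ζ(s)^k · ∏_{p | h} [ (1 − p^{−s})^k · Σ_{j=0}^∞ binom(k + j + ν_p(h) − 1, k − 1)·p^{−js} ], where the (finite) product runs over the primes p dividing h, both infinite series converging absolutely. -/
open scoped ArithmeticFunction.zeta

/-! ### The function `τ_k` as a Dirichlet power -/

/-- Splitting off the first entry of a factorization gives the Dirichlet convolution recursion. -/
lemma card_finMulAntidiag_succ (k n : ℕ) :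
    (Nat.finMulAntidiag (k + 1) n).card =
      ∑ d ∈ n.divisorsAntidiagonal, (Nat.finMulAntidiag k d.2).card := by
  rw [← Finset.card_sigma]
  refine Finset.card_bij' (fun f _ => ⟨(f 0, ∏ i, Fin.tail f i), Fin.tail f⟩)
    (fun x _ => Fin.cons x.1.1 x.2) ?_ ?_ ?_ ?_
  · intro f hf
    rw [Nat.mem_finMulAntidiag, Fin.prod_univ_succ] at hf
    obtain ⟨h1, h2⟩ := hf
    have h3 : (∏ i, Fin.tail f i) ≠ 0 := by
      intro h0
      apply h2
      rw [← h1]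
      exact mul_eq_zero_of_right _ h0
    simp only [Finset.mem_sigma, Nat.mem_divisorsAntidiagonal, Nat.mem_finMulAntidiag]
    exact ⟨⟨h1, h2⟩, trivial, h3⟩
  · rintro ⟨⟨a, b⟩, g⟩ hx
    simp only [Finset.mem_sigma, Nat.mem_divisorsAntidiagonal, Nat.mem_finMulAntidiag] at hx
    obtain ⟨⟨h1, h2⟩, h3, h4⟩ := hx
    rw [Nat.mem_finMulAntidiag, Fin.prod_univ_succ]
    simp only [Fin.cons_zero, Fin.cons_succ]
    exact ⟨by rw [h3, h1], h2⟩
  · intro f _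
    simp
  · rintro ⟨⟨a, b⟩, g⟩ hx
    simp only [Finset.mem_sigma, Nat.mem_divisorsAntidiagonal, Nat.mem_finMulAntidiag] at hx
    obtain ⟨⟨h1, h2⟩, h3, h4⟩ := hx
    subst h3
    simp

lemma card_finMulAntidiag_eq_zeta_pow (k n : ℕ) :
    (Nat.finMulAntidiag k n).card = (ζ ^ k : ArithmeticFunction ℕ) n := by
  induction k generalizing n with
  | zero =>
    rw [pow_zero, ArithmeticFunction.one_apply]
    split_ifs with h
    · subst h
      simp [Nat.finMulAntidiag_one]
    · simp [Nat.finMulAntidiag_zero_left h]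
  | succ k ih =>
    rw [card_finMulAntidiag_succ, pow_succ', ArithmeticFunction.mul_apply]
    refine Finset.sum_congr rfl fun d hd => ?_
    have : d.1 ≠ 0 := by
      rintro h0
      simp [h0] at hd
      omega
    rw [ih, ArithmeticFunction.zeta_apply_ne this, one_mul]

lemma tauk_eq_zeta_pow (m n : ℕ) :
    tauk (m + 1) n = (ζ ^ (m + 1) : ArithmeticFunction ℕ) n := by
  rcases eq_or_ne n 0 with rfl | hn
  · -- `Nat.divisors 0 = ∅`, so there is no tuple at all when `k ≥ 1`.
    simp [tauk]
  · rw [← card_finMulAntidiag_eq_zeta_pow,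
      Nat.finMulAntidiag_eq_piFinset_divisors_filter dvd_rfl hn]
    rfl

lemma zeta_pow_isMultiplicative (k : ℕ) :
    (ζ ^ k : ArithmeticFunction ℕ).IsMultiplicative :=
  ArithmeticFunction.isMultiplicative_zeta.pow

/-- By the hockey-stick identity, since `τ_{k+1} (p ^ a) = ∑ i ≤ a, τ_k (p ^ i)`. -/
lemma zeta_pow_prime_pow (m a : ℕ) {p : ℕ} (hp : p.Prime) :
    (ζ ^ (m + 1) : ArithmeticFunction ℕ) (p ^ a) = (a + m).choose m := by
  induction m generalizing a with
  | zero => simp [ArithmeticFunction.zeta_apply, hp.ne_zero]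
  | succ m ih =>
    rw [pow_succ, ArithmeticFunction.mul_zeta_apply, Nat.sum_divisors_prime_pow hp,
      Finset.sum_congr rfl fun i _ => ih i, Nat.sum_range_add_choose, add_assoc]

lemma zeta_pow_ne_zero (m : ℕ) {n : ℕ} (hn : n ≠ 0) :
    (ζ ^ (m + 1) : ArithmeticFunction ℕ) n ≠ 0 := by
  rw [(zeta_pow_isMultiplicative (m + 1)).multiplicative_factorization _ hn]
  refine Finset.prod_ne_zero_iff.mpr fun p hp => ?_
  dsimp only
  rw [zeta_pow_prime_pow m _ (Nat.prime_of_mem_primeFactors hp)]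
  exact (Nat.choose_pos (by omega)).ne'

lemma zeta_pow_eq_prod_choose (m : ℕ) {h : ℕ} (hh : h ≠ 0) :
    (ζ ^ (m + 1) : ArithmeticFunction ℕ) h =
      ∏ p ∈ h.primeFactors, (h.factorization p + m).choose m := by
  rw [(zeta_pow_isMultiplicative (m + 1)).multiplicative_factorization _ hh]
  exact Finset.prod_congr rfl fun p hp =>
    zeta_pow_prime_pow m _ (Nat.prime_of_mem_primeFactors hp)

/-- The lcm and gcd of `a h` and `b h` are `a b h` and `h`, so `n ↦ F (n h) / F h` is
multiplicative. -/
lemma shifted_mul {F : ArithmeticFunction ℕ} (hF : F.IsMultiplicative) {a b : ℕ} (h : ℕ)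
    (hab : a.Coprime b) : F (a * b * h) * F h = F (a * h) * F (b * h) := by
  have := hF.lcm_apply_mul_gcd_apply (x := a * h) (y := b * h)
  rwa [Nat.lcm_mul_right, Nat.gcd_mul_right, hab.lcm_eq_mul, hab.gcd_eq_one, one_mul] at this

/-- Only the `p`-part of `h` changes when `h` is multiplied by a power of `p`. -/
lemma shifted_prime_pow (m e : ℕ) {h p : ℕ} (hh : h ≠ 0) (hp : p.Prime) :
    (ζ ^ (m + 1) : ArithmeticFunction ℕ) (p ^ e * h) * (h.factorization p + m).choose m =
      (e + h.factorization p + m).choose m * (ζ ^ (m + 1) : ArithmeticFunction ℕ) h := by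
  have hF := zeta_pow_isMultiplicative (m + 1)
  have hc (j : ℕ) : (p ^ j).Coprime (h / p ^ h.factorization p) :=
    (Nat.coprime_ordCompl hp hh).pow_left j
  have h1 : (ζ ^ (m + 1) : ArithmeticFunction ℕ) h = (h.factorization p + m).choose m *
      (ζ ^ (m + 1) : ArithmeticFunction ℕ) (h / p ^ h.factorization p) := by
    conv_lhs => rw [← Nat.ordProj_mul_ordCompl_eq_self h p]
    rw [hF.map_mul_of_coprime (hc _), zeta_pow_prime_pow m _ hp]
  have h2 : (ζ ^ (m + 1) : ArithmeticFunction ℕ) (p ^ e * h) =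
      (e + h.factorization p + m).choose m *
      (ζ ^ (m + 1) : ArithmeticFunction ℕ) (h / p ^ h.factorization p) := by
    have : p ^ e * h = p ^ (e + h.factorization p) * (h / p ^ h.factorization p) := by
      rw [pow_add, mul_assoc, Nat.ordProj_mul_ordCompl_eq_self]
    rw [this, hF.map_mul_of_coprime (hc _), zeta_pow_prime_pow m _ hp]
  rw [h1, h2]
  ring

/-! ### Convergence -/

lemma summable_zeta_pow (m : ℕ) {s : ℂ} (hs : 1 < s.re) :
    Summable fun n : ℕ => ((ζ ^ (m + 1) : ArithmeticFunction ℕ) n : ℂ) / (n : ℂ) ^ s := by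
  have key : LSeriesSummable
      (fun n => ((ζ ^ (m + 1) : ArithmeticFunction ℕ) : ArithmeticFunction ℂ) n) s := by
    induction m with
    | zero =>
      simpa using ArithmeticFunction.LSeriesSummable_zeta_iff.mpr hs
    | succ m ih =>
      rw [pow_succ, ArithmeticFunction.natCoe_mul]
      exact ArithmeticFunction.LSeriesSummable_mul ih
        (by simpa using ArithmeticFunction.LSeriesSummable_zeta_iff.mpr hs)
  have hs0 : s ≠ 0 := by
    rintro rfl
    norm_num at hs
  refine Summable.congr key fun n => ?_
  rw [LSeries.term_of_ne_zero' hs0, ArithmeticFunction.natCoe_apply]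

/-- Up to the factor `h ^ s`, this is the subseries over the multiples of `h`. -/
lemma summable_zeta_pow_shifted (m : ℕ) {h : ℕ} (hh : h ≠ 0) {s : ℂ} (hs : 1 < s.re) :
    Summable fun n : ℕ => ((ζ ^ (m + 1) : ArithmeticFunction ℕ) (n * h) : ℂ) / (n : ℂ) ^ s := by
  have hinj : Function.Injective fun n : ℕ => n * h :=
    fun a b hab => Nat.eq_of_mul_eq_mul_right (Nat.pos_of_ne_zero hh) hab
  refine (((summable_zeta_pow m hs).comp_injective hinj).mul_left ((h : ℂ) ^ s)).congr fun n => ?_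
  have hh' : (h : ℂ) ^ s ≠ 0 := by simp [Complex.cpow_eq_zero_iff, hh]
  simp only [Function.comp_apply]
  rw [Nat.cast_mul, Complex.natCast_mul_natCast_cpow]
  rw [mul_comm ((n : ℂ) ^ s), ← mul_div_assoc, mul_div_mul_left _ _ hh']

/-- The series is `x ^ (-a)` times a tail of the negative binomial series. -/
lemma summable_choose_shifted (m a : ℕ) {x : ℂ} (hx : ‖x‖ < 1) (hx0 : x ≠ 0) :
    Summable fun j : ℕ => (((j + a + m).choose m : ℕ) : ℂ) * x ^ j := by
  have h := (summable_nat_add_iff (G := ℂ) a).mpr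
    (summable_choose_mul_geometric_of_norm_lt_one (R := ℂ) m hx)
  refine (h.mul_left (x ^ a)⁻¹).congr fun j => ?_
  rw [pow_add]
  field_simp

lemma norm_prime_cpow_lt_one {p : ℕ} (hp : p.Prime) {s : ℂ} (hs : 1 < s.re) :
    ‖(p : ℂ) ^ (-s)‖ < 1 := by
  rw [Complex.norm_natCast_cpow_of_pos hp.pos]
  refine Real.rpow_lt_one_of_one_lt_of_neg (by exact_mod_cast hp.one_lt) ?_
  simp
  linarith

lemma prime_cpow_ne_zero {p : ℕ} (hp : p.Prime) (s : ℂ) : (p : ℂ) ^ (-s) ≠ 0 := by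
  simp [Complex.cpow_eq_zero_iff, hp.ne_zero]

lemma one_sub_prime_cpow_ne_zero {p : ℕ} (hp : p.Prime) {s : ℂ} (hs : 1 < s.re) :
    1 - (p : ℂ) ^ (-s) ≠ 0 := by
  intro h
  have := norm_prime_cpow_lt_one hp hs
  rw [← sub_eq_zero.mp h] at this
  simp at this

/-! ### The Euler product -/

/-- The local factor at `p`, normalized to be `1` when `p ∤ h`: the quotient of the Euler factors
at `p` of `∑ n, τ_{m+1} (n h) / τ_{m+1} (h) / n ^ s` and of `ζ(s) ^ (m + 1)`. -/
noncomputable def localFactor (m h : ℕ) (s : ℂ) (p : ℕ) : ℂ :=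
  (((h.factorization p + m).choose m : ℕ) : ℂ)⁻¹ * ((1 - (p : ℂ) ^ (-s)) ^ (m + 1) *
    ∑' j : ℕ, (((j + h.factorization p + m).choose m : ℕ) : ℂ) * ((p : ℂ) ^ (-s)) ^ j)

lemma localFactor_eq_one (m : ℕ) {h : ℕ} {s : ℂ} (hs : 1 < s.re) {p : ℕ} (hp : p.Prime)
    (hph : h.factorization p = 0) : localFactor m h s p = 1 := by
  have h1 := pow_ne_zero (m + 1) (one_sub_prime_cpow_ne_zero hp hs)
  have h2 := tsum_choose_mul_geometric_of_norm_lt_one m (norm_prime_cpow_lt_one hp hs)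
  simp only [localFactor, hph, add_zero, zero_add, Nat.choose_self, Nat.cast_one, inv_one, one_mul]
  rw [h2, mul_one_div_cancel h1]

lemma hasProd_localFactor (m : ℕ) {h : ℕ} {s : ℂ} (hs : 1 < s.re) :
    HasProd (fun p : Nat.Primes => localFactor m h s p)
      (∏ p ∈ h.primeFactors, localFactor m h s p) := by
  change HasProd (localFactor m h s ∘ Subtype.val (p := (· ∈ {x | Nat.Prime x}))) _
  rw [hasProd_subtype_iff_mulIndicator]
  have heq : ∏ p ∈ h.primeFactors, localFactor m h s p =
      ∏ p ∈ h.primeFactors, Set.mulIndicator {x | Nat.Prime x} (localFactor m h s) p :=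
    Finset.prod_congr rfl fun p hp =>
      (Set.mulIndicator_of_mem (s := {x | Nat.Prime x}) (Nat.prime_of_mem_primeFactors hp) _).symm
  rw [heq]
  refine hasProd_prod_of_ne_finset_one fun p hp => ?_
  by_cases hpp : p.Prime
  · rw [Set.mulIndicator_of_mem (s := {x | Nat.Prime x}) hpp]
    refine localFactor_eq_one m hs hpp ?_
    rwa [← Finsupp.notMem_support_iff, Nat.support_factorization]
  · exact Set.mulIndicator_of_notMem (s := {x | Nat.Prime x}) hpp _

lemma hasProd_shifted (m : ℕ) {h : ℕ} (hh : h ≠ 0) {s : ℂ} (hs : 1 < s.re) :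
    HasProd (fun p : Nat.Primes => ((1 - (p : ℂ) ^ (-s))⁻¹) ^ (m + 1) * localFactor m h s p)
      ((∑' n : ℕ, ((ζ ^ (m + 1) : ArithmeticFunction ℕ) (n * h) : ℂ) / (n : ℂ) ^ s) /
        ((ζ ^ (m + 1) : ArithmeticFunction ℕ) h : ℂ)) := by
  have hT : ((ζ ^ (m + 1) : ArithmeticFunction ℕ) h : ℂ) ≠ 0 :=
    Nat.cast_ne_zero.mpr (zeta_pow_ne_zero m hh)
  rw [← tsum_div_const]
  set f : ℕ → ℂ := fun n => ((ζ ^ (m + 1) : ArithmeticFunction ℕ) (n * h) : ℂ) / (n : ℂ) ^ s /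
    ((ζ ^ (m + 1) : ArithmeticFunction ℕ) h : ℂ) with hf
  have hf1 : f 1 = 1 := by simp [hf, hT]
  have hf0 : f 0 = 0 := by simp [hf]
  have hmul : ∀ {a b : ℕ}, a.Coprime b → f (a * b) = f a * f b := by
    intro a b hab
    have h1 : ((ζ ^ (m + 1) : ArithmeticFunction ℕ) (a * b * h) : ℂ) *
        ((ζ ^ (m + 1) : ArithmeticFunction ℕ) h : ℂ) =
        ((ζ ^ (m + 1) : ArithmeticFunction ℕ) (a * h) : ℂ) *
        ((ζ ^ (m + 1) : ArithmeticFunction ℕ) (b * h) : ℂ) := by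
      exact_mod_cast shifted_mul (zeta_pow_isMultiplicative (m + 1)) h hab
    simp only [hf]
    rw [eq_div_of_mul_eq hT h1, Nat.cast_mul, Complex.natCast_mul_natCast_cpow]
    simp only [div_eq_mul_inv, mul_inv]
    ring
  have hsum : Summable (‖f ·‖) := ((summable_zeta_pow_shifted m hh hs).div_const _).norm
  convert EulerProduct.eulerProduct_hasProd hf1 hmul hsum hf0 using 1
  funext p
  have h1 := pow_ne_zero (m + 1) (one_sub_prime_cpow_ne_zero p.2 hs)
  rw [localFactor, mul_left_comm, ← mul_assoc (_ ^ (m + 1)), inv_pow, inv_mul_cancel₀ h1, one_mul,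
    ← tsum_mul_left]
  refine tsum_congr fun e => ?_
  have h2 : ((ζ ^ (m + 1) : ArithmeticFunction ℕ) ((p : ℕ) ^ e * h) : ℂ) *
      (((h.factorization p + m).choose m : ℕ) : ℂ) =
      (((e + h.factorization p + m).choose m : ℕ) : ℂ) *
        ((ζ ^ (m + 1) : ArithmeticFunction ℕ) h : ℂ) := by
    exact_mod_cast shifted_prime_pow m e hh p.2
  have h3 : (((h.factorization p + m).choose m : ℕ) : ℂ) ≠ 0 :=
    Nat.cast_ne_zero.mpr (Nat.choose_pos (by omega)).ne'
  have h4 : ((p : ℂ) ^ (-s)) ^ e = (((p ^ e : ℕ) : ℂ) ^ s)⁻¹ := by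
    rw [Nat.cast_pow, ← Complex.natCast_cpow_natCast_mul, Complex.cpow_neg, inv_pow,
      ← Complex.cpow_nat_mul]
  simp only [hf]
  rw [eq_div_of_mul_eq h3 h2, h4]
  field_simp

theorem dirichlet_series_tauk_shifted (k h : ℕ) (hk : 1 ≤ k) (hh : 1 ≤ h)
    (s : ℂ) (hs : 1 < s.re) :
    Summable (fun n : ℕ => ‖(tauk k (n * h) : ℂ) / (n : ℂ) ^ s‖) ∧
    (∀ p ∈ h.primeFactors, Summable fun j : ℕ =>
      ‖(((k + j + h.factorization p - 1).choose (k - 1) : ℕ) : ℂ) *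
        (p : ℂ) ^ (-(j : ℂ) * s)‖) ∧
    ∑' n : ℕ, (tauk k (n * h) : ℂ) / (n : ℂ) ^ s =
      riemannZeta s ^ k *
        ∏ p ∈ h.primeFactors,
          ((1 - (p : ℂ) ^ (-s)) ^ k *
            ∑' j : ℕ, (((k + j + h.factorization p - 1).choose (k - 1) : ℕ) : ℂ) *
              (p : ℂ) ^ (-(j : ℂ) * s)) := by
  obtain ⟨m, rfl⟩ : ∃ m, k = m + 1 := ⟨k - 1, by omega⟩
  have hh0 : h ≠ 0 := by omega
  have hchoose (p j : ℕ) : (((m + 1 + j + h.factorization p - 1).choose (m + 1 - 1) : ℕ) : ℂ) *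
      (p : ℂ) ^ (-(j : ℂ) * s) =
      (((j + h.factorization p + m).choose m : ℕ) : ℂ) * ((p : ℂ) ^ (-s)) ^ j := by
    rw [neg_mul_comm, Complex.cpow_nat_mul]
    congr 4
    omega
  simp only [tauk_eq_zeta_pow, hchoose]
  refine ⟨(summable_zeta_pow_shifted m hh0 hs).norm, fun p hp => ?_, ?_⟩
  · have hpp := Nat.prime_of_mem_primeFactors hp
    exact (summable_choose_shifted m _ (norm_prime_cpow_lt_one hpp hs)
      (prime_cpow_ne_zero hpp s)).norm
  · have hT : ((ζ ^ (m + 1) : ArithmeticFunction ℕ) h : ℂ) ≠ 0 :=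
      Nat.cast_ne_zero.mpr (zeta_pow_ne_zero m hh0)
    have key := (hasProd_shifted m hh0 hs).unique
      (((riemannZeta_eulerProduct_hasProd hs).pow (m + 1)).mul (hasProd_localFactor m hs))
    rw [div_eq_iff hT] at key
    rw [key, mul_assoc]
    congr 1
    rw [zeta_pow_eq_prod_choose m hh0, Nat.cast_prod, ← Finset.prod_mul_distrib]
    refine Finset.prod_congr rfl fun p _ => ?_
    have h3 : (((h.factorization p + m).choose m : ℕ) : ℂ) ≠ 0 :=
      Nat.cast_ne_zero.mpr (Nat.choose_pos (by omega)).ne'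
    rw [localFactor]
    field_simp
end

section
/- Define, for real X ≥ 2, b_1(X) = (1/2)·Σ_{ℓ_1 ≤ X^{1/3}} Σ_{ℓ_2 ≤ X^{2/3}/ℓ_1} φ(ℓ_1ℓ_2)²/(ℓ_1ℓ_2)³, the sums running over positive integers ℓ_1, ℓ_2. Then there exist real constants c_1 and c_2 such that for every ε > 0 there is C_ε > 0 with | b_1(X) − ( (1/12)·C₃·(log X)² + c_1·log X + c_2 ) | ≤ C_ε·X^{−1/3+ε} for all X ≥ 2. -/
/-!
Write `Y = X^{1/3}`, so that `2 b₁(X) = ∑_{a ≤ Y} ∑_{b ≤ Y²/a} (φ(ab)/(ab))² / (ab)`.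

The function `n ↦ (φ(n)/n)² = ∏_{p ∣ n} (1 - r_p)`, with `r_p = 1 - (1 - 1/p)²`, satisfies
`(φ(ab)/(ab))² = ∑_{d ∣ a, e ∣ b} κ(d, e)` where `κ(d, e) = μ(d) μ(e) ∏_{p ∣ de} r_p`
(`totient_sq_eq_sum_kap`). Substituting `a = d m`, `b = e n` turns the double sum into
`∑_{d, e} κ(d, e)/(de) · T(d, e)` with `T(d, e) = ∑_{m ≤ Y/d} (1/m) H(Y²/(d e m))` and
`H(t) = ∑_{n ≤ t} 1/n` (`hyperbola_sum_eq`).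

With `L = log Y`, the expansions `H(t) = log t + γ + O(t^{-δ})` and
`∑_{m ≤ u} log(u/m)/m = ½ log² u + γ log u + c + O(u^{-δ})` show that `T(d, e)` is `(3/2) L²` plus
a linear polynomial in `L` with coefficients polynomial in `log d`, `log e`
(`exists_abs_inner2_sub_le`). For `δ < 1` these expansions hold for every positive real
argument, because below `1` the sums vanish and the main terms are absorbed in the error. Hence the
series over `(d, e)` is completed with no truncation, and the total error is
`O(Y^{-1 + 5η} ∑ |κ(d, e)|/(de) · (d^{1 - 4η} e^η + e^{1 - 4η} d^η))`. This series converges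
(`summable_kap_weight`): `κ(d, e) ≪ (de)^{η/2} gcd(d, e)/(de)`, and
`gcd(d, e) ≤ d^{2η} e^{1 - 2η}`.

Collecting `de = n`, the coefficient of `(3/2) L²` is `∑_n (μ * μ)(n) ∏_{p ∣ n} r_p / n`, whose Euler
factor `1 - 2 r_p/p + r_p/p²` equals `1 - 4/p² + 4/p³ - 1/p⁴` (`tsum_kap_div`). Finally
`½ · (3/2) · (log X / 3)² = (1/12) log² X`.
-/

/-- `C₃ = ∏_p (1 − 4/p² + 4/p³ − 1/p⁴)`, product over all primes. -/
noncomputable def C3 : ℝ :=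
  ∏' p : Nat.Primes,
    (1 - 4 / ((p : ℕ) : ℝ) ^ 2 + 4 / ((p : ℕ) : ℝ) ^ 3 - 1 / ((p : ℕ) : ℝ) ^ 4)

/-- `b₁(X) = (1/2)·Σ_{ℓ₁ ≤ X^{1/3}} Σ_{ℓ₂ ≤ X^{2/3}/ℓ₁} φ(ℓ₁ℓ₂)²/(ℓ₁ℓ₂)³`. -/
noncomputable def b1 (X : ℝ) : ℝ :=
  (1 / 2) * ∑ l1 ∈ Finset.Icc 1 ⌊X ^ ((1 : ℝ) / 3)⌋₊,
    ∑ l2 ∈ Finset.Icc 1 ⌊X ^ ((2 : ℝ) / 3) / (l1 : ℝ)⌋₊,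
      ((l1 * l2).totient : ℝ) ^ 2 / ((l1 * l2 : ℕ) : ℝ) ^ 3

/-! ### The divisor expansion of `(φ(ab)/(ab))²` -/

open ArithmeticFunction in
lemma sum_divisors_moebius_mul_prod (ρ : ℕ → ℝ) {n : ℕ} (hn : n ≠ 0) :
    ∑ d ∈ n.divisors, (moebius d : ℝ) * ∏ p ∈ d.primeFactors, ρ p =
      ∏ p ∈ n.primeFactors, (1 - ρ p) := by
  have h1 : ∑ d ∈ n.divisors, (moebius d : ℝ) * ∏ p ∈ d.primeFactors, ρ p =
      ∑ d ∈ n.divisors with Squarefree d, (moebius d : ℝ) * ∏ p ∈ d.primeFactors, ρ p := by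
    rw [Finset.sum_filter]
    refine Finset.sum_congr rfl fun d _ => ?_
    split_ifs with h
    · rfl
    · simp [moebius_eq_zero_of_not_squarefree h]
  rw [h1, Nat.sum_divisors_filter_squarefree hn]
  have h2 : (UniqueFactorizationMonoid.normalizedFactors n).toFinset = n.primeFactors := by
    ext p
    simp [Nat.factors_eq, hn]
  rw [h2]
  simp only [sub_eq_add_neg]
  rw [Finset.prod_one_add]
  refine Finset.sum_congr rfl fun S hS => ?_
  have hS' : ∀ p ∈ S, p.Prime := fun p hp => Nat.prime_of_mem_primeFactors (Finset.mem_powerset.1 hS hp)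
  have h3 : S.val.prod = ∏ p ∈ S, p := by rw [← Finset.prod_map_val]; simp
  rw [h3, Nat.primeFactors_prod hS']
  have h4 : moebius (∏ p ∈ S, p) = ∏ p ∈ S, moebius p := by
    apply isMultiplicative_moebius.map_prod
    intro p hp q hq hpq
    exact (Nat.coprime_primes (hS' p hp) (hS' q hq)).2 hpq
  rw [h4]
  push_cast
  rw [← Finset.prod_mul_distrib]
  refine Finset.prod_congr rfl fun p hp => ?_
  rw [moebius_apply_prime (hS' p hp)]; push_cast; ring

/-- The local defect `r_p = 1 - (1 - 1/p)²`. -/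
noncomputable def locDefect (p : ℕ) : ℝ := 1 - (1 - 1 / (p : ℝ)) ^ 2

/-- `∏_{p ∣ n} r_p`, which depends only on the radical of `n`. -/
noncomputable def radDefect (n : ℕ) : ℝ := ∏ p ∈ n.primeFactors, locDefect p

/-- The coefficient `κ(d, e)` in `(φ(ab)/(ab))² = ∑_{d ∣ a, e ∣ b} κ(d, e)`. -/
noncomputable def kap (d e : ℕ) : ℝ :=
  (ArithmeticFunction.moebius d : ℝ) * (ArithmeticFunction.moebius e : ℝ) * radDefect (d * e)

lemma radDefect_mul {d e : ℕ} (hd : d ≠ 0) (he : e ≠ 0) :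
    radDefect (d * e) = radDefect d *
      ∏ p ∈ e.primeFactors, (if p ∈ d.primeFactors then 1 else locDefect p) := by
  unfold radDefect
  rw [Nat.primeFactors_mul hd he, ← Finset.union_sdiff_self_eq_union,
    Finset.prod_union Finset.disjoint_sdiff]
  congr 1
  rw [Finset.prod_ite, Finset.prod_const_one, one_mul, Finset.sdiff_eq_filter]

/-- The two-variable convolution identity. For fixed `d` the sum over `e` is
`μ(d) ∏_{p ∣ d} r_p ∏_{p ∣ b} (1 - r_p)` if `d` is coprime to `b` and vanishes otherwise, because a
prime dividing both `d` and `b` contributes a factor `1 - 1`. -/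
lemma totient_sq_eq_sum_kap {a b : ℕ} (ha : a ≠ 0) (hb : b ≠ 0) :
    ((a * b).totient : ℝ) ^ 2 / ((a * b : ℕ) : ℝ) ^ 2 =
      ∑ d ∈ a.divisors, ∑ e ∈ b.divisors, kap d e := by
  have h0 : ((a * b : ℕ) : ℝ) ≠ 0 := by exact_mod_cast Nat.mul_ne_zero ha hb
  have h1 : ((a * b).totient : ℝ) = (a * b : ℕ) * ∏ p ∈ (a * b).primeFactors, (1 - 1 / (p : ℝ)) := by
    have := Nat.totient_eq_mul_prod_factors (a * b)
    have h := congrArg (fun q : ℚ => (q : ℝ)) this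
    push_cast at h ⊢
    simpa using h
  have h2 : ((a * b).totient : ℝ) ^ 2 / ((a * b : ℕ) : ℝ) ^ 2 =
      ∏ p ∈ (a * b).primeFactors, (1 - locDefect p) := by
    rw [h1, mul_pow, mul_div_cancel_left₀ _ (pow_ne_zero 2 h0), ← Finset.prod_pow]
    exact Finset.prod_congr rfl fun p _ => by simp [locDefect]
  have h3 : ∀ d ∈ a.divisors, ∑ e ∈ b.divisors, kap d e =
      (∏ p ∈ b.primeFactors, (1 - locDefect p)) * ((ArithmeticFunction.moebius d : ℝ) *
        ∏ p ∈ d.primeFactors, if p ∈ b.primeFactors then 0 else locDefect p) := by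
    intro d hd
    have hd0 : d ≠ 0 := (Nat.pos_of_mem_divisors hd).ne'
    have : ∑ e ∈ b.divisors, kap d e = (ArithmeticFunction.moebius d : ℝ) * radDefect d *
        ∑ e ∈ b.divisors, (ArithmeticFunction.moebius e : ℝ) *
          ∏ p ∈ e.primeFactors, (if p ∈ d.primeFactors then 1 else locDefect p) := by
      rw [Finset.mul_sum]
      refine Finset.sum_congr rfl fun e he => ?_
      rw [kap, radDefect_mul hd0 (Nat.pos_of_mem_divisors he).ne']
      ring
    rw [this, sum_divisors_moebius_mul_prod _ hb]
    by_cases hdb : ∃ p ∈ d.primeFactors, p ∈ b.primeFactors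
    · obtain ⟨p, hp, hpb⟩ := hdb
      rw [Finset.prod_eq_zero hpb (by simp only [if_pos hp, sub_self])]
      rw [Finset.prod_eq_zero hp (by simp only [if_pos hpb])]
      ring
    · push Not at hdb
      rw [Finset.prod_congr rfl (g := fun p => 1 - locDefect p)]
      · rw [Finset.prod_congr (s₁ := d.primeFactors) rfl (g := fun p => locDefect p)]
        · simp only [radDefect]; ring
        · intro p hp; rw [if_neg (hdb p hp)]
      · intro p hp
        rw [if_neg (fun h => hdb p h hp)]
  rw [h2, Finset.sum_congr rfl h3, ← Finset.mul_sum, sum_divisors_moebius_mul_prod _ ha,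
    Nat.primeFactors_mul ha hb, Finset.union_comm, ← Finset.union_sdiff_self_eq_union,
    Finset.prod_union Finset.disjoint_sdiff]
  congr 1
  rw [Finset.sdiff_eq_filter, Finset.prod_filter]
  refine Finset.prod_congr rfl fun p _ => ?_
  split_ifs <;> simp

/-! ### Absolute convergence -/

lemma locDefect_nonneg {p : ℕ} (hp : p.Prime) : 0 ≤ locDefect p := by
  have h : (1 : ℝ) ≤ p := by exact_mod_cast hp.one_le
  have h1 : 1 / (p : ℝ) ≤ 1 := by rw [div_le_one (by linarith)]; exact h
  have h2 : 0 < 1 / (p : ℝ) := by positivity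
  unfold locDefect; nlinarith

lemma locDefect_le {p : ℕ} : locDefect p ≤ 2 / p := by
  unfold locDefect
  have : 2 / (p : ℝ) = 2 * (1 / p) := by ring
  rw [this]; nlinarith [sq_nonneg (1 / (p : ℝ))]

/-- `2^{ω(n)} ≪ n^η`: only finitely many primes satisfy `p^η < 2`. -/
lemma exists_two_pow_omega_le {η : ℝ} (hη : 0 < η) :
    ∃ C : ℝ, 0 < C ∧ ∀ n : ℕ, n ≠ 0 → (∏ _p ∈ n.primeFactors, (2 : ℝ)) ≤ C * (n : ℝ) ^ η := by
  obtain ⟨M, hM⟩ := exists_nat_gt ((2 : ℝ) ^ (1 / η))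
  refine ⟨2 ^ M, by positivity, fun n hn => ?_⟩
  have h1 : (∏ _p ∈ n.primeFactors, (2 : ℝ)) ≤
      ∏ p ∈ n.primeFactors, ((if p < M then 2 else 1) * (p : ℝ) ^ η) := by
    refine Finset.prod_le_prod (fun _ _ => by norm_num) fun p hp => ?_
    have hp1 : (1 : ℝ) ≤ p := by exact_mod_cast (Nat.prime_of_mem_primeFactors hp).one_le
    split_ifs with h
    · have := Real.one_le_rpow hp1 hη.le
      linarith
    · rw [one_mul]
      have h2 : (2 : ℝ) ^ (1 / η) ≤ p := by
        have : (M : ℝ) ≤ p := by exact_mod_cast not_lt.1 h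
        linarith
      calc (2 : ℝ) = ((2 : ℝ) ^ (1 / η)) ^ η := by
            rw [← Real.rpow_mul (by norm_num), one_div_mul_cancel hη.ne', Real.rpow_one]
        _ ≤ _ := Real.rpow_le_rpow (by positivity) h2 hη.le
  refine h1.trans ?_
  rw [Finset.prod_mul_distrib]
  refine mul_le_mul ?_ ?_ (Finset.prod_nonneg fun _ _ => by positivity) (by positivity)
  · rw [← Finset.prod_filter, Finset.prod_const]
    refine pow_le_pow_right₀ (by norm_num) ?_
    calc _ ≤ (Finset.range M).card := Finset.card_le_card fun p hp => by
            simpa using (Finset.mem_filter.1 hp).2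
      _ = M := Finset.card_range M
  · rw [Real.finsetProd_rpow _ _ (fun _ _ => by positivity)]
    refine Real.rpow_le_rpow (by positivity) ?_ hη.le
    rw [← Nat.cast_prod]
    exact_mod_cast Nat.le_of_dvd (Nat.pos_of_ne_zero hn) (Nat.prod_primeFactors_dvd n)

/-- For squarefree `d` and `e` the radical of `de` is `de / gcd(d, e)`, and
`r_p ≤ 2/p` with `2^{ω(de)} ≪ (de)^η`. -/
lemma exists_abs_kap_le {η : ℝ} (hη : 0 < η) :
    ∃ C : ℝ, 0 < C ∧ ∀ d e : ℕ, d ≠ 0 → e ≠ 0 →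
      |kap d e| ≤ C * ((d : ℝ) * e) ^ η * ((Nat.gcd d e : ℝ) / (d * e)) := by
  obtain ⟨C, hC, h⟩ := exists_two_pow_omega_le hη
  refine ⟨C, hC, fun d e hd he => ?_⟩
  have hd' : (0 : ℝ) < d := by exact_mod_cast Nat.pos_of_ne_zero hd
  have he' : (0 : ℝ) < e := by exact_mod_cast Nat.pos_of_ne_zero he
  have hpos : 0 ≤ C * ((d : ℝ) * e) ^ η * ((Nat.gcd d e : ℝ) / (d * e)) := by positivity
  by_cases hsd : Squarefree d
  swap
  · simpa [kap, ArithmeticFunction.moebius_eq_zero_of_not_squarefree hsd] using hpos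
  by_cases hse : Squarefree e
  swap
  · simpa [kap, ArithmeticFunction.moebius_eq_zero_of_not_squarefree hse] using hpos
  have hmu : ∀ n : ℕ, |(ArithmeticFunction.moebius n : ℝ)| ≤ 1 := fun n => by
    exact_mod_cast ArithmeticFunction.abs_moebius_le_one
  have hr0 : 0 ≤ radDefect (d * e) :=
    Finset.prod_nonneg fun p hp => locDefect_nonneg (Nat.prime_of_mem_primeFactors hp)
  have h1 : |kap d e| ≤ radDefect (d * e) := by
    rw [kap, abs_mul, abs_mul, abs_of_nonneg hr0]
    exact mul_le_of_le_one_left hr0 (mul_le_one₀ (hmu d) (abs_nonneg _) (hmu e))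
  have h2 : radDefect (d * e) ≤
      (∏ _p ∈ (d * e).primeFactors, (2 : ℝ)) * ∏ p ∈ (d * e).primeFactors, (1 / (p : ℝ)) := by
    rw [← Finset.prod_mul_distrib]
    refine Finset.prod_le_prod (fun p hp => locDefect_nonneg (Nat.prime_of_mem_primeFactors hp))
      fun p _ => ?_
    rw [mul_one_div]; exact locDefect_le
  have h3 : ∏ p ∈ (d * e).primeFactors, (1 / (p : ℝ)) ≤ (Nat.gcd d e : ℝ) / (d * e) := by
    rw [Finset.prod_div_distrib, Finset.prod_const_one, ← Nat.cast_prod]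
    have hU : (∏ p ∈ (d * e).primeFactors, p) * (∏ p ∈ d.primeFactors ∩ e.primeFactors, p) = d * e := by
      rw [Nat.primeFactors_mul hd he, Finset.prod_union_inter,
        Nat.prod_primeFactors_of_squarefree hsd, Nat.prod_primeFactors_of_squarefree hse]
    have hI : (∏ p ∈ d.primeFactors ∩ e.primeFactors, p) ≤ Nat.gcd d e := by
      rw [← Nat.primeFactors_gcd hd he]
      exact Nat.le_of_dvd (Nat.gcd_pos_of_pos_left _ (Nat.pos_of_ne_zero hd))
        (Nat.prod_primeFactors_dvd _)
    have hUp : 0 < ∏ p ∈ (d * e).primeFactors, p := Nat.pos_of_ne_zero fun h => by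
      rw [h, zero_mul] at hU; exact Nat.mul_ne_zero hd he hU.symm
    rw [div_le_div_iff₀ (by exact_mod_cast hUp) (by positivity), one_mul]
    have : d * e ≤ Nat.gcd d e * ∏ p ∈ (d * e).primeFactors, p := by
      calc d * e = _ := hU.symm
        _ ≤ _ := by rw [mul_comm]; exact Nat.mul_le_mul_right _ hI
    exact_mod_cast this
  refine (h1.trans h2).trans (mul_le_mul ?_ h3 (Finset.prod_nonneg fun _ _ => by positivity)
    (by positivity))
  have := h (d * e) (Nat.mul_ne_zero hd he)
  push_cast at this; exact this

/-- The basic absolute convergence. The gain over a divergent double series comes from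
`gcd(d, e) ≤ d^{2η} e^{1 - 2η}`. -/
lemma summable_kap_weight {η : ℝ} (hη : 0 < η) (hη' : η ≤ 1 / 8) :
    Summable fun x : ℕ × ℕ => |kap x.1 x.2| / ((x.1 : ℝ) * x.2) *
      ((x.1 : ℝ) ^ (1 - 4 * η) * (x.2 : ℝ) ^ η) := by
  obtain ⟨C, hC, h⟩ := exists_abs_kap_le (half_pos hη)
  have hs : ∀ s : ℝ, 0 < s → Summable fun n : ℕ => (n : ℝ) ^ (-1 - s) := fun s h =>
    Real.summable_nat_rpow.2 (by linarith)
  have hprod := ((hs (3 / 2 * η) (by positivity)).mul_of_nonneg (hs (η / 2) (by positivity))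
    (fun _ => by positivity) (fun _ => by positivity)).mul_left C
  refine Summable.of_nonneg_of_le (fun x => by positivity) (fun x => ?_) hprod
  obtain ⟨d, e⟩ := x
  simp only
  by_cases hd : d = 0
  · subst hd; simp; positivity
  by_cases he : e = 0
  · subst he; simp; positivity
  have hd' : (0 : ℝ) < d := by exact_mod_cast Nat.pos_of_ne_zero hd
  have he' : (0 : ℝ) < e := by exact_mod_cast Nat.pos_of_ne_zero he
  have hg0 : (0 : ℝ) < Nat.gcd d e := by
    exact_mod_cast Nat.gcd_pos_of_pos_left _ (Nat.pos_of_ne_zero hd)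
  have hg : (Nat.gcd d e : ℝ) ≤ (d : ℝ) ^ (2 * η) * (e : ℝ) ^ (1 - 2 * η) := by
    calc (Nat.gcd d e : ℝ) = (Nat.gcd d e : ℝ) ^ (2 * η) * (Nat.gcd d e : ℝ) ^ (1 - 2 * η) := by
          rw [← Real.rpow_add hg0]; simp
      _ ≤ _ := by
          refine mul_le_mul (Real.rpow_le_rpow hg0.le ?_ (by positivity))
            (Real.rpow_le_rpow hg0.le ?_ (by linarith)) (by positivity) (by positivity)
          · exact_mod_cast Nat.gcd_le_left _ (Nat.pos_of_ne_zero hd)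
          · exact_mod_cast Nat.gcd_le_right _ (Nat.pos_of_ne_zero he)
  calc |kap d e| / ((d : ℝ) * e) * ((d : ℝ) ^ (1 - 4 * η) * (e : ℝ) ^ η)
      ≤ (C * ((d : ℝ) * e) ^ (η / 2) * (((d : ℝ) ^ (2 * η) * (e : ℝ) ^ (1 - 2 * η)) / (d * e))) /
          ((d : ℝ) * e) * ((d : ℝ) ^ (1 - 4 * η) * (e : ℝ) ^ η) := by
        gcongr
        exact (h d e hd he).trans (by gcongr)
    _ = C * ((d : ℝ) ^ (-1 - 3 / 2 * η) * (e : ℝ) ^ (-1 - η / 2)) := by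
        rw [Real.mul_rpow hd'.le he'.le]
        have e1 : (d : ℝ) ^ (-1 - 3 / 2 * η) = (d : ℝ) ^ (η / 2) * (d : ℝ) ^ (2 * η) *
            (d : ℝ) ^ (1 - 4 * η) / (d * d) := by
          rw [← Real.rpow_add hd', ← Real.rpow_add hd', eq_div_iff (by positivity), ← pow_two,
            ← Real.rpow_natCast, ← Real.rpow_add hd']
          congr 1; push_cast; ring
        have e2 : (e : ℝ) ^ (-1 - η / 2) = (e : ℝ) ^ (η / 2) * (e : ℝ) ^ (1 - 2 * η) *
            (e : ℝ) ^ η / (e * e) := by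
          rw [← Real.rpow_add he', ← Real.rpow_add he', eq_div_iff (by positivity), ← pow_two,
            ← Real.rpow_natCast, ← Real.rpow_add he']
          congr 1; push_cast; ring
        rw [e1, e2]; field_simp

lemma summable_kap_div : Summable fun x : ℕ × ℕ => kap x.1 x.2 / ((x.1 : ℝ) * x.2) := by
  refine Summable.of_norm_bounded (summable_kap_weight (η := 1 / 10) (by norm_num) (by norm_num))
    fun x => ?_
  obtain ⟨d, e⟩ := x
  simp only
  by_cases hd : d = 0
  · subst hd; simp
  by_cases he : e = 0
  · subst he; simp
  have hd' : (1 : ℝ) ≤ d := by exact_mod_cast Nat.one_le_iff_ne_zero.2 hd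
  have he' : (1 : ℝ) ≤ e := by exact_mod_cast Nat.one_le_iff_ne_zero.2 he
  rw [Real.norm_eq_abs, abs_div, abs_of_nonneg (show (0 : ℝ) ≤ (d : ℝ) * e by positivity)]
  exact le_mul_of_one_le_right (by positivity)
    (one_le_mul_of_one_le_of_one_le (Real.one_le_rpow hd' (by norm_num))
      (Real.one_le_rpow he' (by norm_num)))

/-! ### The Euler product for the leading coefficient -/

/-- The Dirichlet series coefficient obtained by collecting the pairs `(d, e)` with `d * e = n`. -/
noncomputable def collected (n : ℕ) : ℝ :=
  ((ArithmeticFunction.moebius * ArithmeticFunction.moebius : ArithmeticFunction ℤ) n : ℝ) *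
    radDefect n / n

lemma hasSum_collected : HasSum collected (∑' x : ℕ × ℕ, kap x.1 x.2 / ((x.1 : ℝ) * x.2)) := by
  have h := summable_kap_div.hasSum.tsum_fiberwise (fun x : ℕ × ℕ => x.1 * x.2)
  refine (congrArg (fun f : ℕ → ℝ => HasSum f _) (funext fun n => ?_)).mpr h
  by_cases hn : n = 0
  · subst hn
    simp only [collected, Nat.cast_zero, div_zero]
    symm
    convert tsum_zero with x
    obtain ⟨⟨d, e⟩, hx⟩ := x
    have hx' : d * e = 0 := hx
    have : (d : ℝ) * e = 0 := by exact_mod_cast hx'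
    simp [this]
  · have hset : ((fun x : ℕ × ℕ => x.1 * x.2) ⁻¹' {n}) = ↑(n.divisorsAntidiagonal) := by
      ext x; simp [hn]
    rw [hset, Finset.tsum_subtype' n.divisorsAntidiagonal
      (fun x : ℕ × ℕ => kap x.1 x.2 / ((x.1 : ℝ) * x.2)), collected, ArithmeticFunction.mul_apply]
    push_cast
    rw [Finset.sum_mul, Finset.sum_div]
    refine Finset.sum_congr rfl fun x hx => ?_
    have hx1 := (Nat.mem_divisorsAntidiagonal.1 hx).1
    rw [kap, hx1, ← hx1]; push_cast; ring

lemma collected_mul {m n : ℕ} (h : m.Coprime n) :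
    collected (m * n) = collected m * collected n := by
  by_cases hm : m = 0
  · subst hm; simp [collected]
  by_cases hn : n = 0
  · subst hn; simp [collected]
  have hmult := (ArithmeticFunction.isMultiplicative_moebius.mul
    ArithmeticFunction.isMultiplicative_moebius).map_mul_of_coprime h
  have hr : radDefect (m * n) = radDefect m * radDefect n := by
    unfold radDefect
    rw [Nat.primeFactors_mul hm hn, Finset.prod_union h.disjoint_primeFactors]
  rw [collected, hmult, hr, collected, collected]; push_cast; ring

/-- The local factor of the Euler product; `(μ * μ)(p^k)` is `1, -2, 1, 0, 0, …`. -/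
lemma tsum_collected_prime_pow {p : ℕ} (hp : p.Prime) :
    ∑' k, collected (p ^ k) = 1 - 4 / (p : ℝ) ^ 2 + 4 / (p : ℝ) ^ 3 - 1 / (p : ℝ) ^ 4 := by
  have hp0 : (p : ℝ) ≠ 0 := by exact_mod_cast hp.ne_zero
  have hmu : ∀ k : ℕ, (ArithmeticFunction.moebius (p ^ k) : ℤ) =
      if k = 0 then 1 else if k = 1 then -1 else 0 := by
    intro k
    split_ifs with h0 h1
    · simp [h0]
    · rw [ArithmeticFunction.moebius_apply_prime_pow hp h0, if_pos h1]
    · rw [ArithmeticFunction.moebius_apply_prime_pow hp h0, if_neg h1]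
  have hconv : ∀ k : ℕ, ((ArithmeticFunction.moebius * ArithmeticFunction.moebius :
      ArithmeticFunction ℤ) (p ^ k)) = ∑ i ∈ Finset.range (k + 1),
        ArithmeticFunction.moebius (p ^ i) * ArithmeticFunction.moebius (p ^ (k - i)) := by
    intro k
    rw [ArithmeticFunction.mul_apply, Nat.sum_divisorsAntidiagonal (fun i j =>
      ArithmeticFunction.moebius i * ArithmeticFunction.moebius j), Nat.sum_divisors_prime_pow hp]
    refine Finset.sum_congr rfl fun i hi => ?_
    rw [Nat.pow_div (Nat.lt_succ_iff.1 (Finset.mem_range.1 hi)) hp.pos]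
  have hrad : ∀ k : ℕ, k ≠ 0 → radDefect (p ^ k) = locDefect p := by
    intro k hk
    rw [radDefect, Nat.primeFactors_prime_pow hk hp, Finset.prod_singleton]
  rw [tsum_eq_sum (s := Finset.range 3)]
  · simp only [Finset.sum_range_succ, Finset.sum_range_zero, collected, hconv]
    rw [hrad 1 one_ne_zero, hrad 2 two_ne_zero]
    simp only [hmu]
    simp [radDefect, locDefect]
    field_simp
    ring
  · intro k hk
    have hk3 : 3 ≤ k := by simpa using hk
    have : ∑ i ∈ Finset.range (k + 1),
        ArithmeticFunction.moebius (p ^ i) * ArithmeticFunction.moebius (p ^ (k - i)) = 0 := by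
      refine Finset.sum_eq_zero fun i hi => ?_
      have := Finset.mem_range.1 hi
      rw [hmu, hmu]
      by_cases h : 2 ≤ i
      · rw [if_neg (by omega), if_neg (by omega), zero_mul]
      · rw [if_neg (c := k - i = 0) (by omega), if_neg (c := k - i = 1) (by omega), mul_zero]
    simp [collected, hconv, this]

lemma tsum_kap_div : ∑' x : ℕ × ℕ, kap x.1 x.2 / ((x.1 : ℝ) * x.2) = C3 := by
  have h := EulerProduct.eulerProduct_hasProd (f := collected) (by simp [collected, radDefect])
    collected_mul hasSum_collected.summable.norm (by simp [collected])
  unfold C3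
  rw [← hasSum_collected.tsum_eq, ← h.tprod_eq]
  exact tprod_congr fun p : Nat.Primes => tsum_collected_prime_pow p.2

/-! ### Rearranging the hyperbola sum -/

/-- The partial harmonic sum up to a real bound. -/
noncomputable def harm (t : ℝ) : ℝ := ∑ m ∈ Finset.Icc 1 ⌊t⌋₊, 1 / (m : ℝ)

/-- Sorting pairs `(e, n)` with `e * n ≤ N` by the product or by the first entry. -/
lemma sum_Icc_divisors (G : ℕ → ℕ → ℝ) {N M : ℕ} (h : N ≤ M) :
    ∑ b ∈ Finset.Icc 1 N, ∑ e ∈ b.divisors, G e b =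
      ∑ e ∈ Finset.Icc 1 M, ∑ n ∈ Finset.Icc 1 (N / e), G e (e * n) := by
  rw [Finset.sum_sigma', Finset.sum_sigma']
  refine Finset.sum_bij' (fun x _ => ⟨x.2, x.1 / x.2⟩) (fun x _ => ⟨x.1 * x.2, x.1⟩) ?_ ?_ ?_ ?_ ?_
  · rintro ⟨b, e⟩ hx
    simp only [Finset.mem_sigma, Finset.mem_Icc, Nat.mem_divisors] at hx ⊢
    obtain ⟨⟨h1, h2⟩, h3, h4⟩ := hx
    have he := Nat.pos_of_dvd_of_pos h3 h1
    have := Nat.le_of_dvd h1 h3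
    exact ⟨⟨he, by omega⟩, Nat.div_pos this he, Nat.div_le_div_right h2⟩
  · rintro ⟨e, n⟩ hx
    simp only [Finset.mem_sigma, Finset.mem_Icc, Nat.mem_divisors] at hx ⊢
    obtain ⟨⟨h1, h2⟩, h3, h4⟩ := hx
    have := (Nat.le_div_iff_mul_le h1).1 h4
    have h5 : 0 < e * n := Nat.mul_pos h1 h3
    exact ⟨⟨h5, by rw [mul_comm]; exact this⟩, Dvd.intro _ rfl, h5.ne'⟩
  · rintro ⟨b, e⟩ hx
    simp only [Finset.mem_sigma, Finset.mem_Icc, Nat.mem_divisors] at hx ⊢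
    simp [Nat.mul_div_cancel' hx.2.1]
  · rintro ⟨e, n⟩ hx
    simp only [Finset.mem_sigma, Finset.mem_Icc] at hx ⊢
    simp [Nat.mul_div_cancel_left n (show 0 < e by omega)]
  · rintro ⟨b, e⟩ hx
    simp only [Finset.mem_sigma, Finset.mem_Icc, Nat.mem_divisors] at hx ⊢
    rw [Nat.mul_div_cancel' hx.2.1]

/-- The sum `∑_{m ≤ Y/d} (1/m) H(Y²/(d e m))`, where `H` is `harm`. -/
noncomputable def inner2 (Y : ℝ) (d e : ℕ) : ℝ :=
  ∑ m ∈ Finset.Icc 1 ⌊Y / d⌋₊, 1 / (m : ℝ) * harm (Y ^ 2 / ((d * m : ℕ) : ℝ) / e)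

lemma harm_of_lt_one {t : ℝ} (h : t < 1) : harm t = 0 := by
  simp [harm, Nat.floor_eq_zero.2 h]

/-- Writing `a = d m` and `b = e n` decouples the summation conditions. The series on the right
has finite support, since `inner2 Y d e = 0` once `d` or `e` exceeds `Y²`. -/
lemma hyperbola_sum_eq {Y : ℝ} (hY : 1 ≤ Y) :
    ∑ a ∈ Finset.Icc 1 ⌊Y⌋₊, ∑ b ∈ Finset.Icc 1 ⌊Y ^ 2 / (a : ℝ)⌋₊,
      ((a * b).totient : ℝ) ^ 2 / ((a * b : ℕ) : ℝ) ^ 3 =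
    ∑' x : ℕ × ℕ, kap x.1 x.2 / ((x.1 : ℝ) * x.2) * inner2 Y x.1 x.2 := by
  set M := ⌊Y ^ 2⌋₊ with hM
  have hYM : ⌊Y⌋₊ ≤ M := Nat.floor_le_floor (by nlinarith)
  have hinner : ∀ a ∈ Finset.Icc 1 ⌊Y⌋₊, ∑ b ∈ Finset.Icc 1 ⌊Y ^ 2 / (a : ℝ)⌋₊,
      ((a * b).totient : ℝ) ^ 2 / ((a * b : ℕ) : ℝ) ^ 3 =
      ∑ d ∈ a.divisors, ∑ e ∈ Finset.Icc 1 M, kap d e / (a * e) * harm (Y ^ 2 / a / e) := by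
    intro a ha
    have ha1 := (Finset.mem_Icc.1 ha).1
    have hle : ⌊Y ^ 2 / (a : ℝ)⌋₊ ≤ M := Nat.floor_le_floor
      (div_le_self (by positivity) (by exact_mod_cast ha1))
    calc _ = ∑ b ∈ Finset.Icc 1 ⌊Y ^ 2 / (a : ℝ)⌋₊, ∑ e ∈ b.divisors,
          ∑ d ∈ a.divisors, kap d e / (a * b) := by
          refine Finset.sum_congr rfl fun b hb => ?_
          have hb1 := (Finset.mem_Icc.1 hb).1
          have : ((a * b).totient : ℝ) ^ 2 / ((a * b : ℕ) : ℝ) ^ 3 =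
              ((a * b).totient : ℝ) ^ 2 / ((a * b : ℕ) : ℝ) ^ 2 / ((a : ℝ) * b) := by
            rw [div_div]; congr 1; push_cast; ring
          rw [this, totient_sq_eq_sum_kap (by omega) (by omega), Finset.sum_comm, Finset.sum_div]
          exact Finset.sum_congr rfl fun e _ => Finset.sum_div _ _ _
      _ = ∑ e ∈ Finset.Icc 1 M, ∑ d ∈ a.divisors, kap d e / (a * e) * harm (Y ^ 2 / a / e) := by
          rw [sum_Icc_divisors (fun e b => ∑ d ∈ a.divisors, kap d e / ((a : ℝ) * b)) hle]
          refine Finset.sum_congr rfl fun e he => ?_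
          rw [Finset.sum_comm]
          refine Finset.sum_congr rfl fun d _ => ?_
          rw [harm, Nat.floor_div_natCast (Y ^ 2 / (a : ℝ)) e, Finset.mul_sum]
          refine Finset.sum_congr rfl fun n _ => ?_
          push_cast; rw [div_mul_div_comm, mul_one, mul_assoc]
      _ = _ := Finset.sum_comm
  rw [Finset.sum_congr rfl hinner, sum_Icc_divisors (fun d a => ∑ e ∈ Finset.Icc 1 M,
    kap d e / ((a : ℝ) * e) * harm (Y ^ 2 / a / e)) hYM,
    tsum_eq_sum (s := Finset.Icc 1 M ×ˢ Finset.Icc 1 M), Finset.sum_product]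
  · refine Finset.sum_congr rfl fun d _ => ?_
    rw [Finset.sum_comm]
    refine Finset.sum_congr rfl fun e _ => ?_
    rw [inner2, Nat.floor_div_natCast, Finset.mul_sum]
    refine Finset.sum_congr rfl fun m _ => ?_
    rw [← mul_assoc]
    congr 1
    push_cast; rw [div_mul_div_comm, mul_one]; congr 1; ring
  · rintro ⟨d, e⟩ hde
    by_cases hd : d = 0
    · subst hd; simp
    by_cases he : e = 0
    · subst he; simp
    have hd' : (1 : ℝ) ≤ d := by exact_mod_cast Nat.one_le_iff_ne_zero.2 hd
    have he' : (1 : ℝ) ≤ e := by exact_mod_cast Nat.one_le_iff_ne_zero.2 he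
    have : inner2 Y d e = 0 := by
      simp only [Finset.mem_product, Finset.mem_Icc, not_and_or] at hde
      have hcase : M < d ∨ M < e := by omega
      rcases hcase with h | h
      · have : ⌊Y / (d : ℝ)⌋₊ = 0 := by
          rw [Nat.floor_div_natCast]; exact Nat.div_eq_of_lt (by omega)
        simp [inner2, this]
      · refine Finset.sum_eq_zero fun m hm => ?_
        have hm1 : (1 : ℝ) ≤ m := by exact_mod_cast (Finset.mem_Icc.1 hm).1
        rw [harm_of_lt_one, mul_zero]
        have h2 : Y ^ 2 < e := (Nat.floor_lt (by positivity)).1 h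
        rw [div_lt_one (by positivity)]
        refine lt_of_le_of_lt (div_le_self (by positivity) ?_) h2
        push_cast; exact one_le_mul_of_one_le_of_one_le hd' hm1
    simp [this]

/-! ### Expansions of harmonic sums -/

lemma harm_nonneg (t : ℝ) : 0 ≤ harm t := Finset.sum_nonneg fun _ _ => by positivity

lemma log_sub_log_floor {t : ℝ} (ht : 1 ≤ t) :
    0 < (⌊t⌋₊ : ℝ) ∧ 1 / (⌊t⌋₊ : ℝ) ≤ 2 / t ∧ Real.log ⌊t⌋₊ ≤ Real.log t ∧
      Real.log t ≤ Real.log (⌊t⌋₊ + 1) ∧ Real.log (⌊t⌋₊ + 1) - Real.log ⌊t⌋₊ ≤ 1 / ⌊t⌋₊ := by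
  have hN : (1 : ℝ) ≤ ⌊t⌋₊ := by exact_mod_cast Nat.le_floor (by simpa using ht)
  have hN0 : (0 : ℝ) < ⌊t⌋₊ := by linarith
  have h1 : (⌊t⌋₊ : ℝ) ≤ t := Nat.floor_le (by linarith)
  have h2 : t < ⌊t⌋₊ + 1 := Nat.lt_floor_add_one t
  refine ⟨hN0, ?_, Real.log_le_log hN0 h1, Real.log_le_log (by linarith) h2.le, ?_⟩
  · rw [div_le_div_iff₀ hN0 (by linarith)]; linarith
  · rw [← Real.log_div (by linarith) hN0.ne']
    have := Real.log_le_sub_one_of_pos (show 0 < ((⌊t⌋₊ : ℝ) + 1) / ⌊t⌋₊ by positivity)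
    have h3 : ((⌊t⌋₊ : ℝ) + 1) / ⌊t⌋₊ - 1 = 1 / ⌊t⌋₊ := by field_simp; ring
    linarith

local notation "γ" => Real.eulerMascheroniConstant

lemma abs_harm_sub_le_of_one_le {t : ℝ} (ht : 1 ≤ t) : |harm t - (Real.log t + γ)| ≤ 2 / t := by
  obtain ⟨h0, h1, h2, h3, h4⟩ := log_sub_log_floor ht
  have hh : harm t = (harmonic ⌊t⌋₊ : ℝ) := by
    rw [harm, harmonic_eq_sum_Icc]; push_cast
    exact Finset.sum_congr rfl fun m _ => by rw [one_div]
  have h5 := Real.eulerMascheroniSeq_lt_eulerMascheroniConstant ⌊t⌋₊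
  have h6 := Real.eulerMascheroniConstant_lt_eulerMascheroniSeq' ⌊t⌋₊
  rw [Real.eulerMascheroniSeq] at h5
  rw [Real.eulerMascheroniSeq', if_neg (by exact_mod_cast h0.ne')] at h6
  rw [hh, abs_le]
  constructor <;> linarith

lemma gamma_nonneg : 0 ≤ γ := by linarith [Real.one_half_lt_eulerMascheroniConstant]
lemma gamma_le_one : γ ≤ 1 := by linarith [Real.eulerMascheroniConstant_lt_two_thirds]

/-- For `0 < t < 1`, `|log t|` is at most `t^{-s}/s`. -/
lemma abs_log_le_of_lt_one {t s : ℝ} (ht : 0 < t) (ht1 : t < 1) (hs : 0 < s) :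
    |Real.log t| ≤ t ^ (-s) / s := by
  rw [abs_of_nonpos (Real.log_nonpos ht.le ht1.le), ← Real.log_inv]
  have := Real.log_le_rpow_div (inv_nonneg.2 ht.le) hs
  rwa [Real.inv_rpow ht.le, ← Real.rpow_neg ht.le] at this

/-- The expansion of the harmonic sum, uniform over all `t > 0`: below `1` the sum is empty and
`log t + γ` is itself absorbed in the error term. -/
lemma exists_abs_harm_sub_le {δ : ℝ} (hδ : 0 < δ) (hδ1 : δ ≤ 1) :
    ∃ C : ℝ, 0 < C ∧ ∀ t : ℝ, 0 < t → |harm t - (Real.log t + γ)| ≤ C * t ^ (-δ) := by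
  refine ⟨2 + 1 / δ, by positivity, fun t ht => ?_⟩
  have hp : 0 < t ^ (-δ) := by positivity
  rcases le_or_gt 1 t with h | h
  · refine (abs_harm_sub_le_of_one_le h).trans ?_
    have h1 : 1 / t ≤ t ^ (-δ) := by
      rw [one_div, ← Real.rpow_neg_one]
      exact Real.rpow_le_rpow_of_exponent_le h (by linarith)
    have h2 : 0 ≤ 1 / δ * t ^ (-δ) := by positivity
    have : 2 / t = 2 * (1 / t) := by ring
    rw [this]; linarith
  · have h1 := abs_log_le_of_lt_one ht h hδ
    have h2 : 1 ≤ t ^ (-δ) := Real.one_le_rpow_of_pos_of_le_one_of_nonpos ht h.le (by linarith)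
    rw [harm_of_lt_one h, zero_sub, abs_neg]
    have h3 := abs_add_le (Real.log t) γ
    rw [abs_of_nonneg gamma_nonneg] at h3
    have h4 : t ^ (-δ) / δ = 1 / δ * t ^ (-δ) := by ring
    linarith [gamma_le_one]

/-- `∑_{m ≤ N} (log m + 1)/m - ½ log² N - log N`. The summand `(log t + 1)/t` is decreasing
on `[1, ∞)`, which makes this sequence decreasing. -/
noncomputable def stielt (N : ℕ) : ℝ :=
  ∑ m ∈ Finset.Icc 1 N, (Real.log m + 1) / m - (Real.log N ^ 2 / 2 + Real.log N)

lemma log_add_one_div_antitone : AntitoneOn (fun t : ℝ => (Real.log t + 1) / t) (Set.Ici 1) := by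
  intro s hs t ht hst
  simp only [Set.mem_Ici] at hs ht
  have he : ∀ r : ℝ, 1 ≤ r → (Real.log r + 1) / r =
      Real.exp 1 * (Real.log (Real.exp 1 * r) / (Real.exp 1 * r)) := by
    intro r hr
    rw [Real.log_mul (Real.exp_pos 1).ne' (by linarith), Real.log_exp]
    field_simp; ring
  simp only [he s hs, he t ht]
  refine mul_le_mul_of_nonneg_left ?_ (Real.exp_pos 1).le
  refine Real.log_div_self_antitoneOn ?_ ?_ ?_
  · simpa using le_mul_of_one_le_right (Real.exp_pos 1).le hs
  · simpa using le_mul_of_one_le_right (Real.exp_pos 1).le ht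
  · exact mul_le_mul_of_nonneg_left hst (Real.exp_pos 1).le

/-- The mean value theorem for `½ log² t + log t`, whose derivative is `(log t + 1)/t`. -/
lemma log_increment_bounds {N : ℕ} (hN : 1 ≤ N) :
    (Real.log (N + 1 : ℕ) + 1) / (N + 1 : ℕ) ≤
      (Real.log (N + 1 : ℕ) ^ 2 / 2 + Real.log (N + 1 : ℕ)) - (Real.log N ^ 2 / 2 + Real.log N) ∧
    (Real.log (N + 1 : ℕ) ^ 2 / 2 + Real.log (N + 1 : ℕ)) - (Real.log N ^ 2 / 2 + Real.log N) ≤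
      (Real.log N + 1) / N := by
  have hN' : (1 : ℝ) ≤ N := by exact_mod_cast hN
  have hder : ∀ x : ℝ, 1 ≤ x → HasDerivAt (fun x => Real.log x ^ 2 / 2 + Real.log x)
      ((Real.log x + 1) / x) x := by
    intro x hx
    have h := Real.hasDerivAt_log (show x ≠ 0 by linarith)
    refine (((h.pow 2).div_const 2).add h).congr_deriv ?_
    field_simp
    simp
    ring
  obtain ⟨c, hc, hcd⟩ := exists_hasDerivAt_eq_slope (fun x => Real.log x ^ 2 / 2 + Real.log x)
    (fun x => (Real.log x + 1) / x) (show (N : ℝ) < (N + 1 : ℕ) by push_cast; linarith)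
    (fun x hx => (hder x (hN'.trans hx.1)).continuousAt.continuousWithinAt)
    (fun x hx => hder x (hN'.trans hx.1.le))
  have h1 : (((N + 1 : ℕ) : ℝ) - N) = 1 := by push_cast; ring
  rw [h1, div_one] at hcd
  rw [← hcd]
  have hc1 : 1 ≤ c := hN'.trans hc.1.le
  exact ⟨log_add_one_div_antitone hc1 (hc1.trans hc.2.le) hc.2.le,
    log_add_one_div_antitone hN' hc1 hc.1.le⟩

/-- The limit of `stielt`: the sequence decreases, while `stielt N` minus its last summand
increases. -/
lemma exists_stielt_limit : ∃ c : ℝ, ∀ N : ℕ, 1 ≤ N →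
    stielt N - (Real.log N + 1) / N ≤ c ∧ c ≤ stielt N := by
  have hstep : ∀ N : ℕ, stielt (N + 1) = stielt N + ((Real.log (N + 1 : ℕ) + 1) / (N + 1 : ℕ) -
      ((Real.log (N + 1 : ℕ) ^ 2 / 2 + Real.log (N + 1 : ℕ)) -
        (Real.log N ^ 2 / 2 + Real.log N))) := by
    intro N
    simp only [stielt]
    rw [Finset.sum_Icc_succ_top (by omega)]; ring
  have hanti : Antitone fun n : ℕ => stielt (n + 1) := antitone_nat_of_succ_le fun n => by
    have := (log_increment_bounds (Nat.succ_le_succ (Nat.zero_le n))).1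
    rw [hstep (n + 1)]; linarith
  have hmono : Monotone fun n : ℕ => stielt (n + 1) - (Real.log (n + 1 : ℕ) + 1) / (n + 1 : ℕ) :=
    monotone_nat_of_le_succ fun n => by
      have := (log_increment_bounds (Nat.succ_le_succ (Nat.zero_le n))).2
      rw [hstep (n + 1)]; linarith
  have hle : ∀ n k : ℕ, stielt (n + 1) - (Real.log (n + 1 : ℕ) + 1) / (n + 1 : ℕ) ≤
      stielt (k + 1) := by
    intro n k
    have h1 := hmono (le_max_left n k)
    have h2 := hanti (le_max_right n k)
    simp only at h1 h2
    have h3 : 0 ≤ (Real.log (max n k + 1 : ℕ) + 1) / (max n k + 1 : ℕ) := by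
      have := Real.log_natCast_nonneg (max n k + 1)
      positivity
    linarith
  refine ⟨⨆ n : ℕ, (stielt (n + 1) - (Real.log (n + 1 : ℕ) + 1) / (n + 1 : ℕ)), fun N hN => ?_⟩
  obtain ⟨n, rfl⟩ := Nat.exists_eq_add_of_le' hN
  refine ⟨le_ciSup (f := fun n : ℕ => stielt (n + 1) - (Real.log (n + 1 : ℕ) + 1) / (n + 1 : ℕ))
    ⟨stielt (0 + 1), ?_⟩ n, ciSup_le fun k => hle k n⟩
  rintro _ ⟨k, rfl⟩
  exact hle k 0

/-- The logarithmic Riesz mean `∑_{m ≤ u} log(u/m)/m`. -/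
noncomputable def harmLog (u : ℝ) : ℝ := ∑ m ∈ Finset.Icc 1 ⌊u⌋₊, 1 / (m : ℝ) * Real.log (u / m)

/-- The expansion of the logarithmic mean, uniform over all `u > 0`. The constant does not depend
on the exponent `δ`. -/
lemma exists_abs_harmLog_sub_le : ∃ c : ℝ, ∀ δ : ℝ, 0 < δ → δ < 1 → ∃ C : ℝ, 0 < C ∧
    ∀ u : ℝ, 0 < u →
      |harmLog u - (Real.log u ^ 2 / 2 + γ * Real.log u + c)| ≤ C * u ^ (-δ) := by
  obtain ⟨c, hc⟩ := exists_stielt_limit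
  refine ⟨γ - c, fun δ hδ hδ1 => ?_⟩
  have hB : 0 < 1 - δ := by linarith
  refine ⟨6 * (1 + 1 / (1 - δ)) + (2 / δ ^ 2 + 1 / δ + |γ - c|), by positivity, fun u hu => ?_⟩
  have hp : 0 < u ^ (-δ) := by positivity
  rcases le_or_gt 1 u with h | h
  · have hl0 : 0 ≤ Real.log u := Real.log_nonneg h
    obtain ⟨h0, h1, h2, h3, h4⟩ := log_sub_log_floor h
    obtain ⟨hc1, hc2⟩ := hc ⌊u⌋₊ (by exact_mod_cast h0)
    have hE := abs_harm_sub_le_of_one_le h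
    have hlN : 0 ≤ Real.log ⌊u⌋₊ := Real.log_natCast_nonneg _
    set N := ⌊u⌋₊ with hN
    have hdec : harmLog u = (Real.log u + 1) * harm u -
        (stielt N + (Real.log N ^ 2 / 2 + Real.log N)) := by
      rw [harmLog, harm, stielt, ← hN, Finset.mul_sum, sub_add_cancel, ← Finset.sum_sub_distrib]
      refine Finset.sum_congr rfl fun m hm => ?_
      have hm1 : (m : ℝ) ≠ 0 := by
        have := (Finset.mem_Icc.1 hm).1
        exact_mod_cast (by omega : m ≠ 0)
      rw [Real.log_div hu.ne' hm1]; ring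
    have hlead : Real.log u + 1 ≤ (1 + 1 / (1 - δ)) * u ^ (1 - δ) := by
      have a1 := Real.log_le_rpow_div hu.le hB
      have a2 : 1 ≤ u ^ (1 - δ) := Real.one_le_rpow h hB.le
      have : u ^ (1 - δ) / (1 - δ) = 1 / (1 - δ) * u ^ (1 - δ) := by ring
      linarith
    have hmain : |harmLog u - (Real.log u ^ 2 / 2 + γ * Real.log u + (γ - c))| ≤
        6 * ((Real.log u + 1) * (1 / u)) := by
      have hid : harmLog u - (Real.log u ^ 2 / 2 + γ * Real.log u + (γ - c)) =
          (Real.log u + 1) * (harm u - (Real.log u + γ)) - (stielt N - c) +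
          ((Real.log u ^ 2 - Real.log N ^ 2) / 2 + (Real.log u - Real.log N)) := by
        rw [hdec]; ring
      have hu2 : 2 / u = 2 * (1 / u) := by ring
      have b1 : |(Real.log u + 1) * (harm u - (Real.log u + γ))| ≤
          2 * ((Real.log u + 1) * (1 / u)) := by
        rw [abs_mul, abs_of_nonneg (by linarith : 0 ≤ Real.log u + 1)]
        calc _ ≤ (Real.log u + 1) * (2 / u) := mul_le_mul_of_nonneg_left hE (by linarith)
          _ = _ := by ring
      have b2 : stielt N - c ≤ 2 * ((Real.log u + 1) * (1 / u)) := by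
        calc stielt N - c ≤ (Real.log N + 1) * (1 / N) := by
              rw [mul_one_div]; linarith
          _ ≤ (Real.log u + 1) * (2 / u) := by
              apply mul_le_mul (by linarith) h1 (by positivity) (by linarith)
          _ = _ := by ring
      have hd : Real.log u - Real.log N ≤ 2 / u := by linarith
      have b3 : (Real.log u ^ 2 - Real.log N ^ 2) / 2 + (Real.log u - Real.log N) ≤
          2 * ((Real.log u + 1) * (1 / u)) := by
        calc _ = ((Real.log u + Real.log N) / 2 + 1) * (Real.log u - Real.log N) := by ring
          _ ≤ (Real.log u + 1) * (2 / u) :=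
              mul_le_mul (by linarith) hd (by linarith) (by linarith)
          _ = _ := by ring
      have b4 : 0 ≤ (Real.log u ^ 2 - Real.log N ^ 2) / 2 + (Real.log u - Real.log N) := by
        have : 0 ≤ ((Real.log u + Real.log N) / 2 + 1) * (Real.log u - Real.log N) :=
          mul_nonneg (by linarith) (by linarith)
        linarith
      rw [hid, abs_le]
      have := abs_le.1 b1
      constructor <;> linarith [this.1, this.2]
    refine hmain.trans ?_
    have hpow : u ^ (1 - δ) * (1 / u) = u ^ (-δ) := by
      rw [one_div, ← Real.rpow_neg_one, ← Real.rpow_add hu]; congr 1; ring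
    calc 6 * ((Real.log u + 1) * (1 / u)) ≤ 6 * ((1 + 1 / (1 - δ)) * u ^ (1 - δ) * (1 / u)) := by
          gcongr
      _ = 6 * (1 + 1 / (1 - δ)) * u ^ (-δ) := by rw [← hpow]; ring
      _ ≤ _ := by
          gcongr; exact le_add_of_nonneg_right (by positivity)
  · have h2 : 1 ≤ u ^ (-δ) := Real.one_le_rpow_of_pos_of_le_one_of_nonpos hu h.le (by linarith)
    have h1 := abs_log_le_of_lt_one hu h hδ
    have h3 := abs_log_le_of_lt_one hu h (half_pos hδ)
    have hz : harmLog u = 0 := by simp [harmLog, Nat.floor_eq_zero.2 h]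
    rw [hz, zero_sub, abs_neg]
    have h4 : Real.log u ^ 2 / 2 ≤ 2 / δ ^ 2 * u ^ (-δ) := by
      have : Real.log u ^ 2 ≤ (u ^ (-(δ / 2)) / (δ / 2)) ^ 2 := by
        rw [← sq_abs]; exact pow_le_pow_left₀ (abs_nonneg _) h3 2
      rw [div_pow, ← Real.rpow_natCast, ← Real.rpow_natCast, ← Real.rpow_mul hu.le] at this
      have e : -(δ / 2) * ((2 : ℕ) : ℝ) = -δ := by push_cast; ring
      rw [e] at this
      simp only [Real.rpow_natCast] at this
      calc Real.log u ^ 2 / 2 ≤ u ^ (-δ) / (δ / 2) ^ 2 / 2 := by linarith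
        _ = _ := by field_simp
    have h5 : |γ * Real.log u| ≤ 1 / δ * u ^ (-δ) := by
      rw [abs_mul, abs_of_nonneg gamma_nonneg]
      calc γ * |Real.log u| ≤ 1 * (u ^ (-δ) / δ) :=
            mul_le_mul gamma_le_one h1 (abs_nonneg _) zero_le_one
        _ = _ := by ring
    have h6 : |γ - c| ≤ |γ - c| * u ^ (-δ) := le_mul_of_one_le_right (abs_nonneg _) h2
    have h7 : 0 ≤ 6 * (1 + 1 / (1 - δ)) * u ^ (-δ) := by positivity
    calc _ ≤ |Real.log u ^ 2 / 2| + |γ * Real.log u| + |γ - c| := abs_add_three _ _ _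
      _ ≤ _ := by
        rw [abs_of_nonneg (by positivity : 0 ≤ Real.log u ^ 2 / 2)]
        linarith

/-! ### The inner sum -/

lemma log_div_add_gamma_le {η : ℝ} (hη : 0 < η) {Y : ℝ} (hY : 1 ≤ Y) {e : ℝ} (he : 1 ≤ e) :
    |Real.log (Y / e) + γ| ≤ (1 / η + 1) * (Y ^ η * e ^ η) := by
  have h1 : 0 ≤ Real.log Y := Real.log_nonneg hY
  have h2 : 0 ≤ Real.log e := Real.log_nonneg he
  have h3 := Real.log_le_rpow_div (show 0 ≤ Y * e by positivity) hη
  rw [Real.log_mul (by linarith) (by linarith), Real.mul_rpow (by linarith) (by linarith)] at h3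
  have h4 : 1 ≤ Y ^ η * e ^ η := one_le_mul_of_one_le_of_one_le
    (Real.one_le_rpow hY hη.le) (Real.one_le_rpow he hη.le)
  have h5 : (1 / η + 1) * (Y ^ η * e ^ η) = Y ^ η * e ^ η / η + Y ^ η * e ^ η := by ring
  rw [Real.log_div (by linarith) (by linarith), h5, abs_le]
  constructor <;> linarith [gamma_nonneg, gamma_le_one]

lemma harm_div_le {η : ℝ} (hη : 0 < η) {Y : ℝ} (hY : 1 ≤ Y) {d : ℝ} (hd : 1 ≤ d) :
    harm (Y / d) ≤ (1 / η + 3) * Y ^ η := by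
  have hp : 1 ≤ Y ^ η := Real.one_le_rpow hY hη.le
  rcases lt_or_ge (Y / d) 1 with h | h
  · rw [harm_of_lt_one h]; positivity
  · have h1 := (abs_le.1 (abs_harm_sub_le_of_one_le h)).2
    have h2 : 2 / (Y / d) ≤ 2 := div_le_self (by norm_num) h
    have h3 : Real.log (Y / d) ≤ Real.log Y :=
      Real.log_le_log (by linarith) (div_le_self (by linarith) hd)
    have h4 := Real.log_le_rpow_div (show 0 ≤ Y by linarith) hη
    have h5 : (1 / η + 3) * Y ^ η = Y ^ η / η + 3 * Y ^ η := by ring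
    linarith [gamma_le_one]

/-- Expansion of `inner2`, with an error weight in `d`, `e` against which `κ(d, e)/(de)` is
absolutely summable. -/
lemma exists_abs_inner2_sub_le : ∃ c : ℝ, ∀ η : ℝ, 0 < η → η ≤ 1 / 8 → ∃ C : ℝ, 0 < C ∧
    ∀ Y : ℝ, 1 ≤ Y → ∀ d e : ℕ, d ≠ 0 → e ≠ 0 →
      |inner2 Y d e - ((Real.log Y - Real.log e + γ) * (Real.log Y - Real.log d + γ) +
        (Real.log Y - Real.log d) ^ 2 / 2 + γ * (Real.log Y - Real.log d) + c)| ≤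
      C * Y ^ (-1 + 5 * η) * ((d : ℝ) ^ (1 - 4 * η) * (e : ℝ) ^ η +
        (e : ℝ) ^ (1 - 4 * η) * (d : ℝ) ^ η) := by
  obtain ⟨c, hc⟩ := exists_abs_harmLog_sub_le
  refine ⟨c, fun η hη hη8 => ?_⟩
  have hδ : 0 < 1 - 4 * η := by linarith
  obtain ⟨C2, hC2, h2⟩ := hc (1 - 4 * η) hδ (by linarith)
  obtain ⟨C1, hC1, h1⟩ := exists_abs_harm_sub_le hδ (by linarith)
  refine ⟨C1 * (1 / η + 3) + (1 / η + 1) * C1 + C2, by positivity, fun Y hY d e hd he => ?_⟩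
  have hd1 : (1 : ℝ) ≤ d := by exact_mod_cast Nat.one_le_iff_ne_zero.2 hd
  have he1 : (1 : ℝ) ≤ e := by exact_mod_cast Nat.one_le_iff_ne_zero.2 he
  have hY0 : 0 < Y := by linarith
  have hd0 : (0 : ℝ) < d := by linarith
  have he0 : (0 : ℝ) < e := by linarith
  have hu : 0 < Y / d := by positivity
  set δ := 1 - 4 * η with hδdef
  have hYη : 1 ≤ Y ^ η := Real.one_le_rpow hY hη.le
  have hdη : 1 ≤ (d : ℝ) ^ η := Real.one_le_rpow hd1 hη.le
  have heη : 1 ≤ (e : ℝ) ^ η := Real.one_le_rpow he1 hη.le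
  have hdiv : ∀ x : ℝ, 0 < x → (Y / x) ^ (-δ) = Y ^ (-δ) * x ^ δ := fun x hx => by
    rw [Real.div_rpow hY0.le hx.le, Real.rpow_neg hx.le, div_inv_eq_mul]
  have hYpow : Y ^ (-1 + 5 * η) = Y ^ η * Y ^ (-δ) := by
    rw [← Real.rpow_add hY0]; congr 1; rw [hδdef]; ring
  -- On the range of summation `m ≤ Y/d`, so each argument of `harm` is at least `Y/e`.
  have hsum : |inner2 Y d e - ((Real.log (Y / e) + γ) * harm (Y / d) + harmLog (Y / d))| ≤
      C1 * (Y / e) ^ (-δ) * harm (Y / d) := by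
    rw [inner2, harm, harmLog, Finset.mul_sum, Finset.mul_sum, ← Finset.sum_add_distrib,
      ← Finset.sum_sub_distrib]
    refine (Finset.abs_sum_le_sum_abs _ _).trans (Finset.sum_le_sum fun m hm => ?_)
    obtain ⟨hm1, hm2⟩ := Finset.mem_Icc.1 hm
    have hm0 : (0 : ℝ) < m := by exact_mod_cast hm1
    have hmu : (m : ℝ) ≤ Y / d := (Nat.le_floor_iff hu.le).1 hm2
    have hv : Y ^ 2 / ((d * m : ℕ) : ℝ) / e = (Y / e) * (Y / d / m) := by
      push_cast; field_simp
    have hlog : Real.log (Y ^ 2 / ((d * m : ℕ) : ℝ) / e) =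
        Real.log (Y / e) + Real.log (Y / d / m) := by
      rw [hv, Real.log_mul (by positivity) (by positivity)]
    have hvle : Y / e ≤ Y ^ 2 / ((d * m : ℕ) : ℝ) / e := by
      rw [hv]
      exact le_mul_of_one_le_right (by positivity) ((one_le_div hm0).2 hmu)
    have hv0 : 0 < Y / e := by positivity
    have hb := h1 (Y ^ 2 / ((d * m : ℕ) : ℝ) / e) (by linarith)
    have hb2 := Real.rpow_le_rpow_of_nonpos hv0 hvle (show -δ ≤ 0 by linarith)
    rw [hlog] at hb
    have hid : 1 / (m : ℝ) * harm (Y ^ 2 / ((d * m : ℕ) : ℝ) / e) -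
        ((Real.log (Y / e) + γ) * (1 / m) + 1 / m * Real.log (Y / d / m)) =
        1 / m * (harm (Y ^ 2 / ((d * m : ℕ) : ℝ) / e) -
          (Real.log (Y / e) + Real.log (Y / d / m) + γ)) := by ring
    rw [hid, abs_mul, abs_of_nonneg (by positivity : 0 ≤ 1 / (m : ℝ)), mul_comm]
    refine mul_le_mul_of_nonneg_right (hb.trans ?_) (by positivity)
    exact mul_le_mul_of_nonneg_left hb2 hC1.le
  have hlu : Real.log (Y / d) = Real.log Y - Real.log d := Real.log_div hY0.ne' hd0.ne'
  have hle : Real.log (Y / e) = Real.log Y - Real.log e := Real.log_div hY0.ne' he0.ne'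
  have hid : inner2 Y d e - ((Real.log Y - Real.log e + γ) * (Real.log Y - Real.log d + γ) +
        (Real.log Y - Real.log d) ^ 2 / 2 + γ * (Real.log Y - Real.log d) + c) =
      (inner2 Y d e - ((Real.log (Y / e) + γ) * harm (Y / d) + harmLog (Y / d))) +
      (Real.log (Y / e) + γ) * (harm (Y / d) - (Real.log (Y / d) + γ)) +
      (harmLog (Y / d) - (Real.log (Y / d) ^ 2 / 2 + γ * Real.log (Y / d) + c)) := by
    rw [hlu, hle]; ring
  have t1 : C1 * (Y / e) ^ (-δ) * harm (Y / d) ≤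
      C1 * (1 / η + 3) * (Y ^ (-1 + 5 * η) * ((e : ℝ) ^ δ * (d : ℝ) ^ η)) := by
    calc _ ≤ C1 * (Y / e) ^ (-δ) * ((1 / η + 3) * Y ^ η) :=
          mul_le_mul_of_nonneg_left (harm_div_le hη hY hd1) (by positivity)
      _ = C1 * (1 / η + 3) * (Y ^ (-1 + 5 * η) * ((e : ℝ) ^ δ * 1)) := by
          rw [hdiv e he0, hYpow]; ring
      _ ≤ _ := by gcongr
  have t2 : |(Real.log (Y / e) + γ) * (harm (Y / d) - (Real.log (Y / d) + γ))| ≤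
      (1 / η + 1) * C1 * (Y ^ (-1 + 5 * η) * ((d : ℝ) ^ δ * (e : ℝ) ^ η)) := by
    rw [abs_mul]
    calc _ ≤ ((1 / η + 1) * (Y ^ η * (e : ℝ) ^ η)) * (C1 * (Y / d) ^ (-δ)) :=
          mul_le_mul (log_div_add_gamma_le hη hY he1) (h1 _ hu) (abs_nonneg _) (by positivity)
      _ = _ := by rw [hdiv d hd0, hYpow]; ring
  have t3 : |harmLog (Y / d) - (Real.log (Y / d) ^ 2 / 2 + γ * Real.log (Y / d) + c)| ≤
      C2 * (Y ^ (-1 + 5 * η) * ((d : ℝ) ^ δ * (e : ℝ) ^ η)) := by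
    calc _ ≤ C2 * (Y / d) ^ (-δ) := h2 _ hu
      _ = C2 * (1 * Y ^ (-δ) * ((d : ℝ) ^ δ * 1)) := by rw [hdiv d hd0]; ring
      _ ≤ C2 * (Y ^ η * Y ^ (-δ) * ((d : ℝ) ^ δ * (e : ℝ) ^ η)) := by gcongr
      _ = _ := by rw [hYpow]
  rw [hid]
  refine (abs_add_three _ _ _).trans ?_
  have p1 : 0 ≤ Y ^ (-1 + 5 * η) * ((e : ℝ) ^ δ * (d : ℝ) ^ η) := by positivity
  have p2 : 0 ≤ Y ^ (-1 + 5 * η) * ((d : ℝ) ^ δ * (e : ℝ) ^ η) := by positivity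
  have q1 : 0 ≤ ((1 / η + 1) * C1 + C2) * (Y ^ (-1 + 5 * η) * ((e : ℝ) ^ δ * (d : ℝ) ^ η)) := by
    positivity
  have q2 : 0 ≤ C1 * (1 / η + 3) * (Y ^ (-1 + 5 * η) * ((d : ℝ) ^ δ * (e : ℝ) ^ η)) := by
    positivity
  linarith [hsum.trans t1]

/-! ### Summing over `(d, e)` -/

/-- The weight `κ(d, e)/(de)`, which vanishes when `d = 0` or `e = 0`. -/
noncomputable def wt (x : ℕ × ℕ) : ℝ := kap x.1 x.2 / ((x.1 : ℝ) * x.2)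

lemma wt_eq_zero {x : ℕ × ℕ} (h : x.1 = 0 ∨ x.2 = 0) : wt x = 0 := by
  rcases h with h | h <;> simp [wt, h]

lemma abs_wt (x : ℕ × ℕ) : |wt x| = |kap x.1 x.2| / ((x.1 : ℝ) * x.2) := by
  rw [wt, abs_div, abs_of_nonneg (show (0 : ℝ) ≤ (x.1 : ℝ) * x.2 by positivity)]

lemma summable_wt_mul {η : ℝ} (hη : 0 < η) (hη' : η ≤ 1 / 8) :
    Summable fun x : ℕ × ℕ => |wt x| * ((x.1 : ℝ) ^ (1 - 4 * η) * (x.2 : ℝ) ^ η +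
      (x.2 : ℝ) ^ (1 - 4 * η) * (x.1 : ℝ) ^ η) := by
  have h1 := summable_kap_weight hη hη'
  have h2 := (Equiv.prodComm ℕ ℕ).summable_iff.2 h1
  refine (h1.add h2).congr fun x => ?_
  have hk : kap x.2 x.1 = kap x.1 x.2 := by simp only [kap, mul_comm]
  simp only [Function.comp, Equiv.prodComm_apply, Prod.fst_swap, Prod.snd_swap]
  rw [abs_wt, hk, mul_comm (x.2 : ℝ) (x.1 : ℝ)]; ring

/-- Summability of `κ(d, e)/(de) · q(d, e)` when `q` grows at most like `d^{3/5} e^{1/10}`, which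
is the weight of `summable_kap_weight` at `η = 1/10`. -/
lemma summable_wt_mul_of_le (q : ℕ → ℕ → ℝ) {K : ℝ}
    (h : ∀ d e : ℕ, d ≠ 0 → e ≠ 0 →
      |q d e| ≤ K * (((d : ℝ) ^ (1 / 10 : ℝ)) ^ 6 * (e : ℝ) ^ (1 / 10 : ℝ))) :
    Summable fun x : ℕ × ℕ => wt x * q x.1 x.2 := by
  refine Summable.of_norm_bounded ((summable_kap_weight (η := 1 / 10) (by norm_num)
    (by norm_num)).mul_left K) fun x => ?_
  rw [Real.norm_eq_abs, abs_mul]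
  by_cases h0 : x.1 = 0 ∨ x.2 = 0
  · rw [wt_eq_zero h0, abs_zero, zero_mul]
    rcases h0 with h0 | h0 <;> simp [h0]
  · push Not at h0
    have := mul_le_mul_of_nonneg_left (h _ _ h0.1 h0.2) (abs_nonneg (wt x))
    refine this.trans (le_of_eq ?_)
    rw [abs_wt, ← Real.rpow_natCast, ← Real.rpow_mul (by positivity)]
    have : (1 / 10 : ℝ) * ((6 : ℕ) : ℝ) = 1 - 4 * (1 / 10) := by norm_num
    rw [this]; ring

lemma log_natCast_le_ten_mul {n : ℕ} (hn : n ≠ 0) :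
    0 ≤ Real.log n ∧ Real.log n ≤ 10 * (n : ℝ) ^ (1 / 10 : ℝ) ∧ 1 ≤ (n : ℝ) ^ (1 / 10 : ℝ) := by
  have h1 : (1 : ℝ) ≤ n := by exact_mod_cast Nat.one_le_iff_ne_zero.2 hn
  refine ⟨Real.log_nonneg h1, ?_, Real.one_le_rpow h1 (by norm_num)⟩
  have := Real.log_le_rpow_div (show (0 : ℝ) ≤ n by linarith) (show (0 : ℝ) < 1 / 10 by norm_num)
  linarith

/-- The coefficient of `log Y` in the expansion of `inner2 Y d e` is absolutely summable. -/
lemma summable_linear_coeff :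
    Summable fun x : ℕ × ℕ => wt x * (3 * γ - 2 * Real.log x.1 - Real.log x.2) := by
  refine summable_wt_mul_of_le (fun d e => 3 * γ - 2 * Real.log d - Real.log e) (K := 33)
    fun d e hd he => ?_
  obtain ⟨a1, a2, a3⟩ := log_natCast_le_ten_mul hd
  obtain ⟨b1, b2, b3⟩ := log_natCast_le_ten_mul he
  set x := (d : ℝ) ^ (1 / 10 : ℝ)
  set y := (e : ℝ) ^ (1 / 10 : ℝ)
  have hx : x ≤ x ^ 6 := le_self_pow₀ a3 (by norm_num)
  have hx1 : x ^ 6 ≤ x ^ 6 * y := le_mul_of_one_le_right (by positivity) b3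
  have hy : y ≤ x ^ 6 * y := le_mul_of_one_le_left (by linarith) (by linarith)
  rw [abs_le]
  constructor <;> linarith [gamma_nonneg, gamma_le_one]

/-- The constant term in the expansion of `inner2 Y d e` is absolutely summable; `c` is the
constant of `exists_abs_inner2_sub_le`. -/
lemma summable_constant_coeff (c : ℝ) :
    Summable fun x : ℕ × ℕ => wt x * ((γ - Real.log x.2) * (γ - Real.log x.1) +
      Real.log x.1 ^ 2 / 2 - γ * Real.log x.1 + c) := by
  refine summable_wt_mul_of_le (fun d e => (γ - Real.log e) * (γ - Real.log d) +
      Real.log d ^ 2 / 2 - γ * Real.log d + c) (K := 181 + |c|) fun d e hd he => ?_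
  obtain ⟨a1, a2, a3⟩ := log_natCast_le_ten_mul hd
  obtain ⟨b1, b2, b3⟩ := log_natCast_le_ten_mul he
  have hγ0 := gamma_nonneg
  have hγ1 := gamma_le_one
  set x := (d : ℝ) ^ (1 / 10 : ℝ)
  set y := (e : ℝ) ^ (1 / 10 : ℝ)
  have hx2 : x ^ 2 ≤ x ^ 6 := pow_le_pow_right₀ a3 (by norm_num)
  have hx : x ≤ x ^ 6 := le_self_pow₀ a3 (by norm_num)
  have hx1 : x ^ 6 ≤ x ^ 6 * y := le_mul_of_one_le_right (by positivity) b3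
  have hxy : x * y ≤ x ^ 6 * y := mul_le_mul_of_nonneg_right hx (by linarith)
  have s1 : |(γ - Real.log e) * (γ - Real.log d)| ≤ 121 * (x ^ 6 * y) := by
    rw [abs_mul]
    have u1 : |γ - Real.log e| ≤ 11 * y := by rw [abs_le]; constructor <;> linarith
    have u2 : |γ - Real.log d| ≤ 11 * x := by rw [abs_le]; constructor <;> linarith
    calc _ ≤ (11 * y) * (11 * x) := mul_le_mul u1 u2 (abs_nonneg _) (by linarith)
      _ = 121 * (x * y) := by ring
      _ ≤ _ := by linarith
  have s2 : Real.log d ^ 2 / 2 ≤ 50 * (x ^ 6 * y) := by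
    have : Real.log d ^ 2 ≤ (10 * x) ^ 2 := pow_le_pow_left₀ a1 a2 2
    rw [mul_pow] at this
    linarith
  have s2' : 0 ≤ Real.log d ^ 2 / 2 := by positivity
  have s3 : γ * Real.log d ≤ 10 * (x ^ 6 * y) := by
    have : γ * Real.log d ≤ 1 * Real.log d := mul_le_mul_of_nonneg_right hγ1 a1
    linarith
  have s3' : 0 ≤ γ * Real.log d := mul_nonneg hγ0 a1
  have s4 : |c| ≤ |c| * (x ^ 6 * y) := le_mul_of_one_le_right (abs_nonneg _) (by linarith)
  have s5 := abs_le.1 s1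
  have s6 := abs_le.1 (le_refl |c|)
  rw [abs_le]
  constructor <;> linarith [s5.1, s5.2, s6.1, s6.2]

theorem b1_asymptotic :
    ∃ c1 c2 : ℝ, ∀ ε : ℝ, 0 < ε → ∃ C : ℝ, 0 < C ∧ ∀ X : ℝ, 2 ≤ X →
      |b1 X - ((1 / 12) * C3 * (Real.log X) ^ 2 + c1 * Real.log X + c2)| ≤
        C * X ^ (-(1 : ℝ) / 3 + ε) := by
  obtain ⟨c, hc⟩ := exists_abs_inner2_sub_le
  have hs0 : HasSum wt C3 := by
    rw [← tsum_kap_div]; exact summable_kap_div.hasSum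
  have hs1 := summable_linear_coeff.hasSum
  have hs2 := (summable_constant_coeff c).hasSum
  set A1 := ∑' x : ℕ × ℕ, wt x * (3 * γ - 2 * Real.log x.1 - Real.log x.2)
  set A2 := ∑' x : ℕ × ℕ, wt x * ((γ - Real.log x.2) * (γ - Real.log x.1) +
      Real.log x.1 ^ 2 / 2 - γ * Real.log x.1 + c)
  refine ⟨A1 / 6, A2 / 2, fun ε hε => ?_⟩
  -- With `Y = X^{1/3}` the error `Y^{-1 + 5η}` is `X^{-1/3 + 5η/3}`, and `5η/3 ≤ ε`.
  set η := min (ε / 2) (1 / 8) with hηdef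
  have hη : 0 < η := lt_min (by linarith) (by norm_num)
  have hη8 : η ≤ 1 / 8 := min_le_right _ _
  have hηε : η ≤ ε / 2 := min_le_left _ _
  obtain ⟨C, hC, hbound⟩ := hc η hη hη8
  have hW := summable_wt_mul hη hη8
  set B := ∑' x : ℕ × ℕ, |wt x| * ((x.1 : ℝ) ^ (1 - 4 * η) * (x.2 : ℝ) ^ η +
      (x.2 : ℝ) ^ (1 - 4 * η) * (x.1 : ℝ) ^ η)
  have hB : 0 ≤ B := tsum_nonneg fun x => by positivity
  refine ⟨C * B + 1, by positivity, fun X hX => ?_⟩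
  set Y := X ^ ((1 : ℝ) / 3) with hYdef
  have hX0 : 0 < X := by linarith
  have hY : 1 ≤ Y := Real.one_le_rpow (by linarith) (by norm_num)
  have hY2 : X ^ ((2 : ℝ) / 3) = Y ^ 2 := by
    rw [hYdef, ← Real.rpow_natCast, ← Real.rpow_mul hX0.le]; norm_num
  have hlogY : Real.log Y = Real.log X / 3 := by rw [hYdef, Real.log_rpow hX0]; ring
  have hb1 : b1 X = (1 / 2) * ∑' x : ℕ × ℕ, wt x * inner2 Y x.1 x.2 := by
    rw [b1, hY2, ← hYdef, hyperbola_sum_eq hY]; rfl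
  set L := Real.log Y with hL
  set D : ℕ × ℕ → ℝ := fun x => wt x * inner2 Y x.1 x.2 - (wt x * (3 / 2 * L ^ 2) +
    wt x * (3 * γ - 2 * Real.log x.1 - Real.log x.2) * L +
    wt x * ((γ - Real.log x.2) * (γ - Real.log x.1) +
      Real.log x.1 ^ 2 / 2 - γ * Real.log x.1 + c)) with hD
  have hmain := ((hs0.mul_right (3 / 2 * L ^ 2)).add (hs1.mul_right L)).add hs2
  have hDle : ∀ x, ‖D x‖ ≤ C * Y ^ (-1 + 5 * η) * (|wt x| *
      ((x.1 : ℝ) ^ (1 - 4 * η) * (x.2 : ℝ) ^ η + (x.2 : ℝ) ^ (1 - 4 * η) * (x.1 : ℝ) ^ η)) := by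
    intro x
    by_cases h0 : x.1 = 0 ∨ x.2 = 0
    · simp [hD, wt_eq_zero h0]
    · push Not at h0
      have hb := mul_le_mul_of_nonneg_left (hbound Y hY x.1 x.2 h0.1 h0.2) (abs_nonneg (wt x))
      rw [← abs_mul] at hb
      have hDx : D x = wt x * (inner2 Y x.1 x.2 -
          ((Real.log Y - Real.log x.2 + γ) * (Real.log Y - Real.log x.1 + γ) +
            (Real.log Y - Real.log x.1) ^ 2 / 2 + γ * (Real.log Y - Real.log x.1) + c)) := by
        simp only [hD, hL]; ring
      rw [Real.norm_eq_abs, hDx]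
      exact hb.trans (le_of_eq (by ring))
  have hgs := hW.hasSum.mul_left (C * Y ^ (-1 + 5 * η))
  have hDs : Summable D := Summable.of_norm_bounded hgs.summable hDle
  have hDn : |∑' x, D x| ≤ C * Y ^ (-1 + 5 * η) * B := tsum_of_norm_bounded hgs hDle
  have hS : ∑' x : ℕ × ℕ, wt x * inner2 Y x.1 x.2 =
      ∑' x, D x + (C3 * (3 / 2 * L ^ 2) + A1 * L + A2) := by
    rw [← (hDs.hasSum.add hmain).tsum_eq]
    refine tsum_congr fun x => ?_
    simp only [hD]; ring
  have hpow : Y ^ (-1 + 5 * η) ≤ X ^ (-(1 : ℝ) / 3 + ε) := by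
    rw [hYdef, ← Real.rpow_mul hX0.le]
    exact Real.rpow_le_rpow_of_exponent_le (by linarith) (by linarith)
  have hfin : b1 X - ((1 / 12) * C3 * (Real.log X) ^ 2 + A1 / 6 * Real.log X + A2 / 2) =
      (1 / 2) * ∑' x, D x := by
    rw [hb1, hS, hlogY]; ring
  have hXp : 0 < X ^ (-(1 : ℝ) / 3 + ε) := by positivity
  rw [hfin, abs_mul, abs_of_pos (by norm_num : (0 : ℝ) < 1 / 2)]
  calc 1 / 2 * |∑' x, D x| ≤ |∑' x, D x| := by linarith [abs_nonneg (∑' x, D x)]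
    _ ≤ C * Y ^ (-1 + 5 * η) * B := hDn
    _ ≤ C * X ^ (-(1 : ℝ) / 3 + ε) * B := by gcongr
    _ ≤ _ := by linarith
end

section
/- Define, for real X ≥ 2 and sums over positive integers ℓ_1, ℓ_2: b_2(X) = Σ_{ℓ_1 ≤ X^{1/3}} Σ_{ℓ_2 ≤ X^{2/3}/ℓ_1} a_2(ℓ_1ℓ_2), b_3(X) = Σ_{ℓ_1 ≤ X^{1/3}} Σ_{ℓ_2 ≤ X^{2/3}/ℓ_1} a_3(ℓ_1ℓ_2), and E(X) = (X+1)^{2/3}·log(X+1)·Σ_{ℓ_1 ≤ X^{1/3}} Σ_{ℓ_2 ≤ X^{2/3}/ℓ_1} τ(ℓ_1ℓ_2)/φ(ℓ_1ℓ_2). Then there is an absolute constant C > 0 with b_2(X) ≤ C·(log X)² and b_3(X) ≤ C·(log X)² for all X ≥ 2, and for every ε > 0 there is C_ε > 0 with E(X) ≤ C_ε·X^{2/3+ε} for all X ≥ 2. -/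
/-!
Write `S q = sumLogP q` and `H = ∑_{n ≤ X} 1/n ≤ 1 + log X`. All three sums are bounded by squares of
one-variable sums over `n ≤ X`, because their summands are submultiplicative up to constants.

* For `b2` and `b3`: `φ(q)²/q³ ≤ 1/q`, so the summands are `O((1 + S(q)²)/q)`, and
  `S(mn) ≤ S(m) + S(n)` separates the variables. Since `log p/(p-1) ≤ 8 p^(-3/4)`, Cauchy–Schwarz
  gives `S(n)² ≤ 64 Z ∑_{d ∣ n} d^(-1/4)` with `Z = ∑ d^(-5/4)`. Writing `n = dm`
  (`sum_dirichlet_le`) yields `∑_{n ≤ X} S(n)²/n ≤ 64 Z² H`, so `b2` and `b3` are `O(H²)`.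
* For `Eb`: `n = ∑_{d ∣ n} φ(d) ≤ τ(n) φ(n)`, so `τ(n)/φ(n) ≤ τ(n)²/n`. Two applications of
  `sum_dirichlet_le` give `∑_{n ≤ X} τ(n)²/n ≤ H⁴`. Hence the double sum is at most `H⁸`, which is
  `O(X^δ)` for every `δ > 0`.
-/

open Filter

/-- The first Stieltjes constant `γ₁ = lim_{N→∞} (Σ_{n=1}^N (log n)/n − (log N)²/2)`. -/
noncomputable def gamma1 : ℝ :=
  limUnder atTop fun N : ℕ =>
    (∑ n ∈ Finset.Icc 1 N, Real.log n / n) - (Real.log N) ^ 2 / 2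

/-- `Σ_{p | q} (log p)/(p−1)`, the sum running over the primes dividing `q`. -/
noncomputable def sumLogP (q : ℕ) : ℝ :=
  ∑ p ∈ q.primeFactors, Real.log p / ((p : ℝ) - 1)

noncomputable def a2 (q : ℕ) : ℝ :=
  ((q.totient : ℝ) ^ 2 / (q : ℝ) ^ 3) *
    (3 * Real.eulerMascheroniConstant - 7 / 6 + (7 / 3) * sumLogP q)

noncomputable def a3 (q : ℕ) : ℝ :=
  ((q.totient : ℝ) ^ 2 / (q : ℝ) ^ 3) *
    (3 * Real.eulerMascheroniConstant ^ 2 - 3 * Real.eulerMascheroniConstant + 3 * gamma1 +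
      sumLogP q * (4 * Real.eulerMascheroniConstant - 3 + sumLogP q))

noncomputable def b2 (X : ℝ) : ℝ :=
  ∑ l1 ∈ Finset.Icc 1 ⌊X ^ ((1 : ℝ) / 3)⌋₊,
    ∑ l2 ∈ Finset.Icc 1 ⌊X ^ ((2 : ℝ) / 3) / (l1 : ℝ)⌋₊, a2 (l1 * l2)

noncomputable def b3 (X : ℝ) : ℝ :=
  ∑ l1 ∈ Finset.Icc 1 ⌊X ^ ((1 : ℝ) / 3)⌋₊,
    ∑ l2 ∈ Finset.Icc 1 ⌊X ^ ((2 : ℝ) / 3) / (l1 : ℝ)⌋₊, a3 (l1 * l2)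

noncomputable def Eb (X : ℝ) : ℝ :=
  (X + 1) ^ ((2 : ℝ) / 3) * Real.log (X + 1) *
    ∑ l1 ∈ Finset.Icc 1 ⌊X ^ ((1 : ℝ) / 3)⌋₊,
      ∑ l2 ∈ Finset.Icc 1 ⌊X ^ ((2 : ℝ) / 3) / (l1 : ℝ)⌋₊,
        (tauk 2 (l1 * l2) : ℝ) / ((l1 * l2).totient : ℝ)

/-! ### Separating the variables -/

/-- A truncated Dirichlet convolution is dominated by the product of the truncated sums. -/
lemma sum_dirichlet_le (N : ℕ) (u v f : ℕ → ℝ) (hu : ∀ n, 0 ≤ u n) (hv : ∀ n, 0 ≤ v n)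
    (hf : ∀ n, n ≠ 0 → f n ≤ ∑ x ∈ n.divisorsAntidiagonal, u x.1 * v x.2) :
    ∑ n ∈ Finset.Icc 1 N, f n / n ≤
      (∑ d ∈ Finset.Icc 1 N, u d / d) * ∑ m ∈ Finset.Icc 1 N, v m / m := by
  have h1 : ∑ n ∈ Finset.Icc 1 N, f n / n ≤ ∑ n ∈ Finset.Icc 1 N,
      ∑ x ∈ n.divisorsAntidiagonal, (u x.1 / x.1) * (v x.2 / x.2) := by
    refine Finset.sum_le_sum fun n hn => ?_
    have hn1 : n ≠ 0 := by have := (Finset.mem_Icc.1 hn).1; omega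
    calc f n / n ≤ (∑ x ∈ n.divisorsAntidiagonal, u x.1 * v x.2) / n := by
          gcongr; exact hf n hn1
      _ = _ := by
          rw [Finset.sum_div]
          refine Finset.sum_congr rfl fun x hx => ?_
          rw [← (Nat.mem_divisorsAntidiagonal.1 hx).1]
          push_cast
          rw [div_mul_div_comm]
  refine h1.trans ?_
  -- The factor pair determines `n`, and `n ≤ N` forces both factors to be at most `N`.
  rw [Finset.sum_mul_sum, ← Finset.sum_product', Finset.sum_sigma']
  have hinj : Set.InjOn (fun y : (_ : ℕ) × (ℕ × ℕ) => y.2)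
      ((Finset.Icc 1 N).sigma fun n => n.divisorsAntidiagonal) := by
    rintro ⟨n, x⟩ h ⟨n', x'⟩ h' he
    simp only [Finset.coe_sigma, Set.mem_sigma_iff, Finset.mem_coe,
      Nat.mem_divisorsAntidiagonal] at h h' he
    subst he
    obtain rfl : n = n' := h.2.1.symm.trans h'.2.1
    rfl
  rw [← Finset.sum_image (f := fun x : ℕ × ℕ => (u x.1 / x.1) * (v x.2 / x.2)) hinj]
  refine Finset.sum_le_sum_of_subset_of_nonneg ?_ fun x _ _ => ?_
  · intro x hx
    obtain ⟨⟨n, y⟩, h, rfl⟩ := Finset.mem_image.1 hx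
    simp only [Finset.mem_sigma, Finset.mem_Icc, Nat.mem_divisorsAntidiagonal] at h
    obtain ⟨⟨h1, h2⟩, h3, h4⟩ := h
    have ha : 0 < y.1 := Nat.pos_of_ne_zero fun h => by simp [h] at h3; omega
    have hb : 0 < y.2 := Nat.pos_of_ne_zero fun h => by simp [h] at h3; omega
    have := Nat.le_mul_of_pos_right y.1 hb
    have := Nat.le_mul_of_pos_left y.2 ha
    simp only [Finset.mem_product, Finset.mem_Icc]
    omega
  · have := hu x.1
    have := hv x.2
    positivity

lemma sum_inv_le {X : ℝ} (hX : 2 ≤ X) :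
    ∑ n ∈ Finset.Icc 1 ⌊X⌋₊, (1 : ℝ) / n ≤ 1 + Real.log X := by
  have h := harmonic_floor_le_one_add_log X (by linarith)
  rw [harmonic_eq_sum_Icc] at h
  push_cast at h
  simpa using h

/-- The double sums over the region `l1 ≤ X^(1/3)`, `l1 l2 ≤ X^(2/3)` are bounded by squares of sums
over `n ≤ X` once the summand separates. -/
lemma double_sum_le {X : ℝ} (hX : 2 ≤ X) (F : ℕ → ℝ) (u : ℕ → ℝ) (K : ℝ) (hK : 0 ≤ K)
    (hu : ∀ n, 0 ≤ u n)
    (hF : ∀ m n : ℕ, m ≠ 0 → n ≠ 0 → F (m * n) ≤ K * (u m * u n)) :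
    ∑ l1 ∈ Finset.Icc 1 ⌊X ^ ((1 : ℝ) / 3)⌋₊,
      ∑ l2 ∈ Finset.Icc 1 ⌊X ^ ((2 : ℝ) / 3) / (l1 : ℝ)⌋₊, F (l1 * l2) ≤
    K * (∑ n ∈ Finset.Icc 1 ⌊X⌋₊, u n) ^ 2 := by
  have hle : ∀ t : ℝ, t ≤ 1 → X ^ t ≤ X := fun t ht => by
    simpa using Real.rpow_le_rpow_of_exponent_le (by linarith : (1 : ℝ) ≤ X) ht
  calc _ ≤ ∑ l1 ∈ Finset.Icc 1 ⌊X ^ ((1 : ℝ) / 3)⌋₊, K * (u l1 * ∑ n ∈ Finset.Icc 1 ⌊X⌋₊, u n) := by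
        refine Finset.sum_le_sum fun m hm => ?_
        have hm1 : 1 ≤ m := (Finset.mem_Icc.1 hm).1
        calc _ ≤ ∑ n ∈ Finset.Icc 1 ⌊X ^ ((2 : ℝ) / 3) / (m : ℝ)⌋₊, K * (u m * u n) :=
              Finset.sum_le_sum fun n hn => hF m n (by omega)
                (by have := (Finset.mem_Icc.1 hn).1; omega)
          _ ≤ ∑ n ∈ Finset.Icc 1 ⌊X⌋₊, K * (u m * u n) := by
              refine Finset.sum_le_sum_of_subset_of_nonneg
                (Finset.Icc_subset_Icc_right (Nat.floor_mono ?_)) fun n _ _ =>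
                mul_nonneg hK (mul_nonneg (hu _) (hu _))
              refine (div_le_self (by positivity) (by exact_mod_cast hm1)).trans (hle _ (by norm_num))
          _ = _ := by rw [Finset.mul_sum, Finset.mul_sum]
    _ ≤ ∑ l1 ∈ Finset.Icc 1 ⌊X⌋₊, K * (u l1 * ∑ n ∈ Finset.Icc 1 ⌊X⌋₊, u n) := by
        refine Finset.sum_le_sum_of_subset_of_nonneg
          (Finset.Icc_subset_Icc_right (Nat.floor_mono (hle _ (by norm_num)))) fun n _ _ =>
          mul_nonneg hK (mul_nonneg (hu _) (Finset.sum_nonneg fun _ _ => hu _))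
    _ = _ := by rw [← Finset.mul_sum, ← Finset.sum_mul, sq]

/-! ### The sum over prime divisors, and `b2`, `b3` -/

lemma log_div_nonneg {p : ℕ} (hp : p.Prime) : 0 ≤ Real.log p / ((p : ℝ) - 1) := by
  have : (1 : ℝ) ≤ p := by exact_mod_cast hp.one_le
  exact div_nonneg (Real.log_nonneg this) (by linarith)

lemma sumLogP_nonneg (q : ℕ) : 0 ≤ sumLogP q :=
  Finset.sum_nonneg fun _ hp => log_div_nonneg (Nat.prime_of_mem_primeFactors hp)

lemma sumLogP_mul_le {m n : ℕ} (hm : m ≠ 0) (hn : n ≠ 0) :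
    sumLogP (m * n) ≤ sumLogP m + sumLogP n := by
  unfold sumLogP
  rw [Nat.primeFactors_mul hm hn, ← Finset.sum_union_inter]
  refine le_add_of_nonneg_right (Finset.sum_nonneg fun p hp => ?_)
  exact log_div_nonneg (Nat.prime_of_mem_primeFactors (Finset.mem_inter.1 hp).1)

lemma log_div_le {p : ℕ} (hp : p.Prime) :
    Real.log p / ((p : ℝ) - 1) ≤ 8 * ((p : ℝ) ^ (-(5 : ℝ) / 8) * (p : ℝ) ^ (-(1 : ℝ) / 8)) := by
  have h2 : (2 : ℝ) ≤ p := by exact_mod_cast hp.two_le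
  have h0 : (0 : ℝ) < p := by linarith
  have h := Real.log_le_rpow_div h0.le (by norm_num : (0 : ℝ) < 1 / 4)
  rw [← Real.rpow_add h0, div_le_iff₀ (by linarith)]
  have e : (p : ℝ) ^ ((1 : ℝ) / 4) = (p : ℝ) ^ (-(5 : ℝ) / 8 + -1 / 8) * p := by
    rw [← Real.rpow_add_one h0.ne']; norm_num
  rw [e] at h
  have : 0 ≤ (p : ℝ) ^ (-(5 : ℝ) / 8 + -1 / 8) := by positivity
  nlinarith [mul_nonneg this (by linarith : (0 : ℝ) ≤ p - 2)]

/-- The weight `d^(-1/4)` is chosen so that `∑ d^(-1/4)/d` converges. -/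
lemma sumLogP_sq_le (n : ℕ) (hn : n ≠ 0) :
    (sumLogP n) ^ 2 ≤ 64 * (∑' d : ℕ, (d : ℝ) ^ (-(5 : ℝ) / 4)) *
      ∑ d ∈ n.divisors, (d : ℝ) ^ (-(1 : ℝ) / 4) := by
  have hs : Summable fun d : ℕ => (d : ℝ) ^ (-(5 : ℝ) / 4) :=
    Real.summable_nat_rpow.2 (by norm_num)
  have hsq : ∀ (t : ℝ) (p : ℕ), ((p : ℝ) ^ t) ^ 2 = (p : ℝ) ^ (t * 2) := fun t p => by
    rw [← Real.rpow_mul_natCast (by positivity)]; norm_num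
  have h1 : sumLogP n ≤ 8 * ∑ p ∈ n.primeFactors,
      (p : ℝ) ^ (-(5 : ℝ) / 8) * (p : ℝ) ^ (-(1 : ℝ) / 8) := by
    rw [Finset.mul_sum]
    exact Finset.sum_le_sum fun p hp => log_div_le (Nat.prime_of_mem_primeFactors hp)
  -- Cauchy–Schwarz, splitting `p^(-3/4)` so that the first factor is a convergent sum over all `d`.
  have h2 := Finset.sum_mul_sq_le_sq_mul_sq n.primeFactors
    (fun p => (p : ℝ) ^ (-(5 : ℝ) / 8)) (fun p => (p : ℝ) ^ (-(1 : ℝ) / 8))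
  simp only [hsq] at h2
  norm_num at h2
  have h3 : ∑ p ∈ n.primeFactors, (p : ℝ) ^ (-(5 : ℝ) / 4) ≤
      ∑' d : ℕ, (d : ℝ) ^ (-(5 : ℝ) / 4) :=
    hs.sum_le_tsum _ fun _ _ => by positivity
  have h4 : ∑ p ∈ n.primeFactors, (p : ℝ) ^ (-(1 : ℝ) / 4) ≤
      ∑ d ∈ n.divisors, (d : ℝ) ^ (-(1 : ℝ) / 4) :=
    Finset.sum_le_sum_of_subset_of_nonneg
      (fun p hp => Nat.mem_divisors.2 ⟨Nat.dvd_of_mem_primeFactors hp, hn⟩)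
      fun _ _ _ => by positivity
  have h5 := mul_le_mul h3 h4 (Finset.sum_nonneg fun _ _ => by positivity)
    (tsum_nonneg fun _ => by positivity)
  have h6 := pow_le_pow_left₀ (sumLogP_nonneg n) h1 2
  norm_num at h5
  norm_num at h6
  norm_num
  nlinarith

/-- `1 + S(n)²` is bounded on logarithmic average. -/
lemma exists_sum_sumLogP_sq_le : ∃ K : ℝ, 0 ≤ K ∧ ∀ N : ℕ,
    ∑ n ∈ Finset.Icc 1 N, (1 + sumLogP n ^ 2) / n ≤ K * ∑ n ∈ Finset.Icc 1 N, (1 : ℝ) / n := by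
  set Z := ∑' d : ℕ, (d : ℝ) ^ (-(5 : ℝ) / 4) with hZ
  have hs : Summable fun d : ℕ => (d : ℝ) ^ (-(5 : ℝ) / 4) :=
    Real.summable_nat_rpow.2 (by norm_num)
  have hZ0 : 0 ≤ Z := tsum_nonneg fun _ => by positivity
  refine ⟨1 + 64 * Z * Z, by positivity, fun N => ?_⟩
  have h1 := sum_dirichlet_le N (fun d => 64 * Z * (d : ℝ) ^ (-(1 : ℝ) / 4)) (fun _ => 1)
    (fun n => sumLogP n ^ 2) (fun _ => by positivity) (fun _ => by norm_num) (fun n hn => by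
      refine (sumLogP_sq_le n hn).trans_eq ?_
      simp only [mul_one]
      rw [Nat.sum_divisorsAntidiagonal (fun d _ => 64 * Z * (d : ℝ) ^ (-(1 : ℝ) / 4)),
        Finset.mul_sum])
  have h2 : ∑ d ∈ Finset.Icc 1 N, 64 * Z * (d : ℝ) ^ (-(1 : ℝ) / 4) / d ≤ 64 * Z * Z := by
    calc _ = 64 * Z * ∑ d ∈ Finset.Icc 1 N, (d : ℝ) ^ (-(5 : ℝ) / 4) := by
          rw [Finset.mul_sum]
          refine Finset.sum_congr rfl fun d hd => ?_
          have : (d : ℝ) ≠ 0 := by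
            have := (Finset.mem_Icc.1 hd).1
            positivity
          rw [mul_div_assoc, ← Real.rpow_sub_one this]
          norm_num
      _ ≤ _ := by
          gcongr
          exact hs.sum_le_tsum _ fun _ _ => by positivity
  have h3 : 0 ≤ ∑ n ∈ Finset.Icc 1 N, (1 : ℝ) / n := Finset.sum_nonneg fun _ _ => by positivity
  simp only [add_div, Finset.sum_add_distrib]
  nlinarith [mul_le_mul_of_nonneg_right h2 h3]

/-- Any sum of the shape of `b2` or `b3`, with a summand that is `φ(q)²/q³` times a quadratic
polynomial in `S(q)`, is `O((log X)²)`. -/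
lemma exists_quadratic_bound (F : ℕ → ℝ) (a b c : ℝ)
    (hF : ∀ q, F q = ((q.totient : ℝ) ^ 2 / (q : ℝ) ^ 3) *
      (a + b * sumLogP q + c * sumLogP q ^ 2)) :
    ∃ C : ℝ, 0 ≤ C ∧ ∀ X : ℝ, 2 ≤ X →
      ∑ l1 ∈ Finset.Icc 1 ⌊X ^ ((1 : ℝ) / 3)⌋₊,
        ∑ l2 ∈ Finset.Icc 1 ⌊X ^ ((2 : ℝ) / 3) / (l1 : ℝ)⌋₊, F (l1 * l2) ≤
      C * (Real.log X) ^ 2 := by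
  obtain ⟨K, hK, h⟩ := exists_sum_sumLogP_sq_le
  set M := |a| + |b| + |c| with hM
  have hM0 : 0 ≤ M := by positivity
  refine ⟨2 * M * (K * 3) ^ 2, by positivity, fun X hX => ?_⟩
  have key := double_sum_le hX F (fun n => (1 + sumLogP n ^ 2) / n) (2 * M) (by positivity)
    (fun n => by positivity) (fun m n hm hn => by
      have hq : (0 : ℝ) < ((m * n : ℕ) : ℝ) := by
        exact_mod_cast Nat.pos_of_ne_zero (mul_ne_zero hm hn)
      have hS := sumLogP_nonneg (m * n)
      have hw : (((m * n).totient : ℝ) ^ 2 / ((m * n : ℕ) : ℝ) ^ 3) ≤ 1 / ((m * n : ℕ) : ℝ) := by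
        have ht : ((m * n).totient : ℝ) ≤ ((m * n : ℕ) : ℝ) := by exact_mod_cast Nat.totient_le _
        calc _ ≤ ((m * n : ℕ) : ℝ) ^ 2 / ((m * n : ℕ) : ℝ) ^ 3 := by gcongr
          _ = _ := by field_simp
      have hpoly : a + b * sumLogP (m * n) + c * sumLogP (m * n) ^ 2 ≤
          M * (1 + sumLogP (m * n) ^ 2) := by
        have h1 := mul_le_mul_of_nonneg_right (le_abs_self b) hS
        have h2 := mul_le_mul_of_nonneg_right (le_abs_self c) (sq_nonneg (sumLogP (m * n)))
        have h3 : sumLogP (m * n) ≤ 1 + sumLogP (m * n) ^ 2 := by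
          nlinarith [sq_nonneg (sumLogP (m * n) - 1)]
        have h4 := mul_le_mul_of_nonneg_left h3 (abs_nonneg b)
        nlinarith [le_abs_self a, mul_nonneg (abs_nonneg a) (sq_nonneg (sumLogP (m * n))),
          abs_nonneg c]
      have hsep : 1 + sumLogP (m * n) ^ 2 ≤
          2 * ((1 + sumLogP m ^ 2) * (1 + sumLogP n ^ 2)) := by
        have h1 := pow_le_pow_left₀ hS (sumLogP_mul_le hm hn) 2
        nlinarith [sq_nonneg (sumLogP m - sumLogP n), sq_nonneg (sumLogP m * sumLogP n)]
      rw [hF]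
      calc _ ≤ (((m * n).totient : ℝ) ^ 2 / ((m * n : ℕ) : ℝ) ^ 3) *
            (M * (1 + sumLogP (m * n) ^ 2)) := by gcongr
        _ ≤ 1 / ((m * n : ℕ) : ℝ) *
            (M * (2 * ((1 + sumLogP m ^ 2) * (1 + sumLogP n ^ 2)))) := by gcongr
        _ = _ := by
            push_cast
            field_simp)
  refine key.trans ?_
  rw [mul_assoc (2 * M), ← mul_pow]
  have hlog : 1 / 2 ≤ Real.log X :=
    (by linarith [Real.log_two_gt_d9] : (1 : ℝ) / 2 ≤ Real.log 2).trans
      (Real.log_le_log (by norm_num) hX)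
  have h0 : 0 ≤ ∑ n ∈ Finset.Icc 1 ⌊X⌋₊, (1 + sumLogP n ^ 2) / n :=
    Finset.sum_nonneg fun _ _ => by positivity
  gcongr
  refine (h _).trans ?_
  rw [mul_assoc]
  gcongr
  linarith [sum_inv_le hX]

/-! ### Divisor sums and `Eb` -/

lemma tauk_two_le (n : ℕ) : tauk 2 n ≤ n.divisors.card := by
  unfold tauk
  refine Finset.card_le_card_of_injOn (fun f => f 0) ?_ ?_
  · intro f hf
    simp only [Finset.coe_filter, Set.mem_ofPred_eq, Fintype.mem_piFinset] at hf
    exact hf.1 0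
  · intro f hf g hg hfg
    simp only [Finset.coe_filter, Set.mem_ofPred_eq, Fintype.mem_piFinset, Fin.prod_univ_two]
      at hf hg hfg
    have h0 : 0 < f 0 := Nat.pos_of_mem_divisors (hf.1 0)
    have h1 : f 1 = g 1 := by
      have := hf.2.trans hg.2.symm
      rw [← hfg] at this
      exact Nat.eq_of_mul_eq_mul_left h0 this
    ext i
    fin_cases i
    · exact hfg
    · exact h1

lemma card_divisors_mul_le (m n : ℕ) :
    (m * n).divisors.card ≤ m.divisors.card * n.divisors.card := by
  rw [Nat.divisors_mul]
  exact Finset.card_mul_le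

/-- Follows from `n = ∑_{d ∣ n} φ(d)`. -/
lemma le_card_divisors_mul_totient (n : ℕ) (hn : n ≠ 0) :
    n ≤ n.divisors.card * n.totient := by
  conv_lhs => rw [← Nat.sum_totient n]
  refine (Finset.sum_le_card_nsmul _ _ n.totient fun d hd => ?_).trans_eq (by simp)
  exact Nat.le_of_dvd (Nat.totient_pos.2 (Nat.pos_of_ne_zero hn))
    (Nat.totient_dvd_of_dvd (Nat.dvd_of_mem_divisors hd))

lemma sum_card_divisors_sq_le (N : ℕ) :
    ∑ n ∈ Finset.Icc 1 N, (n.divisors.card : ℝ) ^ 2 / n ≤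
      (∑ n ∈ Finset.Icc 1 N, (1 : ℝ) / n) ^ 4 := by
  have h1 := sum_dirichlet_le N (fun _ => 1) (fun _ => 1) (fun n => (n.divisors.card : ℝ))
    (fun _ => by norm_num) (fun _ => by norm_num) (fun n _ => by
      simp [← Nat.map_div_right_divisors])
  have h2 := sum_dirichlet_le N (fun n => (n.divisors.card : ℝ)) (fun n => (n.divisors.card : ℝ))
    (fun n => (n.divisors.card : ℝ) ^ 2)
    (fun _ => by positivity) (fun _ => by positivity) (fun n _ => by
      have : ∑ x ∈ n.divisorsAntidiagonal, (n.divisors.card : ℝ) = (n.divisors.card : ℝ) ^ 2 := by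
        simp [← Nat.map_div_right_divisors, sq]
      rw [← this]
      refine Finset.sum_le_sum fun x hx => ?_
      rw [← (Nat.mem_divisorsAntidiagonal.1 hx).1]
      exact_mod_cast card_divisors_mul_le _ _)
  have h0 : 0 ≤ ∑ n ∈ Finset.Icc 1 N, (n.divisors.card : ℝ) / n :=
    Finset.sum_nonneg fun _ _ => by positivity
  have h3 := mul_le_mul h1 h1 h0 (h0.trans h1)
  nlinarith

lemma sum_tauk_div_totient_le {X : ℝ} (hX : 2 ≤ X) :
    ∑ l1 ∈ Finset.Icc 1 ⌊X ^ ((1 : ℝ) / 3)⌋₊,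
      ∑ l2 ∈ Finset.Icc 1 ⌊X ^ ((2 : ℝ) / 3) / (l1 : ℝ)⌋₊,
        (tauk 2 (l1 * l2) : ℝ) / ((l1 * l2).totient : ℝ) ≤ (1 + Real.log X) ^ 8 := by
  have key := double_sum_le hX (fun q => (tauk 2 q : ℝ) / (q.totient : ℝ))
    (fun n => (n.divisors.card : ℝ) ^ 2 / n) 1 (by norm_num) (fun n => by positivity)
    (fun m n hm hn => by
      have hpt : ∀ n : ℕ, n ≠ 0 →
          (n.divisors.card : ℝ) / n.totient ≤ (n.divisors.card : ℝ) ^ 2 / n := fun n hn => by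
        have h1 : (0 : ℝ) < n.totient := by
          exact_mod_cast Nat.totient_pos.2 (Nat.pos_of_ne_zero hn)
        have h2 : (0 : ℝ) < n := by exact_mod_cast Nat.pos_of_ne_zero hn
        have h3 : (n : ℝ) ≤ n.divisors.card * n.totient := by
          exact_mod_cast le_card_divisors_mul_totient n hn
        rw [div_le_div_iff₀ h1 h2, sq, mul_assoc]
        gcongr
      have hm0 : (0 : ℝ) < m.totient := by
        exact_mod_cast Nat.totient_pos.2 (Nat.pos_of_ne_zero hm)
      have hn0 : (0 : ℝ) < n.totient := by
        exact_mod_cast Nat.totient_pos.2 (Nat.pos_of_ne_zero hn)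
      have h1 : (tauk 2 (m * n) : ℝ) ≤ m.divisors.card * n.divisors.card := by
        exact_mod_cast (tauk_two_le _).trans (card_divisors_mul_le m n)
      have h2 : (m.totient : ℝ) * n.totient ≤ (m * n).totient := by
        exact_mod_cast Nat.totient_super_multiplicative m n
      calc _ ≤ ((m.divisors.card : ℝ) * n.divisors.card) / (m.totient * n.totient) := by
            gcongr
        _ = ((m.divisors.card : ℝ) / m.totient) * (n.divisors.card / n.totient) := by
            rw [div_mul_div_comm]
        _ ≤ _ := by
            rw [one_mul]
            have := hpt m hm
            have := hpt n hn
            gcongr)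
  refine key.trans ?_
  have h0 : 0 ≤ ∑ n ∈ Finset.Icc 1 ⌊X⌋₊, (n.divisors.card : ℝ) ^ 2 / n :=
    Finset.sum_nonneg fun _ _ => by positivity
  have h1 : 0 ≤ ∑ n ∈ Finset.Icc 1 ⌊X⌋₊, (1 : ℝ) / n := Finset.sum_nonneg fun _ _ => by positivity
  calc _ ≤ ((1 + Real.log X) ^ 4) ^ 2 := by
        rw [one_mul]
        gcongr
        refine (sum_card_divisors_sq_le _).trans ?_
        gcongr
        exact sum_inv_le hX
    _ = _ := by ring

lemma Eb_le {X ε : ℝ} (hε : 0 < ε) (hX : 2 ≤ X) :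
    Eb X ≤ (2 ^ ((2 : ℝ) / 3) * 2 * 3 ^ 8 * (1 / (ε / 9)) ^ 9) * X ^ ((2 : ℝ) / 3 + ε) := by
  have hX0 : 0 < X := by linarith
  have hlog : 1 / 2 ≤ Real.log X :=
    (by linarith [Real.log_two_gt_d9] : (1 : ℝ) / 2 ≤ Real.log 2).trans
      (Real.log_le_log (by norm_num) hX)
  have h1 : (X + 1) ^ ((2 : ℝ) / 3) ≤ 2 ^ ((2 : ℝ) / 3) * X ^ ((2 : ℝ) / 3) := by
    rw [← Real.mul_rpow (by norm_num) hX0.le]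
    gcongr
    linarith
  have h2 : Real.log (X + 1) ≤ 2 * Real.log X := by
    have : Real.log (X + 1) ≤ Real.log (X ^ 2) := Real.log_le_log (by linarith) (by nlinarith)
    simpa [Real.log_pow] using this
  have h3 : Real.log X ≤ X ^ (ε / 9) / (ε / 9) := Real.log_le_rpow_div hX0.le (by positivity)
  have hl1 : 0 ≤ Real.log (X + 1) := Real.log_nonneg (by linarith)
  have hl0 : 0 ≤ Real.log X := by linarith
  calc Eb X ≤ (X + 1) ^ ((2 : ℝ) / 3) * Real.log (X + 1) * (1 + Real.log X) ^ 8 := by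
        unfold Eb
        gcongr
        exact sum_tauk_div_totient_le hX
    _ ≤ (2 ^ ((2 : ℝ) / 3) * X ^ ((2 : ℝ) / 3)) * (2 * Real.log X) * (3 * Real.log X) ^ 8 := by
        gcongr
        linarith
    _ = 2 ^ ((2 : ℝ) / 3) * 2 * 3 ^ 8 * X ^ ((2 : ℝ) / 3) * Real.log X ^ 9 := by ring
    _ ≤ 2 ^ ((2 : ℝ) / 3) * 2 * 3 ^ 8 * X ^ ((2 : ℝ) / 3) * (X ^ (ε / 9) / (ε / 9)) ^ 9 := by
        gcongr
    _ = _ := by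
        have e : (X ^ (ε / 9)) ^ 9 = X ^ ε := by
          rw [← Real.rpow_mul_natCast hX0.le]
          congr 1
          push_cast
          ring
        rw [Real.rpow_add hX0, ← e]
        ring

theorem b2_b3_E_bounds :
    (∃ C : ℝ, 0 < C ∧ ∀ X : ℝ, 2 ≤ X →
      b2 X ≤ C * (Real.log X) ^ 2 ∧ b3 X ≤ C * (Real.log X) ^ 2) ∧
    (∀ ε : ℝ, 0 < ε → ∃ C : ℝ, 0 < C ∧ ∀ X : ℝ, 2 ≤ X →
      Eb X ≤ C * X ^ ((2 : ℝ) / 3 + ε)) := by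
  obtain ⟨C2, h20, h2⟩ := exists_quadratic_bound a2 (3 * Real.eulerMascheroniConstant - 7 / 6)
    (7 / 3) 0 (fun q => by unfold a2; ring)
  obtain ⟨C3, h30, h3⟩ := exists_quadratic_bound a3
    (3 * Real.eulerMascheroniConstant ^ 2 - 3 * Real.eulerMascheroniConstant + 3 * gamma1)
    (4 * Real.eulerMascheroniConstant - 3) 1 (fun q => by unfold a3; ring)
  refine ⟨⟨C2 + C3 + 1, by positivity, fun X hX => ⟨?_, ?_⟩⟩, fun ε hε =>
    ⟨2 ^ ((2 : ℝ) / 3) * 2 * 3 ^ 8 * (1 / (ε / 9)) ^ 9, by positivity, fun X hX => Eb_le hε hX⟩⟩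
  · refine (h2 X hX).trans ?_
    gcongr
    linarith
  · refine (h3 X hX).trans ?_
    gcongr
    linarith
end

section
/- Define, for real X ≥ 16 and sums over positive integers: Σ_{21}(X) = Σ_{ℓ_1 ≤ X^{1/3}} Σ_{ℓ_2 ≤ X^{2/3}/ℓ_1} Σ_{n ≤ ℓ_1ℓ_2·X^{1/3} + 1, n ≡ 1 (mod ℓ_1ℓ_2)} τ_3(n) and Σ_{31}(X) = Σ_{ℓ_1 ≤ X^{1/3}} Σ_{ℓ_3 ≤ X^{1/3}} Σ_{n ≤ ℓ_1ℓ_3·X^{1/3} + 1, n ≡ 1 (mod ℓ_1ℓ_3)} τ_3(n). Then there is a constant C > 0 such that for all X ≥ 16, Σ_{21}(X) ≤ C·X·(log X)³·log log X and Σ_{31}(X) ≤ C·X·(log X)³·log log X. -/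
/-- `Σ₂₁(X) = Σ_{ℓ₁ ≤ X^{1/3}} Σ_{ℓ₂ ≤ X^{2/3}/ℓ₁} Σ_{n ≤ ℓ₁ℓ₂X^{1/3}+1, n ≡ 1 (ℓ₁ℓ₂)} τ₃(n)`. -/
noncomputable def Sigma21 (X : ℝ) : ℝ :=
  ∑ l1 ∈ Finset.Icc 1 ⌊X ^ ((1 : ℝ) / 3)⌋₊,
    ∑ l2 ∈ Finset.Icc 1 ⌊X ^ ((2 : ℝ) / 3) / (l1 : ℝ)⌋₊,
      ∑ n ∈ (Finset.Icc 1 ⌊((l1 * l2 : ℕ) : ℝ) * X ^ ((1 : ℝ) / 3) + 1⌋₊).filter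
          fun n => n % (l1 * l2) = 1 % (l1 * l2),
        (tauk 3 n : ℝ)

/-- `Σ₃₁(X) = Σ_{ℓ₁ ≤ X^{1/3}} Σ_{ℓ₃ ≤ X^{1/3}} Σ_{n ≤ ℓ₁ℓ₃X^{1/3}+1, n ≡ 1 (ℓ₁ℓ₃)} τ₃(n)`. -/
noncomputable def Sigma31 (X : ℝ) : ℝ :=
  ∑ l1 ∈ Finset.Icc 1 ⌊X ^ ((1 : ℝ) / 3)⌋₊,
    ∑ l3 ∈ Finset.Icc 1 ⌊X ^ ((1 : ℝ) / 3)⌋₊,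
      ∑ n ∈ (Finset.Icc 1 ⌊((l1 * l3 : ℕ) : ℝ) * X ^ ((1 : ℝ) / 3) + 1⌋₊).filter
          fun n => n % (l1 * l3) = 1 % (l1 * l3),
        (tauk 3 n : ℝ)

/-! ### Factorizations and the effect of prime factors on `τ₃` -/

lemma mem_tauk_set {k n : ℕ} (hn : n ≠ 0) (g : Fin k → ℕ) :
    g ∈ ((Fintype.piFinset fun _ : Fin k => n.divisors).filter fun f => ∏ i, f i = n) ↔
      ∏ i, g i = n := by
  simp only [Finset.mem_filter, Fintype.mem_piFinset, Nat.mem_divisors, and_iff_right_iff_imp]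
  rintro rfl i
  exact ⟨Finset.dvd_prod_of_mem g (Finset.mem_univ i), hn⟩

/-- Removing the prime `p` from one of the `k` factors of `p * n` that it divides leaves a
factorization of `n`. -/
lemma tauk_prime_mul_le (k : ℕ) {p n : ℕ} (hp : p.Prime) (hn : n ≠ 0) :
    tauk k (p * n) ≤ k * tauk k n := by
  classical
  have hpn : p * n ≠ 0 := mul_ne_zero hp.ne_zero hn
  have hsub : ((Fintype.piFinset fun _ : Fin k => (p * n).divisors).filter
      fun f => ∏ i, f i = p * n) ⊆ (Finset.univ : Finset (Fin k)).biUnion fun i =>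
        ((Fintype.piFinset fun _ : Fin k => n.divisors).filter fun f => ∏ i, f i = n).image
          fun f => Function.update f i (p * f i) := by
    intro g hg
    rw [mem_tauk_set hpn] at hg
    obtain ⟨i, -, hi⟩ := (hp.prime.dvd_finsetProd_iff g).1 (hg ▸ Dvd.intro n rfl)
    obtain ⟨c, hc⟩ := hi
    refine Finset.mem_biUnion.2 ⟨i, Finset.mem_univ i, Finset.mem_image.2
      ⟨Function.update g i c, ?_, ?_⟩⟩
    · rw [mem_tauk_set hn, Finset.prod_update_of_mem (Finset.mem_univ i)]
      rw [← Finset.mul_prod_erase Finset.univ g (Finset.mem_univ i), hc, mul_assoc,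
        ← Finset.sdiff_singleton_eq_erase] at hg
      exact Nat.eq_of_mul_eq_mul_left hp.pos hg
    · simp [← hc]
  unfold tauk
  calc _ ≤ _ := Finset.card_le_card hsub
    _ ≤ ∑ i : Fin k, _ := Finset.card_biUnion_le
    _ ≤ ∑ i : Fin k, _ := Finset.sum_le_sum fun i _ => Finset.card_image_le
    _ = _ := by simp

/-- If every prime factor of `e` is at least `p`, then `e` has at most `log e / log p` prime
factors, and each of them multiplies `τ₃` by at most `3`. -/
lemma exists_tauk_mul_le {p : ℕ} (d : ℕ) (hd : d ≠ 0) (e : ℕ) (he : e ≠ 0)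
    (h : ∀ q, q.Prime → q ∣ e → p ≤ q) :
    ∃ j : ℕ, tauk 3 (d * e) ≤ 3 ^ j * tauk 3 d ∧ p ^ j ≤ e := by
  induction e using induction_on_primes with
  | zero => exact absurd rfl he
  | one => exact ⟨0, by simp⟩
  | prime_mul q a hq ih =>
    have ha : a ≠ 0 := right_ne_zero_of_mul he
    obtain ⟨j, h1, h2⟩ := ih ha fun r hr hra => h r hr (Dvd.dvd.mul_left hra q)
    refine ⟨j + 1, ?_, ?_⟩
    · have := tauk_prime_mul_le 3 hq (mul_ne_zero hd ha)
      rw [show d * (q * a) = q * (d * a) by ring, pow_succ]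
      nlinarith
    · rw [pow_succ, mul_comm]
      exact Nat.mul_le_mul (h q hq (Dvd.intro a rfl)) h2

/-- The first part of the increasing list of prime factors of `n`, cut where its product would
exceed `z`. -/
lemma exists_initial_product (n : ℕ) (hn : n ≠ 0) (z : ℕ) (hz : 1 ≤ z) :
    ∃ d e : ℕ, n = d * e ∧ d ≤ z ∧ (∀ p q, p.Prime → q.Prime → p ∣ d → q ∣ e → p ≤ q) ∧
      (e = 1 ∨ z < d * e.minFac) := by
  classical
  let s := n.divisors.filter fun d => d ≤ z ∧
    ∀ p q, p.Prime → q.Prime → p ∣ d → q ∣ n / d → p ≤ q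
  have hs : s.Nonempty := ⟨1, by
    simp only [s, Finset.mem_filter, Nat.mem_divisors]
    refine ⟨⟨one_dvd _, hn⟩, hz, fun p q hp _ h1 => ?_⟩
    exact absurd (Nat.dvd_one.1 h1) hp.one_lt.ne'⟩
  obtain ⟨d, hd, hmax⟩ := s.exists_max_image id hs
  simp only [s, Finset.mem_filter, Nat.mem_divisors, id] at hd hmax
  obtain ⟨⟨⟨e, rfl⟩, -⟩, hdz, hpq⟩ := hd
  have hd0 : d ≠ 0 := left_ne_zero_of_mul hn
  have he0 : e ≠ 0 := right_ne_zero_of_mul hn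
  rw [Nat.mul_div_cancel_left e (Nat.pos_of_ne_zero hd0)] at hpq
  refine ⟨d, e, rfl, hdz, hpq, ?_⟩
  by_contra! hcon
  obtain ⟨he1, hle⟩ := hcon
  have hP := Nat.minFac_prime he1
  obtain ⟨c, hc⟩ := Nat.minFac_dvd e
  have hdiv : d * e / (d * e.minFac) = c := by
    conv_lhs => rw [hc, ← mul_assoc]
    rw [← hc]
    exact Nat.mul_div_cancel_left c (Nat.mul_pos (Nat.pos_of_ne_zero hd0) hP.pos)
  have hce : c ∣ e := ⟨e.minFac, by rw [mul_comm]; exact hc⟩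
  have := hmax (d * e.minFac) ⟨⟨Nat.mul_dvd_mul_left d (Nat.minFac_dvd e), hn⟩, hle, by
    intro p q hp hq h1 h2
    rw [hdiv] at h2
    have hqe := h2.trans hce
    rcases (hp.dvd_mul).1 h1 with h1 | h1
    · exact hpq p q hp hq h1 hqe
    · rw [(Nat.prime_dvd_prime_iff_eq hp hP).1 h1]
      exact Nat.minFac_le_of_dvd hq.two_le hqe⟩
  have h2 := hP.two_le
  have := Nat.pos_of_ne_zero hd0
  nlinarith

/-! ### The Möbius transform of a power -/

/-- The arithmetic function `n ↦ n ^ ε`, with value `0` at `0`. -/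
noncomputable def powFun (ε : ℝ) : ArithmeticFunction ℝ :=
  ⟨fun n => if n = 0 then 0 else (n : ℝ) ^ ε, by simp⟩

lemma powFun_apply (ε : ℝ) {n : ℕ} (hn : n ≠ 0) : powFun ε n = (n : ℝ) ^ ε := by
  simp [powFun, hn]

lemma powFun_nonneg (ε : ℝ) (n : ℕ) : 0 ≤ powFun ε n := by
  by_cases hn : n = 0
  · simp [hn]
  · rw [powFun_apply ε hn]; positivity

lemma powFun_isMultiplicative (ε : ℝ) : (powFun ε).IsMultiplicative := by
  rw [ArithmeticFunction.IsMultiplicative.iff_ne_zero]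
  refine ⟨by simp [powFun], fun {m n} hm hn _ => ?_⟩
  rw [powFun_apply _ hm, powFun_apply _ hn, powFun_apply _ (mul_ne_zero hm hn), Nat.cast_mul,
    Real.mul_rpow (by positivity) (by positivity)]

open ArithmeticFunction in
/-- The Möbius transform of `n ↦ n ^ ε`, so that `∑ d ∣ n, moebPow ε d = n ^ ε`. -/
noncomputable def moebPow (ε : ℝ) : ArithmeticFunction ℝ :=
  powFun ε * ((moebius : ArithmeticFunction ℤ) : ArithmeticFunction ℝ)

open ArithmeticFunction in
lemma moebPow_mul_zeta (ε : ℝ) :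
    moebPow ε * ((zeta : ArithmeticFunction ℕ) : ArithmeticFunction ℝ) = powFun ε := by
  rw [moebPow, mul_assoc, coe_moebius_mul_coe_zeta, mul_one]

lemma moebPow_isMultiplicative (ε : ℝ) : (moebPow ε).IsMultiplicative :=
  (powFun_isMultiplicative ε).mul ArithmeticFunction.isMultiplicative_moebius.intCast

lemma sum_moebPow (ε : ℝ) (n : ℕ) : ∑ d ∈ n.divisors, moebPow ε d = powFun ε n := by
  rw [← moebPow_mul_zeta, ArithmeticFunction.coe_mul_zeta_apply]

lemma moebPow_prime_pow_succ (ε : ℝ) {p : ℕ} (hp : p.Prime) (k : ℕ) :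
    moebPow ε (p ^ (k + 1)) = ((p : ℝ) ^ ε) ^ (k + 1) - ((p : ℝ) ^ ε) ^ k := by
  have h (k : ℕ) : ∑ i ∈ Finset.range (k + 1), moebPow ε (p ^ i) = ((p : ℝ) ^ ε) ^ k := by
    have := sum_moebPow ε (p ^ k)
    rw [Nat.sum_divisors_prime_pow hp, powFun_apply _ (pow_ne_zero _ hp.ne_zero)] at this
    rw [this, Nat.cast_pow, ← Real.rpow_natCast, ← Real.rpow_natCast,
      ← Real.rpow_mul (by positivity), ← Real.rpow_mul (by positivity), mul_comm]
  rw [← h (k + 1), ← h k, Finset.sum_range_succ _ (k + 1)]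
  ring

lemma moebPow_nonneg {ε : ℝ} (hε : 0 ≤ ε) (n : ℕ) : 0 ≤ moebPow ε n := by
  by_cases hn : n = 0
  · simp [hn]
  rw [(moebPow_isMultiplicative ε).multiplicative_factorization _ hn]
  refine Finset.prod_nonneg fun p hp => ?_
  have hp := Nat.prime_of_mem_primeFactors hp
  rcases n.factorization p with _ | k
  · simp [(moebPow_isMultiplicative ε).map_one]
  · change 0 ≤ moebPow ε (p ^ (k + 1))
    rw [moebPow_prime_pow_succ ε hp, sub_nonneg]
    exact pow_le_pow_right₀ (Real.one_le_rpow (by exact_mod_cast hp.one_le) hε) (by simp)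

/-! ### Sums over smooth numbers -/

open Classical in
/-- The positive integers up to `M` all of whose prime factors are below `N`. -/
noncomputable def smoothUpTo (M N : ℕ) : Finset ℕ :=
  (Finset.Icc 1 M).filter (· ∈ Nat.smoothNumbers N)

lemma mem_smoothUpTo {M N d : ℕ} :
    d ∈ smoothUpTo M N ↔ (1 ≤ d ∧ d ≤ M) ∧ d ∈ Nat.smoothNumbers N := by
  simp [smoothUpTo]

lemma smoothUpTo_dvd {M N d e : ℕ} (hd : d ∈ smoothUpTo M N) (h : e ∣ d) :
    e ∈ smoothUpTo M N := by
  rw [mem_smoothUpTo] at *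
  have := Nat.le_of_dvd hd.1.1 h
  exact ⟨⟨Nat.pos_of_dvd_of_pos h hd.1.1, this.trans hd.1.2⟩, Nat.mem_smoothNumbers_of_dvd hd.2 h⟩

/-- A truncated Euler product dominates the sum over smooth numbers. -/
lemma sum_smooth_le_prod {f : ℕ → ℝ} (h0 : ∀ n, 0 ≤ f n) (h1 : f 1 = 1)
    (hmul : ∀ {m n : ℕ}, Nat.Coprime m n → f (m * n) = f m * f n)
    (hsum : ∀ {p : ℕ}, p.Prime → Summable fun n : ℕ => f (p ^ n)) (M N : ℕ) :
    ∑ d ∈ smoothUpTo M N, f d ≤ ∏ p ∈ Nat.primesBelow N, ∑' n : ℕ, f (p ^ n) := by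
  classical
  obtain ⟨h2, h3⟩ := EulerProduct.summable_and_hasSum_smoothNumbers_prod_primesBelow_tsum h1 hmul
    (fun {p} hp => by simpa only [Real.norm_of_nonneg (h0 _)] using hsum hp) N
  rw [← h3.tsum_eq]
  have hs : Summable fun m : Nat.smoothNumbers N => f m := h3.summable
  have h4 := hs.sum_le_tsum ((smoothUpTo M N).attach.map
    ⟨fun d => (⟨d.1, (mem_smoothUpTo.1 d.2).2⟩ : Nat.smoothNumbers N), fun a b h => by
      exact Subtype.ext (congrArg (fun x : Nat.smoothNumbers N => (x : ℕ)) h)⟩) (fun i _ => h0 i)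
  rw [Finset.sum_map] at h4
  exact (Finset.sum_attach (smoothUpTo M N) f).symm.trans_le h4

/-- Sums of `f d / d` over a divisor-closed set are submultiplicative for Dirichlet convolution. -/
lemma sum_convolution_le {u v : ArithmeticFunction ℝ} (hu : ∀ n, 0 ≤ u n) (hv : ∀ n, 0 ≤ v n)
    (M N : ℕ) :
    ∑ d ∈ smoothUpTo M N, (u * v) d / d ≤
      (∑ d ∈ smoothUpTo M N, u d / d) * ∑ d ∈ smoothUpTo M N, v d / d := by
  rw [Finset.sum_mul_sum, ← Finset.sum_product']
  have h1 (d : ℕ) : (u * v) d / d =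
      ∑ x ∈ d.divisorsAntidiagonal, u x.1 / x.1 * (v x.2 / x.2) := by
    rw [ArithmeticFunction.mul_apply, Finset.sum_div]
    refine Finset.sum_congr rfl fun x hx => ?_
    rw [← (Nat.mem_divisorsAntidiagonal.1 hx).1, Nat.cast_mul, mul_div_mul_comm]
  simp_rw [h1]
  rw [← Finset.sum_biUnion]
  · refine Finset.sum_le_sum_of_subset_of_nonneg ?_ fun x _ _ => ?_
    · intro x hx
      obtain ⟨d, hd, hx⟩ := Finset.mem_biUnion.1 hx
      have hx := (Nat.mem_divisorsAntidiagonal.1 hx).1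
      exact Finset.mem_product.2 ⟨smoothUpTo_dvd hd ⟨_, hx.symm⟩,
        smoothUpTo_dvd hd ⟨x.1, by rw [mul_comm, hx]⟩⟩
    · exact mul_nonneg (div_nonneg (hu _) (by positivity)) (div_nonneg (hv _) (by positivity))
  · intro a _ b _ hab
    rw [Function.onFun, Finset.disjoint_left]
    intro x hx hx'
    exact hab ((Nat.mem_divisorsAntidiagonal.1 hx).1.symm.trans
      (Nat.mem_divisorsAntidiagonal.1 hx').1)

/-- An upper bound of Mertens type, read off from the logarithm of `N!`. -/
lemma sum_log_div_le (N : ℕ) :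
    ∑ p ∈ Nat.primesBelow N, Real.log p / p ≤ 2 * Real.log N := by
  rcases Nat.eq_zero_or_pos N with rfl | hN
  · simp [Nat.primesBelow]
  have h1 : ∑ n ∈ Finset.Ioc 0 N, ArithmeticFunction.vonMangoldt n * ((N / n : ℕ) : ℝ) ≤
      N * Real.log N := by
    rw [← ArithmeticFunction.sum_Ioc_mul_zeta_eq_sum, ArithmeticFunction.vonMangoldt_mul_zeta]
    calc _ ≤ ∑ n ∈ Finset.Ioc 0 N, Real.log N := Finset.sum_le_sum fun n hn => by
          rw [Finset.mem_Ioc] at hn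
          rw [ArithmeticFunction.log_apply]
          exact Real.log_le_log (by exact_mod_cast hn.1) (by exact_mod_cast hn.2)
      _ = _ := by simp
  have h2 : ∑ p ∈ Nat.primesBelow N, Real.log p / p * (N / 2 : ℝ) ≤
      ∑ n ∈ Finset.Ioc 0 N, ArithmeticFunction.vonMangoldt n * ((N / n : ℕ) : ℝ) := by
    refine (Finset.sum_le_sum fun p hp => ?_).trans
      (Finset.sum_le_sum_of_subset_of_nonneg (s := Nat.primesBelow N) ?_ fun n _ _ => ?_)
    · have hpp := Nat.prime_of_mem_primesBelow hp
      have hpN := Nat.lt_of_mem_primesBelow hp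
      rw [ArithmeticFunction.vonMangoldt_apply_prime hpp, div_mul_eq_mul_div, mul_div_assoc]
      refine mul_le_mul_of_nonneg_left ?_ (Real.log_natCast_nonneg p)
      have hp0 : (0 : ℝ) < p := by exact_mod_cast hpp.pos
      have h3 : N < p * (N / p + 1) := by
        have := Nat.div_add_mod N p
        have := Nat.mod_lt N hpp.pos
        rw [mul_add]; lia
      have h4 : 1 ≤ N / p := Nat.div_pos hpN.le hpp.pos
      have h3' : (N : ℝ) < p * ((N / p : ℕ) + 1) := by exact_mod_cast h3
      have h4' : (1 : ℝ) ≤ (N / p : ℕ) := by exact_mod_cast h4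
      rw [div_le_iff₀ hp0]
      nlinarith
    · intro p hp
      have := Nat.lt_of_mem_primesBelow hp
      have := (Nat.prime_of_mem_primesBelow hp).pos
      rw [Finset.mem_Ioc]; lia
    · exact mul_nonneg ArithmeticFunction.vonMangoldt_nonneg (by positivity)
  rw [← Finset.sum_mul] at h2
  have hN' : (0 : ℝ) < N := by exact_mod_cast hN
  have := h2.trans h1
  nlinarith

/-- The truncated Euler product over `p < N`, whose factors are `1 + O(ε log p / p)` as long as
`ε log N` stays bounded, is `O(1)` by the Mertens bound. -/
lemma sum_moebPow_div_le {A ε : ℝ} (h0 : 0 ≤ ε) (h1 : ε ≤ 1 / 2) (M N : ℕ)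
    (hA : ε * Real.log N ≤ A) :
    ∑ d ∈ smoothUpTo M N, moebPow ε d / d ≤ Real.exp (8 * A * Real.exp A) := by
  have hlogN : 0 ≤ Real.log N := Real.log_natCast_nonneg N
  have hpow {p : ℕ} (hp : p.Prime) (k : ℕ) : moebPow ε (p ^ (k + 1)) / ((p ^ (k + 1) : ℕ) : ℝ) =
      ((p : ℝ) ^ ε - 1) / p * ((p : ℝ) ^ ε / p) ^ k := by
    have hp0 : (p : ℝ) ≠ 0 := by exact_mod_cast hp.ne_zero
    rw [moebPow_prime_pow_succ ε hp, Nat.cast_pow, div_pow, pow_succ, pow_succ (p : ℝ)]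
    field_simp
  have hy {p : ℕ} (hp : p.Prime) : (p : ℝ) ^ ε / p ≤ 3 / 4 := by
    have hp2 : (2 : ℝ) ≤ p := by exact_mod_cast hp.two_le
    have h2 : ((p : ℝ) ^ ε) ^ 2 ≤ p := by
      rw [← Real.rpow_natCast, ← Real.rpow_mul (by positivity)]
      calc (p : ℝ) ^ (ε * (2 : ℕ)) ≤ (p : ℝ) ^ (1 : ℝ) :=
            Real.rpow_le_rpow_of_exponent_le (by linarith) (by push_cast; linarith)
        _ = p := Real.rpow_one _
    have h3 : 0 < (p : ℝ) ^ ε := by positivity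
    rw [div_le_iff₀ (by positivity)]
    nlinarith
  have hgeo {p : ℕ} (hp : p.Prime) : HasSum
      (fun k : ℕ => moebPow ε (p ^ k) / ((p ^ k : ℕ) : ℝ))
      (1 + ((p : ℝ) ^ ε - 1) / p * (1 - (p : ℝ) ^ ε / p)⁻¹) := by
    have h3 : 0 ≤ (p : ℝ) ^ ε / p := by positivity
    have h4 := (hasSum_geometric_of_lt_one h3 ((hy hp).trans_lt (by norm_num))).mul_left
      (((p : ℝ) ^ ε - 1) / p)
    simp_rw [← hpow hp] at h4
    have h5 := (hasSum_nat_add_iff (f := fun k : ℕ => moebPow ε (p ^ k) / ((p ^ k : ℕ) : ℝ)) 1).1 h4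
    simpa [(moebPow_isMultiplicative ε).map_one, add_comm] using h5
  refine (sum_smooth_le_prod (f := fun d => moebPow ε d / d)
    (fun n => div_nonneg (moebPow_nonneg h0 n) (by positivity))
    (by simp [(moebPow_isMultiplicative ε).map_one]) (fun {m n} hmn => ?_)
    (fun {p} hp => (hgeo hp).summable) M N).trans ?_
  · rw [(moebPow_isMultiplicative ε).map_mul_of_coprime hmn, Nat.cast_mul, mul_div_mul_comm]
  calc _ ≤ ∏ p ∈ Nat.primesBelow N, Real.exp (4 * Real.exp A * ε * (Real.log p / p)) := by
        refine Finset.prod_le_prod (fun p _ => tsum_nonneg fun n =>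
          div_nonneg (moebPow_nonneg h0 _) (by positivity)) fun p hp => ?_
        have hpp := Nat.prime_of_mem_primesBelow hp
        have hpN := Nat.lt_of_mem_primesBelow hp
        have hp0 : (0 : ℝ) < p := by exact_mod_cast hpp.pos
        have hlogp : 0 ≤ Real.log p := Real.log_natCast_nonneg p
        rw [(hgeo hpp).tsum_eq]
        refine le_trans ?_ (Real.add_one_le_exp _)
        rw [add_comm]
        refine add_le_add ?_ le_rfl
        -- with `x = ε log p ≤ A`, the numerator is `exp x - 1 ≤ x exp x`
        have hx : ε * Real.log p ≤ A := le_trans (by gcongr) hA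
        have hx0 : 0 ≤ ε * Real.log p := by positivity
        have hb : (p : ℝ) ^ ε = Real.exp (ε * Real.log p) := by
          rw [Real.rpow_def_of_pos hp0, mul_comm]
        have h6 : (p : ℝ) ^ ε - 1 ≤ ε * Real.log p * Real.exp A := by
          have h7 := Real.add_one_le_exp (-(ε * Real.log p))
          have h8 : Real.exp (ε * Real.log p) * Real.exp (-(ε * Real.log p)) = 1 := by
            rw [← Real.exp_add]; simp
          have h9 := Real.exp_le_exp.2 hx
          rw [hb]
          have := Real.exp_pos (ε * Real.log p)
          nlinarith
        have h10 : (1 - (p : ℝ) ^ ε / p)⁻¹ ≤ 4 := by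
          rw [inv_le_comm₀ (by linarith [hy hpp]) (by norm_num)]
          linarith [hy hpp]
        calc ((p : ℝ) ^ ε - 1) / p * (1 - (p : ℝ) ^ ε / p)⁻¹
            ≤ (ε * Real.log p * Real.exp A) / p * 4 := by
              have : 0 ≤ 1 - (p : ℝ) ^ ε / p := by linarith [hy hpp]
              gcongr
          _ = _ := by ring
    _ = Real.exp (4 * Real.exp A * ε * ∑ p ∈ Nat.primesBelow N, Real.log p / p) := by
        rw [← Real.exp_sum, Finset.mul_sum]
    _ ≤ _ := by
        have h2 := sum_log_div_le N
        have h3 := Real.exp_pos A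
        rw [Real.exp_le_exp]
        calc _ ≤ 4 * Real.exp A * ε * (2 * Real.log N) := by gcongr
          _ = 8 * (ε * Real.log N) * Real.exp A := by ring
          _ ≤ _ := by gcongr

lemma sum_inv_smooth_le (M N : ℕ) :
    ∑ d ∈ smoothUpTo M N, ((ArithmeticFunction.zeta : ArithmeticFunction ℕ) :
      ArithmeticFunction ℝ) d / d ≤ 1 + Real.log M := by
  have h := harmonic_le_one_add_log M
  rw [harmonic_eq_sum_Icc] at h
  refine le_trans ?_ h
  push_cast
  refine (Finset.sum_le_sum fun d hd => ?_).trans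
    (Finset.sum_le_sum_of_subset_of_nonneg (Finset.filter_subset _ _) fun d _ _ => by positivity)
  have := (mem_smoothUpTo.1 hd).1.1
  rw [ArithmeticFunction.natCoe_apply, ArithmeticFunction.zeta_apply_ne (by lia)]
  simp

/-! ### The Möbius transform of `τ₃(n) n ^ ε` -/

/-- The Möbius transform of `n ↦ τ₃(n) n ^ ε`, which is the threefold convolution of `n ↦ n ^ ε`.
Two of its factors are `ζ` and the others have bounded sums (`sum_moebPow_div_le`), so its
logarithmic sum over smooth numbers has size `(log x) ^ 2` when `ε` is small enough, one logarithm
less than that of `τ₃`. -/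
noncomputable def weight (ε : ℝ) : ArithmeticFunction ℝ :=
  moebPow ε * moebPow ε * moebPow ε *
    (((ArithmeticFunction.zeta : ArithmeticFunction ℕ) : ArithmeticFunction ℝ) *
      ((ArithmeticFunction.zeta : ArithmeticFunction ℕ) : ArithmeticFunction ℝ))

lemma mul_apply_nonneg {u v : ArithmeticFunction ℝ} (hu : ∀ n, 0 ≤ u n) (hv : ∀ n, 0 ≤ v n)
    (n : ℕ) : 0 ≤ (u * v) n := by
  rw [ArithmeticFunction.mul_apply]
  exact Finset.sum_nonneg fun x _ => mul_nonneg (hu _) (hv _)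

lemma zeta_real_nonneg (n : ℕ) :
    0 ≤ ((ArithmeticFunction.zeta : ArithmeticFunction ℕ) : ArithmeticFunction ℝ) n := by
  rw [ArithmeticFunction.natCoe_apply]; positivity

lemma weight_nonneg {ε : ℝ} (h0 : 0 ≤ ε) (n : ℕ) : 0 ≤ weight ε n :=
  mul_apply_nonneg (mul_apply_nonneg (mul_apply_nonneg (moebPow_nonneg h0) (moebPow_nonneg h0))
    (moebPow_nonneg h0)) (mul_apply_nonneg zeta_real_nonneg zeta_real_nonneg) n

lemma sum_weight_div_le {A ε : ℝ} (h0 : 0 ≤ ε) (h1 : ε ≤ 1 / 2) (M N : ℕ)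
    (hA : ε * Real.log N ≤ A) :
    ∑ d ∈ smoothUpTo M N, weight ε d / d ≤
      Real.exp (8 * A * Real.exp A) ^ 3 * (1 + Real.log M) ^ 2 := by
  have hm := moebPow_nonneg h0
  have hmm := mul_apply_nonneg hm hm
  have hs {u : ArithmeticFunction ℝ} (hu : ∀ n, 0 ≤ u n) :
      0 ≤ ∑ d ∈ smoothUpTo M N, u d / d :=
    Finset.sum_nonneg fun d _ => div_nonneg (hu d) (by positivity)
  have hH := sum_moebPow_div_le h0 h1 M N hA
  have hZ := sum_inv_smooth_le M N
  have e1 := hs hm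
  have e2 := hs zeta_real_nonneg
  refine (sum_convolution_le (mul_apply_nonneg hmm hm)
    (mul_apply_nonneg zeta_real_nonneg zeta_real_nonneg) M N).trans ?_
  refine mul_le_mul ?_ ?_ (hs (mul_apply_nonneg zeta_real_nonneg zeta_real_nonneg))
    (by positivity)
  · refine (sum_convolution_le hmm hm M N).trans ?_
    rw [pow_succ]
    refine mul_le_mul ?_ hH e1 (by positivity)
    refine (sum_convolution_le hm hm M N).trans ?_
    rw [pow_two]
    exact mul_le_mul hH hH e1 (by positivity)
  · refine (sum_convolution_le zeta_real_nonneg zeta_real_nonneg M N).trans ?_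
    rw [pow_two]
    exact mul_le_mul hZ hZ e2 (e2.trans hZ)

lemma tauk_three_le {n : ℕ} (hn : n ≠ 0) :
    tauk 3 n ≤ ∑ x ∈ n.divisorsAntidiagonal, x.1.divisorsAntidiagonal.card := by
  rw [← Finset.card_sigma]
  refine Finset.card_le_card_of_injOn (fun f => ⟨(f 0 * f 1, f 2), (f 0, f 1)⟩) ?_ ?_
  · intro f hf
    have hf := (mem_tauk_set hn f).1 hf
    rw [Fin.prod_univ_three] at hf
    simp only [Finset.coe_sigma, Set.mem_sigma_iff, Finset.mem_coe, Nat.mem_divisorsAntidiagonal]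
    exact ⟨⟨hf, hn⟩, trivial, left_ne_zero_of_mul (hf ▸ hn)⟩
  · intro f _ g _ h
    simp only [Sigma.mk.injEq, Prod.mk.injEq, heq_eq_eq] at h
    funext i
    fin_cases i
    · exact h.2.1
    · exact h.2.2
    · exact h.1.2

/-- Equality holds, since `τ₃(n) n ^ ε` is the threefold convolution of `n ↦ n ^ ε`. -/
lemma tauk_mul_rpow_le (ε : ℝ) {n : ℕ} (hn : n ≠ 0) :
    (tauk 3 n : ℝ) * (n : ℝ) ^ ε ≤ ∑ d ∈ n.divisors, weight ε d := by
  have h1 : ∑ d ∈ n.divisors, weight ε d = (powFun ε * powFun ε * powFun ε) n := by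
    rw [← ArithmeticFunction.coe_mul_zeta_apply, weight, ← moebPow_mul_zeta]
    congr 1
    ring
  have h2 : (powFun ε * powFun ε * powFun ε) n =
      ∑ x ∈ n.divisorsAntidiagonal, (x.1.divisorsAntidiagonal.card : ℝ) * (n : ℝ) ^ ε := by
    have key {m : ℕ} (x : ℕ × ℕ) (hx : x ∈ m.divisorsAntidiagonal) :
        (x.1 : ℝ) ^ ε * (x.2 : ℝ) ^ ε = (m : ℝ) ^ ε := by
      rw [← (Nat.mem_divisorsAntidiagonal.1 hx).1, Nat.cast_mul,
        Real.mul_rpow (by positivity) (by positivity)]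
    rw [ArithmeticFunction.mul_apply]
    refine Finset.sum_congr rfl fun x hx => ?_
    have hx2 : x.2 ≠ 0 := by
      have := (Nat.mem_divisorsAntidiagonal.1 hx)
      exact right_ne_zero_of_mul (this.1 ▸ this.2)
    rw [ArithmeticFunction.mul_apply, ← key x hx, powFun_apply ε hx2, ← mul_assoc]
    congr 1
    rw [← nsmul_eq_mul, ← Finset.sum_const]
    refine Finset.sum_congr rfl fun y hy => ?_
    have hy' := Nat.mem_divisorsAntidiagonal.1 hy
    have hy0 := hy'.1 ▸ hy'.2
    rw [powFun_apply ε (left_ne_zero_of_mul hy0), powFun_apply ε (right_ne_zero_of_mul hy0),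
      key y hy]
  rw [h1, h2, ← Finset.sum_mul]
  gcongr
  exact_mod_cast tauk_three_le hn

/-! ### The divisor bound -/

/-- For fixed `δ > 0` and `N`, the `N`-smooth numbers satisfy `∑ d ^ (-δ) < ∞`. -/
lemma exists_sum_smooth_rpow_le {δ : ℝ} (hδ : 0 < δ) (N : ℕ) :
    ∃ K : ℝ, 0 < K ∧ ∀ M : ℕ, ∑ d ∈ smoothUpTo M N, (d : ℝ) ^ (-δ) ≤ K := by
  have hg {p : ℕ} (hp : p.Prime) : Summable fun n : ℕ => powFun (-δ) (p ^ n) := by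
    have hp1 : (1 : ℝ) < p := by exact_mod_cast hp.one_lt
    have h1 (n : ℕ) : powFun (-δ) (p ^ n) = ((p : ℝ) ^ (-δ)) ^ n := by
      rw [powFun_apply _ (pow_ne_zero _ hp.ne_zero), Nat.cast_pow, ← Real.rpow_natCast,
        ← Real.rpow_natCast, ← Real.rpow_mul (by positivity), ← Real.rpow_mul (by positivity),
        mul_comm]
    simp_rw [h1]
    exact summable_geometric_of_lt_one (by positivity)
      (Real.rpow_lt_one_of_one_lt_of_neg hp1 (by linarith))
  have hnn : 0 ≤ ∏ p ∈ Nat.primesBelow N, ∑' n : ℕ, powFun (-δ) (p ^ n) :=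
    Finset.prod_nonneg fun p _ => tsum_nonneg fun n => powFun_nonneg _ _
  refine ⟨_ + 1, by linarith, fun M => ?_⟩
  have := sum_smooth_le_prod (f := powFun (-δ)) (powFun_nonneg _)
    (powFun_isMultiplicative _).map_one (powFun_isMultiplicative _).map_mul_of_coprime hg M N
  refine (le_of_eq (Finset.sum_congr rfl fun d hd => ?_)).trans (this.trans (by linarith))
  have := (mem_smoothUpTo.1 hd).1.1
  rw [powFun_apply _ (by lia)]

lemma exists_smooth_mul_rough (w n : ℕ) (hn : n ≠ 0) :
    ∃ s t : ℕ, n = s * t ∧ s ∈ Nat.smoothNumbers w ∧ ∀ q, q.Prime → q ∣ t → w ≤ q := by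
  induction n using induction_on_primes with
  | zero => exact absurd rfl hn
  | one => exact ⟨1, 1, rfl, by simp [Nat.mem_smoothNumbers],
      fun q hq h => absurd (Nat.dvd_one.1 h) hq.one_lt.ne'⟩
  | prime_mul p a hp ih =>
    obtain ⟨s, t, rfl, hs, ht⟩ := ih (right_ne_zero_of_mul hn)
    by_cases hw : p < w
    · refine ⟨p * s, t, by ring, Nat.mul_mem_smoothNumbers ?_ hs, ht⟩
      exact Nat.mem_smoothNumbers_of_lt hp.pos hw
    · refine ⟨s, p * t, by ring, hs, fun q hq h => ?_⟩
      rcases (hq.dvd_mul).1 h with h | h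
      · rw [(Nat.prime_dvd_prime_iff_eq hq hp).1 h]
        lia
      · exact ht q hq h

/-- The divisor bound `τ₃(n) ≪ n ^ (1/8)`. Primes at least `3 ^ 8` contribute at most
`p ^ (1/8)` each; on the remaining smooth part `s`, expanding
`(∑ d ∣ s, d ^ (-1/8)) ^ 3` over triples with product `s` gives `τ₃(s) s ^ (-1/8) ≪ 1`. -/
lemma exists_tauk_le_rpow :
    ∃ K : ℝ, 0 < K ∧ ∀ n : ℕ, n ≠ 0 → (tauk 3 n : ℝ) ≤ K * (n : ℝ) ^ (1 / 8 : ℝ) := by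
  classical
  obtain ⟨K, hK, hKM⟩ := exists_sum_smooth_rpow_le (δ := 1 / 8) (by norm_num) (3 ^ 8)
  refine ⟨K ^ 3, by positivity, fun n hn => ?_⟩
  obtain ⟨s, t, rfl, hs, ht⟩ := exists_smooth_mul_rough (3 ^ 8) n hn
  have hs0 := left_ne_zero_of_mul hn
  have ht0 := right_ne_zero_of_mul hn
  have hs0' : (0 : ℝ) < s := by exact_mod_cast Nat.pos_of_ne_zero hs0
  obtain ⟨j, h1, h2⟩ := exists_tauk_mul_le s hs0 t ht0 ht
  have h3 : (3 : ℝ) ^ j ≤ (t : ℝ) ^ (1 / 8 : ℝ) := by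
    have h4 : ((3 : ℝ) ^ j) ^ 8 ≤ t := by
      rw [← pow_mul, mul_comm, pow_mul]
      exact_mod_cast h2
    calc (3 : ℝ) ^ j = (((3 : ℝ) ^ j) ^ 8) ^ (1 / 8 : ℝ) := by
          rw [← Real.rpow_natCast _ 8, ← Real.rpow_mul (by positivity)]
          norm_num
      _ ≤ _ := Real.rpow_le_rpow (by positivity) h4 (by norm_num)
  have h5 : (tauk 3 s : ℝ) * (s : ℝ) ^ (-(1 / 8) : ℝ) ≤ K ^ 3 := by
    have h6 : ∑ d ∈ s.divisors, (d : ℝ) ^ (-(1 / 8) : ℝ) ≤ K := by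
      refine le_trans (Finset.sum_le_sum_of_subset_of_nonneg (fun d hd => ?_)
        fun d _ _ => by positivity) (hKM s)
      exact smoothUpTo_dvd (mem_smoothUpTo.2 ⟨⟨Nat.pos_of_ne_zero hs0, le_rfl⟩, hs⟩)
        (Nat.dvd_of_mem_divisors hd)
    calc (tauk 3 s : ℝ) * (s : ℝ) ^ (-(1 / 8) : ℝ)
        = ∑ f ∈ (Fintype.piFinset fun _ : Fin 3 => s.divisors).filter fun f => ∏ i, f i = s,
          ∏ i, ((f i : ℕ) : ℝ) ^ (-(1 / 8) : ℝ) := by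
          rw [tauk, ← nsmul_eq_mul, ← Finset.sum_const]
          refine Finset.sum_congr rfl fun f hf => ?_
          rw [Real.finsetProd_rpow _ _ fun i _ => by positivity]
          rw [← Nat.cast_prod, (mem_tauk_set hs0 f).1 hf]
      _ ≤ ∑ f ∈ Fintype.piFinset fun _ : Fin 3 => s.divisors,
          ∏ i, ((f i : ℕ) : ℝ) ^ (-(1 / 8) : ℝ) :=
          Finset.sum_le_sum_of_subset_of_nonneg (Finset.filter_subset _ _)
            fun f _ _ => by positivity
      _ = (∑ d ∈ s.divisors, (d : ℝ) ^ (-(1 / 8) : ℝ)) ^ 3 := by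
          refine (Finset.prod_univ_sum (fun _ : Fin 3 => s.divisors)
            fun _ d => (d : ℝ) ^ (-(1 / 8) : ℝ)).symm.trans ?_
          simp
      _ ≤ K ^ 3 := by gcongr
  have h7 : (tauk 3 s : ℝ) ≤ K ^ 3 * (s : ℝ) ^ (1 / 8 : ℝ) := by
    rwa [Real.rpow_neg hs0'.le, ← div_eq_mul_inv, div_le_iff₀ (by positivity)] at h5
  calc (tauk 3 (s * t) : ℝ) ≤ (3 : ℝ) ^ j * tauk 3 s := by exact_mod_cast h1
    _ ≤ (t : ℝ) ^ (1 / 8 : ℝ) * (K ^ 3 * (s : ℝ) ^ (1 / 8 : ℝ)) := by gcongr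
    _ = _ := by
      rw [Nat.cast_mul, Real.mul_rpow (by positivity) (by positivity)]; ring

/-! ### Rankin levels and the average of `τ₃` over sets with few multiples -/

/-- The smoothness bound at level `r`: primes `p` with `p ^ max r 1 ≤ Y` lie below it. -/
noncomputable def levelBound (Y : ℝ) (r : ℕ) : ℕ :=
  ⌊Real.exp (Real.log Y / max (r : ℝ) 1)⌋₊ + 1

/-- The Rankin exponent at level `r`, for which `Y ^ levelExp Y r = 162 ^ r`. -/
noncomputable def levelExp (Y : ℝ) (r : ℕ) : ℝ := Real.log 162 * r / Real.log Y

lemma log_162_pos : 0 < Real.log 162 := Real.log_pos (by norm_num)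

/-- The Rankin exponent is inversely proportional to the logarithm of the smoothness bound, so that
the sums of `sum_weight_div_le` are bounded uniformly in the level. -/
lemma levelExp_mul_log_le {Y : ℝ} (hY : 2 ≤ Y) {r : ℕ} (hr : levelExp Y r ≤ 1 / 2) :
    levelExp Y r * Real.log (levelBound Y r) ≤ Real.log 162 + 1 := by
  have hL : 0 < Real.log Y := Real.log_pos (by linarith)
  have hA := log_162_pos
  rcases Nat.eq_zero_or_pos r with rfl | hr0
  · simp [levelExp]; linarith
  have hr1 : (1 : ℝ) ≤ r := by exact_mod_cast hr0
  have h1 : 1 ≤ Real.exp (Real.log Y / r) := Real.one_le_exp (by positivity)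
  have h2 : Real.log (levelBound Y r) ≤ Real.log 2 + Real.log Y / r := by
    have h3 : (levelBound Y r : ℝ) ≤ 2 * Real.exp (Real.log Y / r) := by
      rw [levelBound, max_eq_left hr1]
      push_cast
      linarith [Nat.floor_le (Real.exp_pos (Real.log Y / r)).le]
    have h4 : (0 : ℝ) < levelBound Y r := by
      rw [levelBound]; positivity
    refine (Real.log_le_log h4 h3).trans (le_of_eq ?_)
    rw [Real.log_mul (by norm_num) (Real.exp_pos _).ne', Real.log_exp]
  have h0 : 0 ≤ levelExp Y r := by unfold levelExp; positivity
  have h5 := Real.log_two_lt_d9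
  have h6 : levelExp Y r * (Real.log Y / r) = Real.log 162 := by
    unfold levelExp
    field_simp
  calc _ ≤ levelExp Y r * (Real.log 2 + Real.log Y / r) := by gcongr
    _ = levelExp Y r * Real.log 2 + Real.log 162 := by rw [mul_add, h6]
    _ ≤ _ := by nlinarith

/-- `tauk_mul_rpow_le` for a smooth divisor `d` of `n`, relaxed to a sum over all smooth divisors of
`n`, which can then be averaged over `n`. -/
lemma tauk_mul_rpow_le_of_dvd {ε : ℝ} (h0 : 0 ≤ ε) {M N d n : ℕ} (hd : d ∈ smoothUpTo M N)
    (hdn : d ∣ n) :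
    (tauk 3 d : ℝ) * (d : ℝ) ^ ε ≤
      ∑ e ∈ smoothUpTo M N, if e ∣ n then weight ε e else 0 := by
  have hd0 : d ≠ 0 := by have := (mem_smoothUpTo.1 hd).1.1; lia
  rw [← Finset.sum_filter]
  refine (tauk_mul_rpow_le ε hd0).trans
    (Finset.sum_le_sum_of_subset_of_nonneg (fun e he => ?_) fun e _ _ => weight_nonneg h0 e)
  have he := Nat.dvd_of_mem_divisors he
  exact Finset.mem_filter.2 ⟨smoothUpTo_dvd hd he, he.trans hdn⟩

/-- Write `n = d * e`, with `d` the longest initial product of the ordered prime factors that is at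
most `Y`, and let `p` be the least prime factor of `e`. If `Y ^ (1/(r+1)) < p ≤ Y ^ (1/r)`, then
`τ₃(n) ≤ 3 ^ (4(r+1)) τ₃(d)`, and Rankin's trick applies to `d`, which is larger than `Y ^ (1-1/r)`
although its prime factors are at most `Y ^ (1/r)`. Only a bounded `p` escapes this, and then
`n` has a large divisor composed of bounded primes. -/
lemma tauk_pointwise {Y : ℝ} (hY : 2 ≤ Y) {n : ℕ} (hn : n ≠ 0) (hnY : (n : ℝ) ≤ Y ^ 4) :
    (∃ r : ℕ, levelExp Y r ≤ 1 / 2 ∧ (tauk 3 n : ℝ) ≤ 13122 * (1 / 2) ^ r *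
      ∑ e ∈ smoothUpTo ⌊Y⌋₊ (levelBound Y r), if e ∣ n then weight (levelExp Y r) e else 0) ∨
    ∃ d ∈ smoothUpTo ⌊Y⌋₊ 26244, d ∣ n ∧ Y < 26244 * d := by
  have hY0 : 0 < Y := by linarith
  have hL : 0 < Real.log Y := Real.log_pos (by linarith)
  have hA := log_162_pos
  obtain ⟨d, e, rfl, hdz, hpq, he⟩ :=
    exists_initial_product n hn ⌊Y⌋₊ ((Nat.one_le_floor_iff Y).2 (by linarith))
  have hd0 := left_ne_zero_of_mul hn
  have he0 := right_ne_zero_of_mul hn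
  have hdY : (d : ℝ) ≤ Y := (Nat.le_floor_iff hY0.le).1 hdz
  have hd1 : (1 : ℝ) ≤ d := by exact_mod_cast Nat.pos_of_ne_zero hd0
  by_cases he1 : e = 1
  · subst he1
    left
    refine ⟨0, by simp [levelExp], ?_⟩
    have hsm : d ∈ smoothUpTo ⌊Y⌋₊ (levelBound Y 0) := by
      refine mem_smoothUpTo.2 ⟨⟨Nat.pos_of_ne_zero hd0, hdz⟩,
        Nat.mem_smoothNumbers_of_lt (Nat.pos_of_ne_zero hd0) ?_⟩
      simp [levelBound, Real.exp_log hY0]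
      lia
    have h1 := tauk_mul_rpow_le_of_dvd (ε := levelExp Y 0) (by simp [levelExp]) hsm
      (Dvd.intro 1 rfl : d ∣ d * 1)
    have h2 : (d : ℝ) ^ levelExp Y 0 = 1 := by simp [levelExp]
    rw [h2, mul_one] at h1
    have h3 : (0 : ℝ) ≤ tauk 3 d := by positivity
    rw [mul_one] at h1 ⊢
    rw [pow_zero]
    linarith
  have he := he.resolve_left he1
  set p := e.minFac with hp_def
  have hp : p.Prime := Nat.minFac_prime he1
  have hp0 : (0 : ℝ) < p := by exact_mod_cast hp.pos
  have hlogp : 0 < Real.log p := Real.log_pos (by exact_mod_cast hp.one_lt)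
  have hYdp : Y < d * p := by exact_mod_cast (Nat.floor_lt hY0.le).1 he
  have hprime : ∀ q, q.Prime → q ∣ d → q ≤ p := fun q hq hqd =>
    hpq q p hq hp hqd (Nat.minFac_dvd e)
  by_cases hp_small : p < 26244
  · right
    refine ⟨d, mem_smoothUpTo.2 ⟨⟨Nat.pos_of_ne_zero hd0, hdz⟩, ?_⟩, Dvd.intro e rfl, ?_⟩
    · exact Nat.mem_smoothNumbers'.2 fun q hq hqd => (hprime q hq hqd).trans_lt hp_small
    · have : (p : ℝ) < 26244 := by exact_mod_cast hp_small
      nlinarith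
  left
  -- `26244 = 162 ^ 2`, so that `r ≤ log Y / log p` gives an exponent of at most `1 / 2`
  have hp_big : 2 * Real.log 162 ≤ Real.log p := by
    have h1 : (26244 : ℝ) ≤ p := by exact_mod_cast not_lt.1 hp_small
    calc 2 * Real.log 162 = Real.log (162 ^ 2) := by rw [Real.log_pow]; norm_num
      _ ≤ _ := Real.log_le_log (by norm_num) (by rw [show (162 : ℝ) ^ 2 = 26244 by norm_num]; exact h1)
  set r := ⌊Real.log Y / Real.log p⌋₊ with hr_def
  have hr1 : (r : ℝ) * Real.log p ≤ Real.log Y :=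
    (le_div_iff₀ hlogp).1 (Nat.floor_le (by positivity))
  have hr2 : Real.log Y < (r + 1) * Real.log p :=
    (div_lt_iff₀ hlogp).1 (Nat.lt_floor_add_one _)
  have hε0 : 0 ≤ levelExp Y r := by unfold levelExp; positivity
  refine ⟨r, ?_, ?_⟩
  · rw [levelExp, div_le_iff₀ hL]
    have : (0 : ℝ) ≤ r := by positivity
    nlinarith
  obtain ⟨j, hj1, hj2⟩ := exists_tauk_mul_le d hd0 e he0
    fun q hq hqe => Nat.minFac_le_of_dvd hq.two_le hqe
  have hj : j ≤ 4 * (r + 1) := by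
    have h1 : (p : ℝ) ^ j ≤ Y ^ 4 := by
      have h2 : (p : ℝ) ^ j ≤ e := by exact_mod_cast hj2
      have h3 : (e : ℝ) ≤ d * e := le_mul_of_one_le_left (by positivity) hd1
      rw [Nat.cast_mul] at hnY
      linarith
    have h2 := Real.log_le_log (by positivity) h1
    rw [Real.log_pow, Real.log_pow] at h2
    have h3 : (j : ℝ) * Real.log p < (4 * (r + 1)) * Real.log p := by
      push_cast at h2
      linarith
    have h4 := lt_of_mul_lt_mul_right h3 hlogp.le
    exact_mod_cast h4.le
  have hsm : d ∈ smoothUpTo ⌊Y⌋₊ (levelBound Y r) := by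
    refine mem_smoothUpTo.2 ⟨⟨Nat.pos_of_ne_zero hd0, hdz⟩,
      Nat.mem_smoothNumbers'.2 fun q hq hqd => Nat.lt_succ_of_le (Nat.le_floor ?_)⟩
    have hq0 : (0 : ℝ) < q := by exact_mod_cast hq.pos
    rw [← Real.log_le_iff_le_exp hq0, le_div_iff₀ (by positivity)]
    have hqp : Real.log q ≤ Real.log p := Real.log_le_log hq0 (by exact_mod_cast hprime q hq hqd)
    have hqY : Real.log q ≤ Real.log Y := Real.log_le_log hq0 (le_trans (by
      exact_mod_cast Nat.le_of_dvd (Nat.pos_of_ne_zero hd0) hqd) hdY)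
    rcases le_total (r : ℝ) 1 with h | h
    · rw [max_eq_right h]; linarith
    · rw [max_eq_left h]; nlinarith
  have hrankin : (162 : ℝ) ^ r ≤ 162 * (d : ℝ) ^ levelExp Y r := by
    have h1 : (r : ℝ) * Real.log Y - Real.log Y ≤ r * Real.log d := by
      have h2 : Real.log Y ≤ Real.log d + Real.log p := by
        rw [← Real.log_mul (by positivity) (by positivity)]
        exact Real.log_le_log hY0 hYdp.le
      have : (0 : ℝ) ≤ r := by positivity
      nlinarith
    have hd0' : (0 : ℝ) < d := by linarith
    rw [← Real.log_le_log_iff (by positivity) (by positivity), Real.log_pow,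
      Real.log_mul (by norm_num) (by positivity), Real.log_rpow hd0', levelExp]
    have h3 : Real.log 162 * (r - 1) ≤ Real.log 162 * r / Real.log Y * Real.log d := by
      rw [div_mul_eq_mul_div, le_div_iff₀ hL]
      nlinarith
    linarith
  have hmain := tauk_mul_rpow_le_of_dvd hε0 hsm (Dvd.intro e rfl : d ∣ d * e)
  have h81 : (3 : ℝ) ^ j ≤ 81 * 81 ^ r := by
    calc (3 : ℝ) ^ j ≤ 3 ^ (4 * (r + 1)) := pow_le_pow_right₀ (by norm_num) hj
      _ = 81 * 81 ^ r := by rw [pow_mul, pow_succ]; norm_num; ring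
  calc (tauk 3 (d * e) : ℝ) ≤ 3 ^ j * tauk 3 d := by exact_mod_cast hj1
    _ ≤ 81 * 81 ^ r * tauk 3 d := by gcongr
    _ = 81 * (1 / 2) ^ r * (162 ^ r) * tauk 3 d := by
      rw [show (81 : ℝ) ^ r = (1 / 2) ^ r * 162 ^ r by rw [← mul_pow]; norm_num]
      ring
    _ ≤ 81 * (1 / 2) ^ r * (162 * (d : ℝ) ^ levelExp Y r) * tauk 3 d := by gcongr
    _ = 13122 * (1 / 2) ^ r * (tauk 3 d * (d : ℝ) ^ levelExp Y r) := by ring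
    _ ≤ _ := by gcongr

lemma sum_sum_dvd_le {Y : ℝ} (hY0 : 0 ≤ Y) {S : Finset ℕ}
    (hS : ∀ d : ℕ, 1 ≤ d → (d : ℝ) ≤ Y → ((S.filter (d ∣ ·)).card : ℝ) ≤ 2 * Y / d)
    {g : ℕ → ℝ} (hg : ∀ d, 0 ≤ g d) (N : ℕ) :
    ∑ n ∈ S, ∑ d ∈ smoothUpTo ⌊Y⌋₊ N, (if d ∣ n then g d else 0) ≤
      2 * Y * ∑ d ∈ smoothUpTo ⌊Y⌋₊ N, g d / d := by
  rw [Finset.sum_comm, Finset.mul_sum]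
  refine Finset.sum_le_sum fun d hd => ?_
  have hd := (mem_smoothUpTo.1 hd).1
  rw [← Finset.sum_filter, Finset.sum_const, nsmul_eq_mul]
  calc _ ≤ 2 * Y / d * g d := by
        gcongr
        · exact hg d
        · exact hS d hd.1 ((Nat.le_floor_iff hY0).1 hd.2)
    _ = _ := by ring

/-- On a set of integers up to `Y ^ 4` that contains at most `2 * Y / d` multiples of each `d ≤ Y`,
the sum of `τ₃` has the order of magnitude it has on an interval of length `Y`. The level sums
`F r` come from the first case of `tauk_pointwise`, with a factor `(1/2) ^ r` that makes them
summable over `r`; the sum `B` comes from the second case, where the divisor bound costs `Y ^ (1/2)`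
and the scarcity of large divisors with bounded primes regains it. -/
lemma exists_sum_tauk_le :
    ∃ C : ℝ, 0 < C ∧ ∀ (Y : ℝ) (S : Finset ℕ), 2 ≤ Y → (∀ n ∈ S, n ≠ 0 ∧ (n : ℝ) ≤ Y ^ 4) →
      (∀ d : ℕ, 1 ≤ d → (d : ℝ) ≤ Y → ((S.filter (d ∣ ·)).card : ℝ) ≤ 2 * Y / d) →
      ∑ n ∈ S, (tauk 3 n : ℝ) ≤ C * Y * Real.log Y ^ 2 := by
  obtain ⟨K₁, hK₁, htau⟩ := exists_tauk_le_rpow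
  obtain ⟨K₂, hK₂, hsmooth⟩ := exists_sum_smooth_rpow_le (δ := 1 / 2) (by norm_num) 26244
  set A := Real.log 162 + 1 with hA_def
  set H := Real.exp (8 * A * Real.exp A) ^ 3 with hH_def
  have hH : 0 < H := by positivity
  refine ⟨13122 * 2 * (2 * (H * 9)) + K₁ * (2 * 162 * K₂) * 4, by positivity, ?_⟩
  intro Y S hY hSn hS
  have hY0 : 0 < Y := by linarith
  have hL2 : 1 / 2 < Real.log Y := by
    have := Real.log_two_gt_d9
    have := Real.log_le_log (by norm_num) hY
    linarith
  have hA := log_162_pos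
  have hexp0 (r : ℕ) : 0 ≤ levelExp Y r := by unfold levelExp; positivity
  -- `levelExp Y r ≤ 1 / 2` forces `r ≤ log Y`, so finitely many levels occur
  set R := Finset.range (⌊Real.log Y⌋₊ + 1) with hR_def
  have hmemR {r : ℕ} (hr : levelExp Y r ≤ 1 / 2) : r ∈ R := by
    rw [hR_def, Finset.mem_range, Nat.lt_succ_iff]
    refine Nat.le_floor ?_
    rw [levelExp, div_le_iff₀ (by linarith)] at hr
    have h1 : 1 ≤ Real.log 162 := by
      have h2 := Real.log_two_gt_d9
      have h3 : Real.log (2 ^ 2) ≤ Real.log 162 := Real.log_le_log (by norm_num) (by norm_num)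
      rw [Real.log_pow] at h3
      push_cast at h3
      linarith
    have : (0 : ℝ) ≤ r := by positivity
    nlinarith
  let F : ℕ → ℕ → ℝ := fun r n => 13122 * (1 / 2) ^ r *
    ∑ e ∈ smoothUpTo ⌊Y⌋₊ (levelBound Y r), if e ∣ n then weight (levelExp Y r) e else 0
  have hF0 (r n : ℕ) : 0 ≤ F r n := by
    refine mul_nonneg (by positivity) (Finset.sum_nonneg fun e _ => ?_)
    split_ifs
    · exact weight_nonneg (hexp0 r) e
    · exact le_rfl
  let g : ℕ → ℝ := fun d => if Y < 26244 * d then 1 else 0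
  have hg0 (d : ℕ) : 0 ≤ g d := by simp only [g]; split_ifs <;> norm_num
  let B : ℕ → ℝ := fun n => ∑ d ∈ smoothUpTo ⌊Y⌋₊ 26244, if d ∣ n then g d else 0
  have hB0 (d n : ℕ) : 0 ≤ if d ∣ n then g d else 0 := by
    split_ifs
    · exact hg0 d
    · exact le_rfl
  have hpoint : ∀ n ∈ S, (tauk 3 n : ℝ) ≤
      ∑ r ∈ R.filter (levelExp Y · ≤ 1 / 2), F r n + K₁ * Y ^ (1 / 2 : ℝ) * B n := by
    intro n hn
    obtain ⟨hn0, hnY⟩ := hSn n hn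
    have hB : 0 ≤ B n := Finset.sum_nonneg fun d _ => hB0 d n
    rcases tauk_pointwise hY hn0 hnY with ⟨r, hr, h⟩ | ⟨d, hd, hdn, hdY⟩
    · have h1 : F r n ≤ ∑ r ∈ R.filter (levelExp Y · ≤ 1 / 2), F r n :=
        Finset.single_le_sum (f := fun r => F r n) (fun r _ => hF0 r n)
          (Finset.mem_filter.2 ⟨hmemR hr, hr⟩)
      have h2 : 0 ≤ K₁ * Y ^ (1 / 2 : ℝ) * B n := by positivity
      exact h.trans (h1.trans (by linarith))
    · have h1 : 1 ≤ B n := by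
        have := Finset.single_le_sum (f := fun d => if d ∣ n then g d else 0)
          (fun d _ => hB0 d n) hd
        simpa [hdn, g, hdY] using this
      have h2 : 0 ≤ ∑ r ∈ R.filter (levelExp Y · ≤ 1 / 2), F r n :=
        Finset.sum_nonneg fun r _ => hF0 r n
      have h3 : (n : ℝ) ^ (1 / 8 : ℝ) ≤ Y ^ (1 / 2 : ℝ) := by
        calc (n : ℝ) ^ (1 / 8 : ℝ) ≤ (Y ^ 4) ^ (1 / 8 : ℝ) :=
              Real.rpow_le_rpow (by positivity) hnY (by norm_num)
          _ = Y ^ (1 / 2 : ℝ) := by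
              rw [← Real.rpow_natCast, ← Real.rpow_mul hY0.le]; norm_num
      have h4 : 0 ≤ K₁ * Y ^ (1 / 2 : ℝ) := by positivity
      have h5 : K₁ * (n : ℝ) ^ (1 / 8 : ℝ) ≤ K₁ * Y ^ (1 / 2 : ℝ) := by gcongr
      have := htau n hn0
      nlinarith
  have hlevel : ∀ r ∈ R.filter (levelExp Y · ≤ 1 / 2), ∑ n ∈ S, F r n ≤
      13122 * (1 / 2) ^ r * (2 * Y * (H * (9 * Real.log Y ^ 2))) := by
    intro r hr
    have hr := (Finset.mem_filter.1 hr).2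
    rw [← Finset.mul_sum]
    have h1 := sum_sum_dvd_le hY0.le hS (weight_nonneg (hexp0 r)) (levelBound Y r)
    have h2 := sum_weight_div_le (hexp0 r) hr ⌊Y⌋₊ (levelBound Y r) (levelExp_mul_log_le hY hr)
    have h3 : (1 + Real.log (⌊Y⌋₊ : ℝ)) ^ 2 ≤ 9 * Real.log Y ^ 2 := by
      have h4 : 0 ≤ Real.log (⌊Y⌋₊ : ℝ) := Real.log_natCast_nonneg _
      have h5 : Real.log (⌊Y⌋₊ : ℝ) ≤ Real.log Y := Real.log_le_log
        (by exact_mod_cast Nat.floor_pos.2 (by linarith)) (Nat.floor_le hY0.le)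
      calc _ ≤ (3 * Real.log Y) ^ 2 := by gcongr; linarith
        _ = _ := by ring
    have h6 := h2.trans (mul_le_mul_of_nonneg_left h3 hH.le)
    have h7 := h1.trans (mul_le_mul_of_nonneg_left h6 (by positivity))
    exact mul_le_mul_of_nonneg_left h7 (by positivity)
  have hbad : ∑ n ∈ S, B n ≤ 2 * Y * (162 / Y ^ (1 / 2 : ℝ) * K₂) := by
    refine (sum_sum_dvd_le hY0.le hS hg0 26244).trans (mul_le_mul_of_nonneg_left ?_ (by positivity))
    refine le_trans ?_ (mul_le_mul_of_nonneg_left (hsmooth ⌊Y⌋₊) (by positivity))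
    rw [Finset.mul_sum]
    refine Finset.sum_le_sum fun d hd => ?_
    have hd1 := (mem_smoothUpTo.1 hd).1.1
    have hd0 : (0 : ℝ) < d := by exact_mod_cast hd1
    simp only [g]
    split_ifs with h
    · rw [← Real.sqrt_eq_rpow, Real.rpow_neg hd0.le, ← Real.sqrt_eq_rpow, div_mul_eq_mul_div,
        ← div_eq_mul_inv, div_div, div_le_div_iff₀ hd0 (by positivity), one_mul]
      have h1 : Real.sqrt Y ≤ 162 * Real.sqrt d := by
        rw [Real.sqrt_le_left (by positivity), mul_pow, Real.sq_sqrt hd0.le]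
        linarith
      have h2 := Real.mul_self_sqrt hd0.le
      have h3 := Real.sqrt_nonneg (d : ℝ)
      nlinarith
    · rw [zero_div]; positivity
  have hgeom : ∑ r ∈ R.filter (levelExp Y · ≤ 1 / 2), (1 / 2 : ℝ) ^ r ≤ 2 :=
    (summable_geometric_two.sum_le_tsum _ fun r _ => by positivity).trans_eq tsum_geometric_two
  have hYY : 0 < Y ^ (1 / 2 : ℝ) := by positivity
  calc ∑ n ∈ S, (tauk 3 n : ℝ)
      ≤ ∑ n ∈ S, (∑ r ∈ R.filter (levelExp Y · ≤ 1 / 2), F r n + K₁ * Y ^ (1 / 2 : ℝ) * B n) :=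
        Finset.sum_le_sum hpoint
    _ = ∑ r ∈ R.filter (levelExp Y · ≤ 1 / 2), ∑ n ∈ S, F r n +
          K₁ * Y ^ (1 / 2 : ℝ) * ∑ n ∈ S, B n := by
        rw [Finset.sum_add_distrib, Finset.sum_comm, Finset.mul_sum]
    _ ≤ ∑ r ∈ R.filter (levelExp Y · ≤ 1 / 2),
          13122 * (1 / 2) ^ r * (2 * Y * (H * (9 * Real.log Y ^ 2))) +
          K₁ * Y ^ (1 / 2 : ℝ) * (2 * Y * (162 / Y ^ (1 / 2 : ℝ) * K₂)) := by
        gcongr with r hr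
        exact hlevel r hr
    _ = 13122 * (∑ r ∈ R.filter (levelExp Y · ≤ 1 / 2), (1 / 2 : ℝ) ^ r) *
          (2 * Y * (H * (9 * Real.log Y ^ 2))) + K₁ * (2 * 162 * K₂) * Y := by
        rw [← Finset.sum_mul, ← Finset.mul_sum]
        congr 1
        field_simp
    _ ≤ 13122 * 2 * (2 * Y * (H * (9 * Real.log Y ^ 2))) +
          K₁ * (2 * 162 * K₂) * (Y * (4 * Real.log Y ^ 2)) := by
        have h1 : 1 ≤ 4 * Real.log Y ^ 2 := by nlinarith
        gcongr
        exact le_mul_of_one_le_right hY0.le h1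
    _ = _ := by ring

/-! ### Arithmetic progressions and the two sums -/

/-- A multiple `n` of `d` with `n ≡ 1 mod q` forces `d` to be coprime to `q`, so the multiples of `d`
in question form a single residue class modulo `d * q`. -/
lemma card_filter_dvd_le {Y : ℝ} (hY0 : 0 ≤ Y) {q d : ℕ} (hq : 1 ≤ q) (hd : 1 ≤ d)
    (hdY : (d : ℝ) ≤ Y) :
    ((((Finset.Icc 1 ⌊(q : ℝ) * Y + 1⌋₊).filter fun n => n % q = 1 % q).filter (d ∣ ·)).card : ℝ)
      ≤ 2 * Y / d := by
  have hd0 : (0 : ℝ) < d := by exact_mod_cast hd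
  have hstep {n : ℕ} (h1 : 1 ≤ n) (h : n % q = 1 % q) : n = q * ((n - 1) / q) + 1 := by
    have h2 : q ∣ n - 1 := (Nat.modEq_iff_dvd' h1).1 (show 1 ≡ n [MOD q] from h.symm)
    rw [Nat.mul_div_cancel' h2]
    lia
  have hcard : (((Finset.Icc 1 ⌊(q : ℝ) * Y + 1⌋₊).filter fun n => n % q = 1 % q).filter
      (d ∣ ·)).card ≤ (Finset.range (⌊Y⌋₊ / d + 1)).card := by
    refine Finset.card_le_card_of_injOn (fun n => (n - 1) / q / d) ?_ ?_
    · intro n hn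
      simp only [Finset.coe_filter, Set.mem_ofPred_eq, Finset.mem_filter, Finset.mem_Icc] at hn
      obtain ⟨⟨⟨h1, h2⟩, h3⟩, h4⟩ := hn
      rw [Finset.mem_coe, Finset.mem_range, Nat.lt_succ_iff]
      refine Nat.div_le_div_right (Nat.le_floor ?_)
      have h5 := (Nat.le_floor_iff (by positivity)).1 h2
      have h6 : (n : ℝ) = q * ((n - 1) / q : ℕ) + 1 := by exact_mod_cast hstep h1 h3
      have hq0 : (0 : ℝ) < q := by exact_mod_cast hq
      rw [h6] at h5
      exact le_of_mul_le_mul_left (by linarith) hq0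
    · intro n hn m hm hnm
      simp only [Finset.coe_filter, Set.mem_ofPred_eq, Finset.mem_filter, Finset.mem_Icc] at hn hm
      obtain ⟨⟨⟨h1, -⟩, h3⟩, h4⟩ := hn
      obtain ⟨⟨⟨h1', -⟩, h3'⟩, h4'⟩ := hm
      have e1 := hstep h1 h3
      have e2 := hstep h1' h3'
      set a := (n - 1) / q
      set b := (m - 1) / q
      simp only at hnm
      have hcop : Nat.Coprime d q := by
        refine Nat.dvd_one.1 ?_
        have h5 : Nat.gcd d q ∣ q * a + 1 := e1 ▸ (Nat.gcd_dvd_left d q).trans h4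
        exact (Nat.dvd_add_right ((Nat.gcd_dvd_right d q).mul_right a)).1 h5
      have hmod : q * a ≡ q * b [MOD d] := by
        refine Nat.ModEq.add_right_cancel' 1 ?_
        rw [← e1, ← e2]
        exact ((Nat.modEq_zero_iff_dvd).2 h4).trans ((Nat.modEq_zero_iff_dvd).2 h4').symm
      have hab : a ≡ b [MOD d] := Nat.ModEq.cancel_left_of_coprime hcop hmod
      have : a = b := by
        rw [← Nat.div_add_mod a d, ← Nat.div_add_mod b d, hnm, hab]
      rw [e1, e2, this]
  rw [Finset.card_range] at hcard
  calc _ ≤ ((⌊Y⌋₊ / d + 1 : ℕ) : ℝ) := by exact_mod_cast hcard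
    _ ≤ Y / d + 1 := by
      push_cast
      gcongr
      exact Nat.cast_div_le.trans (by gcongr; exact Nat.floor_le hY0)
    _ ≤ Y / d + Y / d := by
      gcongr
      exact (one_le_div hd0).2 hdY
    _ = _ := by ring

/-- The range of `ℓ₃` is contained in that of `ℓ₂`, because `X ^ (1/3) ≤ X ^ (2/3) / ℓ₁`. -/
lemma Sigma31_le_Sigma21 {X : ℝ} (hX : 0 ≤ X) : Sigma31 X ≤ Sigma21 X := by
  unfold Sigma31 Sigma21
  refine Finset.sum_le_sum fun l1 hl1 => ?_
  have hl1 := Finset.mem_Icc.1 hl1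
  have hl1' : (0 : ℝ) < l1 := by exact_mod_cast hl1.1
  refine Finset.sum_le_sum_of_subset_of_nonneg
    (Finset.Icc_subset_Icc_right (Nat.floor_le_floor ?_))
    fun _ _ _ => Finset.sum_nonneg fun _ _ => by positivity
  have h1 : (l1 : ℝ) ≤ X ^ ((1 : ℝ) / 3) := (Nat.le_floor_iff (by positivity)).1 hl1.2
  have h2 : X ^ ((2 : ℝ) / 3) = X ^ ((1 : ℝ) / 3) * X ^ ((1 : ℝ) / 3) := by
    rw [← Real.rpow_add_of_nonneg hX (by norm_num) (by norm_num)]; norm_num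
  rw [h2, le_div_iff₀ hl1']
  gcongr

theorem Sigma21_Sigma31_bounds :
    ∃ C : ℝ, 0 < C ∧ ∀ X : ℝ, 16 ≤ X →
      Sigma21 X ≤ C * X * (Real.log X) ^ 3 * Real.log (Real.log X) ∧
      Sigma31 X ≤ C * X * (Real.log X) ^ 3 * Real.log (Real.log X) := by
  obtain ⟨C, hC, hmain⟩ := exists_sum_tauk_le
  refine ⟨C, hC, fun X hX => ?_⟩
  suffices h : Sigma21 X ≤ C * X * (Real.log X) ^ 3 * Real.log (Real.log X) from
    ⟨h, (Sigma31_le_Sigma21 (by linarith)).trans h⟩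
  have hX0 : 0 < X := by linarith
  set Y := X ^ ((1 : ℝ) / 3) with hY_def
  have hY3 : Y ^ 3 = X := by
    rw [hY_def, ← Real.rpow_natCast, ← Real.rpow_mul hX0.le]; norm_num
  have hY0 : 0 < Y := by positivity
  have hY : 2 ≤ Y := by
    by_contra! h
    have : Y ^ 3 < 2 ^ 3 := pow_lt_pow_left₀ h hY0.le (by norm_num)
    linarith
  have hY2 : X ^ ((2 : ℝ) / 3) = Y ^ 2 := by
    rw [hY_def, ← Real.rpow_natCast, ← Real.rpow_mul hX0.le]; norm_num
  have hlog : Real.log X = 3 * Real.log Y := by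
    rw [← hY3, Real.log_pow]; norm_num
  have hL2 : 1 / 2 < Real.log Y := by
    have := Real.log_two_gt_d9
    have := Real.log_le_log (by norm_num) hY
    linarith
  have hloglog : 1 ≤ Real.log (Real.log X) := by
    rw [Real.le_log_iff_exp_le (by linarith)]
    have h1 : Real.log (2 ^ 4) ≤ Real.log X := Real.log_le_log (by norm_num) (by linarith)
    rw [Real.log_pow] at h1
    push_cast at h1
    have := Real.log_two_gt_d9
    have := Real.exp_one_lt_d9
    linarith
  have hfl : Real.log (⌊Y⌋₊ : ℝ) ≤ Real.log Y := Real.log_le_log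
    (by exact_mod_cast Nat.floor_pos.2 (by linarith)) (Nat.floor_le hY0.le)
  have hharm : ∑ l ∈ Finset.Icc 1 ⌊Y⌋₊, (l : ℝ)⁻¹ ≤ 1 + Real.log ⌊Y⌋₊ := by
    have := harmonic_le_one_add_log ⌊Y⌋₊
    rw [harmonic_eq_sum_Icc] at this
    push_cast at this
    exact this
  calc Sigma21 X ≤ ∑ l1 ∈ Finset.Icc 1 ⌊Y⌋₊, Y ^ 2 * (C * Y * Real.log Y ^ 2) * (l1 : ℝ)⁻¹ := by
        unfold Sigma21
        rw [hY2]
        refine Finset.sum_le_sum fun l1 hl1 => ?_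
        have hl1 := Finset.mem_Icc.1 hl1
        have hl1' : (0 : ℝ) < l1 := by exact_mod_cast hl1.1
        calc _ ≤ ∑ l2 ∈ Finset.Icc 1 ⌊Y ^ 2 / (l1 : ℝ)⌋₊, C * Y * Real.log Y ^ 2 := by
              refine Finset.sum_le_sum fun l2 hl2 => ?_
              have hl2 := Finset.mem_Icc.1 hl2
              have hq : ((l1 * l2 : ℕ) : ℝ) ≤ Y ^ 2 := by
                have := (Nat.le_floor_iff (by positivity)).1 hl2.2
                rw [le_div_iff₀ hl1'] at this
                push_cast
                linarith
              have hq1 : 1 ≤ l1 * l2 := Nat.mul_pos hl1.1 hl2.1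
              refine hmain Y _ hY (fun n hn => ?_) fun d hd hdY =>
                card_filter_dvd_le hY0.le hq1 hd hdY
              have hn := Finset.mem_Icc.1 (Finset.mem_filter.1 hn).1
              refine ⟨by lia, ((Nat.le_floor_iff (by positivity)).1 hn.2).trans ?_⟩
              have h1 : 8 ≤ Y ^ 3 := by linarith
              calc ((l1 * l2 : ℕ) : ℝ) * Y + 1 ≤ Y ^ 2 * Y + 1 := by gcongr
                _ ≤ Y ^ 4 := by nlinarith
          _ = (⌊Y ^ 2 / (l1 : ℝ)⌋₊ : ℝ) * (C * Y * Real.log Y ^ 2) := by simp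
          _ ≤ Y ^ 2 / l1 * (C * Y * Real.log Y ^ 2) := by
              gcongr
              exact Nat.floor_le (by positivity)
          _ = _ := by ring
    _ = Y ^ 2 * (C * Y * Real.log Y ^ 2) * ∑ l1 ∈ Finset.Icc 1 ⌊Y⌋₊, (l1 : ℝ)⁻¹ := by
        rw [Finset.mul_sum]
    _ ≤ Y ^ 2 * (C * Y * Real.log Y ^ 2) * (27 * Real.log Y) := by
        gcongr
        linarith
    _ = C * X * Real.log X ^ 3 * 1 := by rw [hlog, ← hY3]; ring
    _ ≤ _ := by
        have : 0 ≤ C * X * Real.log X ^ 3 := by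
          rw [hlog]; positivity
        gcongr
end
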